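/- arXiv:1603.03942 — 3 statements merged into one kernel-verified Lean document; each statement's English description precedes it below -/
import Mathlib

section
/- Let Q be a bipartite recurrent quiver on a finite vertex set V. Then Q has a strictly subadditive labeling if and only if G(Q) is an admissible ADE bigraph. -/
/-! The two directions use different ideas.

*From a labeling to ADE type.* Each of `A` and `B` can be treated separately. For a symmetric
matrix `A` of multiplicities, the inequalities at `u` and `v` force `A u v ≤ 1`, and the labeling
restricts to every connected component of the graph of `A`. It remains to classify finite connected
graphs with a strictly subadditive labeling (`isADE_of_ssLabels`). Such a graph has no cycle, since
the smallest label on a cycle would violate the inequality, so it is a tree and has a leaf. Removing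
the leaf leaves, by induction, a diagram of type A, D or E. One then inspects every way of attaching
a leaf to such a diagram (`addLeaf_A`, `addLeaf_D`, `addLeaf_E`): either the result is again of type
ADE, or it contains an affine diagram, whose imaginary root `δ` contradicts the labeling by pairing
(`not_ssLabels_of_delta`; the infinite family of affine type D is excluded by concavity in
`no_addLeaf_D`).

*From ADE type to a labeling.* The coefficients of the sum of the positive roots give, for `A` and
for `B`, positive vectors `α` and `β` with `(2 - A) α > 0` and `(2 - B) β > 0`. By the maximum
principle, `2 - A` and `2 - B` are then invertible with inverses preserving positivity. The vector
`ν = (2 - A)⁻¹ (2 - B)⁻¹ 1` is a labeling for both at once, because `A` and `B` commute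
(`exists_common_labeling`).
-/

open scoped BigOperators

/-- A bipartite quiver on a finite vertex set `V`, encoded by a bipartition `eps`
and the two symmetric edge-multiplicity matrices `A` (arrows from `eps = 0` to `eps = 1`)
and `B` (arrows from `eps = 1` to `eps = 0`). -/
def BipartiteData {V : Type} [Fintype V] (eps : V → ℤ) (A B : V → V → ℕ) : Prop :=
  (∀ v, eps v = 0 ∨ eps v = 1) ∧
  (∀ u v, A u v = A v u) ∧
  (∀ u v, B u v = B v u) ∧
  (∀ v, A v v = 0) ∧
  (∀ v, B v v = 0) ∧
  (∀ u v, eps u = eps v → A u v = 0 ∧ B u v = 0) ∧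
  (∀ u v, A u v * B u v = 0)

/-- A bipartite quiver is recurrent iff the matrices `A` and `B` commute. -/
def RecurrentQuiver {V : Type} [Fintype V] (A B : V → V → ℕ) : Prop :=
  ∀ u v, (∑ w, A u w * B w v) = ∑ w, B u w * A w v

/-- A strictly subadditive labeling: `ν : V → ℝ` positive with
`2ν v > Σ_u A v u * ν u` and `2ν v > Σ_u B v u * ν u` for all `v`. -/
def IsStrictlySubadditiveLabeling {V : Type} [Fintype V] (A B : V → V → ℕ)
    (nu : V → ℝ) : Prop :=
  (∀ v, 0 < nu v) ∧
  (∀ v, (∑ u, (A v u : ℝ) * nu u) < 2 * nu v) ∧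
  (∀ v, (∑ u, (B v u : ℝ) * nu u) < 2 * nu v)

/-- The Dynkin diagram `A_n`: vertices `0, …, n-1` with edges `{i, i+1}`. -/
def adeA (n : ℕ) : SimpleGraph (Fin n) :=
  SimpleGraph.fromRel (fun i j => (i : ℕ) + 1 = (j : ℕ))

/-- The Dynkin diagram `D_n` (`n ≥ 4`): a path on vertices `0, …, n-2`
together with the edge `{n-3, n-1}`. -/
def adeD (n : ℕ) : SimpleGraph (Fin n) :=
  SimpleGraph.fromRel (fun i j =>
    ((i : ℕ) + 1 = (j : ℕ) ∧ (j : ℕ) ≤ n - 2) ∨ ((i : ℕ) = n - 3 ∧ (j : ℕ) = n - 1))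

/-- The Dynkin diagram `E_n` (`n = 6, 7, 8`): a path on vertices `0, …, n-2`
together with the edge `{2, n-1}`. -/
def adeE (n : ℕ) : SimpleGraph (Fin n) :=
  SimpleGraph.fromRel (fun i j =>
    ((i : ℕ) + 1 = (j : ℕ) ∧ (j : ℕ) ≤ n - 2) ∨ ((i : ℕ) = 2 ∧ (j : ℕ) = n - 1))

/-- A graph is an ADE Dynkin diagram if it is isomorphic to some `A_n` (`n ≥ 1`),
`D_n` (`n ≥ 4`), or `E_n` (`n = 6, 7, 8`). -/
def IsADE {W : Type*} (G : SimpleGraph W) : Prop :=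
  (∃ n : ℕ, 1 ≤ n ∧ Nonempty (G ≃g adeA n)) ∨
  (∃ n : ℕ, 4 ≤ n ∧ Nonempty (G ≃g adeD n)) ∨
  (∃ n : ℕ, (n = 6 ∨ n = 7 ∨ n = 8) ∧ Nonempty (G ≃g adeE n))

/-- The simple graph on `V` whose edges are the pairs `{u, v}` with `A u v = 1`. -/
def graphOf {V : Type} (A : V → V → ℕ) : SimpleGraph V :=
  SimpleGraph.fromRel (fun u v => A u v = 1)

/-- `G(Q)` is an admissible ADE bigraph: `A` and `B` take values in `{0, 1}` and every
connected component of `Γ` and of `Δ` is an ADE Dynkin diagram. -/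
def AdmissibleADE {V : Type} [Fintype V] (A B : V → V → ℕ) : Prop :=
  (∀ u v, A u v ≤ 1) ∧ (∀ u v, B u v ≤ 1) ∧
  (∀ c : (graphOf A).ConnectedComponent, IsADE ((graphOf A).induce c.supp)) ∧
  (∀ c : (graphOf B).ConnectedComponent, IsADE ((graphOf B).induce c.supp))

/-! ### Strictly subadditive labelings of simple graphs -/

/-- A positive real labeling of a simple graph in which every label exceeds half the sum of the
labels of the neighbors. Quantifying over all finite sets `s` of neighbors avoids any finiteness
or decidability assumption on the graph. -/
def SSLabels {W : Type*} (G : SimpleGraph W) (nu : W → ℝ) : Prop :=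
  (∀ v, 0 < nu v) ∧
    ∀ v, ∀ s : Finset W, (∀ u ∈ s, G.Adj v u) → ∑ u ∈ s, nu u < 2 * nu v

/-- The graph obtained from `H` by adding a new vertex `none`, joined to `i` only. -/
def addLeaf {W : Type*} (H : SimpleGraph W) (i : W) : SimpleGraph (Option W) where
  Adj
    | some a, some b => H.Adj a b
    | some a, none => a = i
    | none, some b => b = i
    | none, none => False
  symm := ⟨by
    rintro (_ | a) (_ | b) h
    · exact h
    · exact h
    · exact h
    · exact SimpleGraph.Adj.symm (G := H) h⟩
  loopless := ⟨by
    rintro (_ | a) h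
    · exact h
    · exact H.irrefl h⟩

section addLeaf
variable {W : Type*} (H : SimpleGraph W) (i : W)

@[simp] lemma addLeaf_some_some (a b : W) : (addLeaf H i).Adj (some a) (some b) ↔ H.Adj a b :=
  Iff.rfl
@[simp] lemma addLeaf_some_none (a : W) : (addLeaf H i).Adj (some a) none ↔ a = i := Iff.rfl
@[simp] lemma addLeaf_none_some (a : W) : (addLeaf H i).Adj none (some a) ↔ a = i := Iff.rfl
@[simp] lemma addLeaf_none_none : ¬ (addLeaf H i).Adj none none := id

instance [DecidableEq W] [DecidableRel H.Adj] : DecidableRel (addLeaf H i).Adj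
  | some a, some b => inferInstanceAs (Decidable (H.Adj a b))
  | some a, none => inferInstanceAs (Decidable (a = i))
  | none, some b => inferInstanceAs (Decidable (b = i))
  | none, none => inferInstanceAs (Decidable False)

end addLeaf

instance (n : ℕ) : DecidableRel (adeA n).Adj := by unfold adeA; infer_instance
instance (n : ℕ) : DecidableRel (adeD n).Adj := by unfold adeD; infer_instance
instance (n : ℕ) : DecidableRel (adeE n).Adj := by unfold adeE; infer_instance

lemma adeA_adj {n : ℕ} (a b : Fin n) :
    (adeA n).Adj a b ↔ (a : ℕ) + 1 = b ∨ (b : ℕ) + 1 = a := by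
  simp only [adeA, SimpleGraph.fromRel_adj, ne_eq, Fin.ext_iff]; omega

lemma adeD_adj {n : ℕ} (a b : Fin n) :
    (adeD n).Adj a b ↔ (a : ℕ) ≠ b ∧
      ((((a : ℕ) + 1 = b ∧ (b : ℕ) ≤ n - 2) ∨ ((a : ℕ) = n - 3 ∧ (b : ℕ) = n - 1)) ∨
       (((b : ℕ) + 1 = a ∧ (a : ℕ) ≤ n - 2) ∨ ((b : ℕ) = n - 3 ∧ (a : ℕ) = n - 1))) := by
  simp only [adeD, SimpleGraph.fromRel_adj, ne_eq, Fin.ext_iff]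

lemma IsADE.of_iso {W W' : Type*} {G : SimpleGraph W} {G' : SimpleGraph W'}
    (h : IsADE G') (e : G ≃g G') : IsADE G := by
  rcases h with ⟨n, hn, ⟨f⟩⟩ | ⟨n, hn, ⟨f⟩⟩ | ⟨n, hn, ⟨f⟩⟩
  · exact Or.inl ⟨n, hn, ⟨e.trans f⟩⟩
  · exact Or.inr (Or.inl ⟨n, hn, ⟨e.trans f⟩⟩)
  · exact Or.inr (Or.inr ⟨n, hn, ⟨e.trans f⟩⟩)

/-- Attaching a leaf is compatible with graph isomorphisms. -/
def addLeafIso {W W' : Type*} {H : SimpleGraph W} {H' : SimpleGraph W'} (e : H ≃g H') (i : W) :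
    addLeaf H i ≃g addLeaf H' (e i) where
  toEquiv := e.toEquiv.optionCongr
  map_rel_iff' := by
    rintro (_ | a) (_ | b)
    · simp
    · simp
    · simp
    · simpa using e.map_rel_iff

/-- An injective map preserving adjacency pulls labelings back. -/
lemma SSLabels.comap {W W' : Type*} {G : SimpleGraph W} {G' : SimpleGraph W'} {nu : W' → ℝ}
    (h : SSLabels G' nu) (f : W → W') (hf : Function.Injective f)
    (hadj : ∀ a b, G.Adj a b → G'.Adj (f a) (f b)) : SSLabels G (nu ∘ f) := by
  refine ⟨fun v => h.1 _, fun v s hs => ?_⟩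
  have := h.2 (f v) (s.map ⟨f, hf⟩) (by
    intro u hu
    obtain ⟨w, hw, rfl⟩ := Finset.mem_map.1 hu
    exact hadj _ _ (hs w hw))
  simpa using this

section
variable {W : Type*} {G : SimpleGraph W} {nu : W → ℝ} (h : SSLabels G nu)
include h

lemma SSLabels.one {v a : W} (ha : G.Adj v a) : nu a < 2 * nu v := by
  simpa using h.2 v {a} (by simpa using ha)

lemma SSLabels.two {v a b : W} (ha : G.Adj v a) (hb : G.Adj v b) (hab : a ≠ b) :
    nu a + nu b < 2 * nu v := by
  classical
  have := h.2 v {a, b} (by simp [ha, hb])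
  rwa [Finset.sum_pair hab] at this

lemma SSLabels.three {v a b c : W} (ha : G.Adj v a) (hb : G.Adj v b) (hc : G.Adj v c)
    (hab : a ≠ b) (hac : a ≠ c) (hbc : b ≠ c) : nu a + nu b + nu c < 2 * nu v := by
  classical
  have := h.2 v {a, b, c} (by simp [ha, hb, hc])
  rwa [Finset.sum_insert (by simp [hab, hac]), Finset.sum_pair hbc, ← add_assoc] at this

lemma SSLabels.four {v a b c d : W} (ha : G.Adj v a) (hb : G.Adj v b) (hc : G.Adj v c)
    (hd : G.Adj v d) (hab : a ≠ b) (hac : a ≠ c) (had : a ≠ d) (hbc : b ≠ c) (hbd : b ≠ d)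
    (hcd : c ≠ d) : nu a + nu b + nu c + nu d < 2 * nu v := by
  classical
  have := h.2 v {a, b, c, d} (by simp [ha, hb, hc, hd])
  rw [Finset.sum_insert (by simp [hab, hac, had]), Finset.sum_insert (by simp [hbc, hbd]),
    Finset.sum_pair hcd] at this
  linarith

/-- On a cycle, a vertex with the smallest label violates the strict inequality. -/
lemma SSLabels.isAcyclic : G.IsAcyclic := by
  classical
  intro v c hc
  obtain ⟨w, hw, hmin⟩ := Finset.exists_min_image c.support.toFinset nu
    ⟨v, by simp⟩
  have hw' : w ∈ c.support := by simpa using hw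
  have h2 := hc.ncard_neighborSet_toSubgraph_eq_two hw'
  obtain ⟨a, b, hab, hset⟩ := Set.ncard_eq_two.1 h2
  have ha : c.toSubgraph.Adj w a := by
    have : a ∈ c.toSubgraph.neighborSet w := by rw [hset]; simp
    simpa using this
  have hb : c.toSubgraph.Adj w b := by
    have : b ∈ c.toSubgraph.neighborSet w := by rw [hset]; simp
    simpa using this
  have hma := hmin a (by
    have := ha.symm.fst_mem; simpa using this)
  have hmb := hmin b (by
    have := hb.symm.fst_mem; simpa using this)
  have := h.two ha.adj_sub hb.adj_sub hab
  linarith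

end

/-- Duality obstruction: a nonzero `δ ≥ 0` with `∑_{u ∼ v} δ u ≥ 2 δ v` for all `v` rules out
strictly subadditive labelings. For `δ` one takes the imaginary root of an affine subdiagram. -/
lemma not_ssLabels_of_delta {W : Type*} [Fintype W] {G : SimpleGraph W} [DecidableRel G.Adj]
    (δ : W → ℕ) (hδ : ∀ v, 2 * δ v ≤ ∑ u, if G.Adj v u then δ u else 0)
    (hne : ∃ v, δ v ≠ 0) (nu : W → ℝ) (h : SSLabels G nu) : False := by
  classical
  have h1 : ∀ v, (∑ u, if G.Adj v u then nu u else 0) < 2 * nu v := by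
    intro v
    have := h.2 v (Finset.univ.filter (G.Adj v)) (by simp)
    rwa [Finset.sum_filter] at this
  have hlt : ∑ v, (δ v : ℝ) * (∑ u, if G.Adj v u then nu u else 0)
      < ∑ v, (δ v : ℝ) * (2 * nu v) := by
    apply Finset.sum_lt_sum
    · intro v _
      exact mul_le_mul_of_nonneg_left (h1 v).le (by positivity)
    · obtain ⟨v, hv⟩ := hne
      exact ⟨v, Finset.mem_univ _, mul_lt_mul_of_pos_left (h1 v) (by positivity)⟩
  have hge : ∑ v, (δ v : ℝ) * (2 * nu v)
      ≤ ∑ v, (∑ u, if G.Adj v u then (δ u : ℝ) else 0) * nu v := by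
    apply Finset.sum_le_sum
    intro v _
    have : (2 * δ v : ℝ) ≤ ∑ u, if G.Adj v u then (δ u : ℝ) else 0 := by
      exact_mod_cast hδ v
    nlinarith [h.1 v, mul_le_mul_of_nonneg_right this (h.1 v).le]
  have heq : ∑ v, (∑ u, if G.Adj v u then (δ u : ℝ) else 0) * nu v
      = ∑ v, (δ v : ℝ) * (∑ u, if G.Adj v u then nu u else 0) := by
    simp only [Finset.sum_mul, Finset.mul_sum]
    rw [Finset.sum_comm]
    refine Finset.sum_congr rfl fun v _ => Finset.sum_congr rfl fun u _ => ?_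
    simp [G.adj_comm u v]
  linarith

/-! ### Attaching a leaf to a Dynkin diagram -/

/-- The isomorphism given by a bijective vertex map; for concrete diagrams all hypotheses are
decidable. -/
noncomputable def isoOfMap {W W' : Type*} {G : SimpleGraph W} {G' : SimpleGraph W'} (f : W → W')
    (hf : Function.Bijective f) (h : ∀ a b, G'.Adj (f a) (f b) ↔ G.Adj a b) : G ≃g G' where
  toEquiv := Equiv.ofBijective f hf
  map_rel_iff' := by intro a b; exact h a b

/-- The reflection of the diagram `A_n`. -/
def adeARev (n : ℕ) : adeA n ≃g adeA n where
  toEquiv := Fin.revPerm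
  map_rel_iff' := by
    intro a b
    simp only [adeA_adj, Fin.revPerm_apply, Fin.val_rev]
    omega

/-- The reflection of the diagram `D_n` exchanging its last two vertices. -/
def adeDSwap (n : ℕ) (hn : 4 ≤ n) : adeD n ≃g adeD n where
  toEquiv := Equiv.swap ⟨n - 2, by omega⟩ ⟨n - 1, by omega⟩
  map_rel_iff' := by
    intro a b
    obtain ⟨m, rfl⟩ := Nat.exists_eq_add_of_le' hn
    simp only [adeD_adj, Equiv.swap_apply_def, Fin.ext_iff]
    split_ifs <;> simp only [ne_eq, and_true] <;> omega

/-- A leaf at the end of `A_n` gives `A_{n+1}`. -/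
def addLeafALast (n : ℕ) (i : Fin n) (hi : (i : ℕ) + 1 = n) :
    addLeaf (adeA n) i ≃g adeA (n + 1) where
  toEquiv := finSuccEquivLast.symm
  map_rel_iff' := by
    rintro (_ | a) (_ | b) <;>
      simp [adeA_adj, Fin.ext_iff, finSuccEquivLast_symm_some] <;> omega

/-- A leaf next to the end of `A_n` gives `D_{n+1}`. -/
def addLeafAPenult (n : ℕ) (i : Fin n) (hn : 3 ≤ n) (hi : (i : ℕ) + 2 = n) :
    addLeaf (adeA n) i ≃g adeD (n + 1) where
  toEquiv := finSuccEquivLast.symm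
  map_rel_iff' := by
    rintro (_ | a) (_ | b) <;>
      simp [adeA_adj, adeD_adj, Fin.ext_iff, finSuccEquivLast_symm_some] <;> omega

/-- A leaf at the far end of the long arm of `D_n` gives `D_{n+1}`. -/
def addLeafDZero (n : ℕ) (i : Fin n) (hn : 4 ≤ n) (hi : (i : ℕ) = 0) :
    addLeaf (adeD n) i ≃g adeD (n + 1) where
  toEquiv := (finSuccEquiv n).symm
  map_rel_iff' := by
    rintro (_ | a) (_ | b) <;>
      simp [adeD_adj, Fin.ext_iff] <;> omega

lemma addLeaf_A {n : ℕ} (hn : 1 ≤ n) (i : Fin n) (nu : Option (Fin n) → ℝ)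
    (h : SSLabels (addLeaf (adeA n) i) nu) : IsADE (addLeaf (adeA n) i) := by
  obtain ⟨i, hi⟩ := i
  by_cases h1 : i + 1 = n
  · exact Or.inl ⟨n + 1, by omega, ⟨addLeafALast n _ h1⟩⟩
  by_cases h0 : i = 0
  · refine Or.inl ⟨n + 1, by omega, ⟨(addLeafIso (adeARev n) _).trans (addLeafALast n _ ?_)⟩⟩
    simp [adeARev, Fin.val_rev]; omega
  by_cases h2 : i + 2 = n
  · exact Or.inr (Or.inl ⟨n + 1, by omega, ⟨addLeafAPenult n _ (by omega) h2⟩⟩)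
  by_cases h01 : i = 1
  · refine Or.inr (Or.inl ⟨n + 1, by omega,
      ⟨(addLeafIso (adeARev n) _).trans (addLeafAPenult n _ (by omega) ?_)⟩⟩)
    simp [adeARev, Fin.val_rev]; omega
  -- both arms now have length at least two; `E` types arise when one of them has length two
  have key : ∀ j : Fin n, (j : ℕ) = 2 → 5 ≤ n →
      (∃ nu, SSLabels (addLeaf (adeA n) j) nu) → IsADE (addLeaf (adeA n) j) := by
    rintro ⟨j, hj⟩ hj2 hn5 ⟨nu, h⟩
    simp only at hj2
    subst hj2
    by_cases hn8 : n < 8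
    · refine Or.inr (Or.inr ⟨n + 1, by omega, ⟨isoOfMap finSuccEquivLast.symm
        (Equiv.bijective _) ?_⟩⟩)
      interval_cases n <;> clear h <;> revert hj <;> decide +kernel
    · exfalso
      refine not_ssLabels_of_delta (G := addLeaf (adeA 8) 2)
        (fun x => x.elim 3 ![2, 4, 6, 5, 4, 3, 2, 1]) (by decide +kernel) ⟨none, by decide⟩ _
        (h.comap (Option.map (Fin.castLE (by omega)))
          (Option.map_injective (Fin.castLE_injective _)) ?_)
      rintro (_ | a) (_ | b) <;> simp [adeA_adj, Fin.ext_iff]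
  by_cases h02 : i = 2
  · exact key _ h02 (by omega) ⟨nu, h⟩
  by_cases h3 : i + 3 = n
  · refine IsADE.of_iso (key (adeARev n ⟨i, hi⟩) ?_ (by omega) ?_) (addLeafIso (adeARev n) _)
    · simp [adeARev, Fin.val_rev]; omega
    · exact ⟨_, h.comap (addLeafIso (adeARev n) ⟨i, hi⟩).symm (Equiv.injective _)
        (fun a b hab => (addLeafIso (adeARev n) ⟨i, hi⟩).symm.map_rel_iff.2 hab)⟩
  · exfalso
    refine not_ssLabels_of_delta (G := addLeaf (adeA 7) 3)
      (fun x => x.elim 2 ![1, 2, 3, 4, 3, 2, 1]) (by decide +kernel) ⟨none, by decide⟩ _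
      (h.comap (Option.map (fun a : Fin 7 => ⟨i - 3 + a, by omega⟩))
        (Option.map_injective fun a b hab => ?_) ?_)
    · simp only [Fin.ext_iff] at hab ⊢; omega
    · rintro (_ | a) (_ | b) <;> simp [adeA_adj, Fin.ext_iff] <;> omega

/-- An affine diagram of type `D̃` is excluded by concavity: labels strictly decrease along the
path from the first branch vertex `i` to the second, and by symmetry also in the other direction. -/
lemma no_addLeaf_D {n : ℕ} (hn : 4 ≤ n) (i : Fin n) (h0 : (i : ℕ) ≠ 0) (hi : (i : ℕ) + 3 ≤ n)
    (nu : Option (Fin n) → ℝ) (h : SSLabels (addLeaf (adeD n) i) nu) : False := by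
  obtain ⟨i, hin⟩ := i
  simp only at h0 hi
  have e1 := h.one (v := none) (a := some ⟨i, hin⟩) (by simp)
  have e2 := h.one (v := some ⟨i - 1, by omega⟩) (a := some ⟨i, hin⟩)
    (by simp [adeD_adj]; omega)
  have e3 := h.one (v := some ⟨n - 1, by omega⟩) (a := some ⟨n - 3, by omega⟩)
    (by simp [adeD_adj]; omega)
  have e4 := h.one (v := some ⟨n - 2, by omega⟩) (a := some ⟨n - 3, by omega⟩)
    (by simp [adeD_adj]; omega)
  by_cases hi3 : i + 3 = n
  · obtain rfl : i = n - 3 := by omega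
    have := h.four (v := some ⟨n - 3, hin⟩) (a := none) (b := some ⟨n - 3 - 1, by omega⟩)
      (c := some ⟨n - 1, by omega⟩) (d := some ⟨n - 2, by omega⟩) (by simp)
      (by simp [adeD_adj]; omega) (by simp [adeD_adj]; omega) (by simp [adeD_adj]; omega)
      (by simp) (by simp) (by simp) (by simp; omega) (by simp; omega) (by simp; omega)
    linarith
  · have claim : ∀ k, i ≤ k → ∀ hk : k + 4 ≤ n,
        nu (some ⟨k + 1, by omega⟩) < nu (some ⟨k, by omega⟩) := by
      intro k hk
      induction k, hk using Nat.le_induction with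
      | base =>
        intro hk
        have := h.three (v := some ⟨i, hin⟩) (a := none) (b := some ⟨i - 1, by omega⟩)
          (c := some ⟨i + 1, by omega⟩) (by simp) (by simp [adeD_adj]; omega)
          (by simp [adeD_adj]; omega) (by simp) (by simp) (by simp)
        linarith
      | succ k hk ih =>
        intro hk'
        have := h.two (v := some ⟨k + 1, by omega⟩) (a := some ⟨k, by omega⟩)
          (b := some ⟨k + 1 + 1, by omega⟩) (by simp [adeD_adj]; omega)
          (by simp [adeD_adj]; omega) (by simp; omega)
        have := ih (by omega)
        linarith
    have c := claim (n - 4) (by omega) (by omega)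
    simp only [show n - 4 + 1 = n - 3 by omega] at c
    have := h.three (v := some ⟨n - 3, by omega⟩) (a := some ⟨n - 4, by omega⟩)
      (b := some ⟨n - 1, by omega⟩) (c := some ⟨n - 2, by omega⟩)
      (by simp [adeD_adj]; omega) (by simp [adeD_adj]; omega)
      (by simp [adeD_adj]; omega) (by simp; omega) (by simp; omega) (by simp; omega)
    linarith

lemma addLeaf_D {n : ℕ} (hn : 4 ≤ n) (i : Fin n) (nu : Option (Fin n) → ℝ)
    (h : SSLabels (addLeaf (adeD n) i) nu) : IsADE (addLeaf (adeD n) i) := by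
  by_cases h0 : (i : ℕ) = 0
  · exact Or.inr (Or.inl ⟨n + 1, by omega, ⟨addLeafDZero n i hn h0⟩⟩)
  by_cases hi : (i : ℕ) + 3 ≤ n
  · exact (no_addLeaf_D hn i h0 hi nu h).elim
  -- the leaf is attached at one of the two short arms
  have key : ∀ j : Fin n, (j : ℕ) + 2 = n →
      (∃ nu, SSLabels (addLeaf (adeD n) j) nu) → IsADE (addLeaf (adeD n) j) := by
    rintro ⟨j, hj⟩ hj2 ⟨nu, h⟩
    obtain rfl : j = n - 2 := by simp only at hj2; omega
    by_cases hn8 : n < 8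
    · interval_cases n
      · exact Or.inr (Or.inl ⟨5, by omega, ⟨isoOfMap (fun x => x.elim 0 ![3, 2, 1, 4])
          (by decide +kernel) (by clear h; revert hj; decide +kernel)⟩⟩)
      · exact Or.inr (Or.inr ⟨6, by omega, ⟨isoOfMap (fun x => x.elim 4 ![0, 1, 2, 3, 5])
          (by decide +kernel) (by clear h; revert hj; decide +kernel)⟩⟩)
      · exact Or.inr (Or.inr ⟨7, by omega, ⟨isoOfMap (fun x => x.elim 0 ![5, 4, 3, 2, 1, 6])
          (by decide +kernel) (by clear h; revert hj; decide +kernel)⟩⟩)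
      · exact Or.inr (Or.inr ⟨8, by omega, ⟨isoOfMap (fun x => x.elim 0 ![6, 5, 4, 3, 2, 1, 7])
          (by decide +kernel) (by clear h; revert hj; decide +kernel)⟩⟩)
    · exfalso
      refine not_ssLabels_of_delta (G := addLeaf (adeD 8) 6)
        (fun x => x.elim 2 ![1, 2, 3, 4, 5, 6, 4, 3]) (by decide +kernel) ⟨none, by decide⟩ _
        (h.comap (Option.map (fun a : Fin 8 => ⟨n - 8 + a, by omega⟩))
          (Option.map_injective fun a b hab => ?_) ?_)
      · simp only [Fin.ext_iff] at hab ⊢; omega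
      · rintro (_ | a) (_ | b) <;> simp [adeD_adj, Fin.ext_iff] <;> omega
  by_cases h2 : (i : ℕ) + 2 = n
  · exact key i h2 ⟨nu, h⟩
  · refine IsADE.of_iso (key (adeDSwap n hn i) ?_ ?_) (addLeafIso (adeDSwap n hn) _)
    · have hi' : i = ⟨n - 1, by omega⟩ := by ext; simp only; omega
      rw [hi']
      simp [adeDSwap]; omega
    · exact ⟨_, h.comap (addLeafIso (adeDSwap n hn) i).symm (Equiv.injective _)
        (fun a b hab => (addLeafIso (adeDSwap n hn) i).symm.map_rel_iff.2 hab)⟩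

lemma addLeaf_E {n : ℕ} (hn : n = 6 ∨ n = 7 ∨ n = 8) (i : Fin n) (nu : Option (Fin n) → ℝ)
    (h : SSLabels (addLeaf (adeE n) i) nu) : IsADE (addLeaf (adeE n) i) := by
  rcases hn with rfl | rfl | rfl
  · have no := fun (d : ℕ) (δ : Fin 6 → ℕ) h1 h2 =>
      not_ssLabels_of_delta (G := addLeaf (adeE 6) i) (fun x => x.elim d δ) h1 h2 nu h
    fin_cases i
    · exact Or.inr (Or.inr ⟨7, by omega, ⟨isoOfMap (fun x => x.elim 5 ![4, 3, 2, 1, 0, 6])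
          (by decide +kernel) (by decide +kernel)⟩⟩)
    · exact (no 1 ![1, 2, 2, 1, 0, 1] (by decide +kernel) ⟨none, by decide⟩).elim
    · exact (no 1 ![0, 1, 2, 1, 0, 1] (by decide +kernel) ⟨none, by decide⟩).elim
    · exact (no 1 ![0, 1, 2, 2, 1, 1] (by decide +kernel) ⟨none, by decide⟩).elim
    · exact Or.inr (Or.inr ⟨7, by omega, ⟨isoOfMap (fun x => x.elim 5 ![0, 1, 2, 3, 4, 6])
          (by decide +kernel) (by decide +kernel)⟩⟩)
    · exact (no 1 ![1, 2, 3, 2, 1, 2] (by decide +kernel) ⟨none, by decide⟩).elim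
  · have no := fun (d : ℕ) (δ : Fin 7 → ℕ) h1 h2 =>
      not_ssLabels_of_delta (G := addLeaf (adeE 7) i) (fun x => x.elim d δ) h1 h2 nu h
    fin_cases i
    · exact (no 1 ![2, 3, 4, 3, 2, 1, 2] (by decide +kernel) ⟨none, by decide⟩).elim
    · exact (no 1 ![1, 2, 2, 1, 0, 0, 1] (by decide +kernel) ⟨none, by decide⟩).elim
    · exact (no 1 ![0, 1, 2, 1, 0, 0, 1] (by decide +kernel) ⟨none, by decide⟩).elim
    · exact (no 1 ![0, 1, 2, 2, 1, 0, 1] (by decide +kernel) ⟨none, by decide⟩).elim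
    · exact (no 1 ![0, 1, 2, 2, 2, 1, 1] (by decide +kernel) ⟨none, by decide⟩).elim
    · exact Or.inr (Or.inr ⟨8, by omega, ⟨isoOfMap (fun x => x.elim 6 ![0, 1, 2, 3, 4, 5, 7])
          (by decide +kernel) (by decide +kernel)⟩⟩)
    · exact (no 1 ![1, 2, 3, 2, 1, 0, 2] (by decide +kernel) ⟨none, by decide⟩).elim
  · have no := fun (d : ℕ) (δ : Fin 8 → ℕ) h1 h2 =>
      not_ssLabels_of_delta (G := addLeaf (adeE 8) i) (fun x => x.elim d δ) h1 h2 nu h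
    fin_cases i
    · exact (no 1 ![2, 3, 4, 3, 2, 1, 0, 2] (by decide +kernel) ⟨none, by decide⟩).elim
    · exact (no 1 ![1, 2, 2, 1, 0, 0, 0, 1] (by decide +kernel) ⟨none, by decide⟩).elim
    · exact (no 1 ![0, 1, 2, 1, 0, 0, 0, 1] (by decide +kernel) ⟨none, by decide⟩).elim
    · exact (no 1 ![0, 1, 2, 2, 1, 0, 0, 1] (by decide +kernel) ⟨none, by decide⟩).elim
    · exact (no 1 ![0, 1, 2, 2, 2, 1, 0, 1] (by decide +kernel) ⟨none, by decide⟩).elim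
    · exact (no 1 ![0, 1, 2, 2, 2, 2, 1, 1] (by decide +kernel) ⟨none, by decide⟩).elim
    · exact (no 1 ![2, 4, 6, 5, 4, 3, 2, 3] (by decide +kernel) ⟨none, by decide⟩).elim
    · exact (no 1 ![1, 2, 3, 2, 1, 0, 0, 2] (by decide +kernel) ⟨none, by decide⟩).elim

lemma IsADE.addLeaf {W : Type*} {H : SimpleGraph W} (hH : IsADE H) (i : W)
    (nu : Option W → ℝ) (h : SSLabels (addLeaf H i) nu) : IsADE (addLeaf H i) := by
  rcases hH with ⟨n, hn, ⟨e⟩⟩ | ⟨n, hn, ⟨e⟩⟩ | ⟨n, hn, ⟨e⟩⟩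
  all_goals
    have h' := h.comap (addLeafIso e i).symm (Equiv.injective _)
      (fun a b hab => (addLeafIso e i).symm.map_rel_iff.2 hab)
  · exact (addLeaf_A hn _ _ h').of_iso (addLeafIso e i)
  · exact (addLeaf_D hn _ _ h').of_iso (addLeafIso e i)
  · exact (addLeaf_E hn _ _ h').of_iso (addLeafIso e i)

/-! ### Classification -/

/-- A finite connected graph with a strictly subadditive labeling is an ADE Dynkin diagram: it is
a tree, so a leaf can be removed and the claim follows by induction on the number of vertices. -/
theorem isADE_of_ssLabels (n : ℕ) : ∀ {W : Type} [Finite W] (G : SimpleGraph W) (nu : W → ℝ),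
    Nat.card W = n + 1 → G.Connected → SSLabels G nu → IsADE G := by
  induction n with
  | zero =>
    intro W _ G nu hcard hG _
    obtain ⟨hsub, ⟨x⟩⟩ := Nat.card_eq_one_iff_unique.1 hcard
    refine Or.inl ⟨1, le_rfl, ⟨isoOfMap (fun _ => 0) ⟨fun a b _ => hsub.elim a b, fun y => ⟨x, ?_⟩⟩
      fun a b => ?_⟩⟩
    · exact Subsingleton.elim _ _
    · obtain rfl := hsub.elim a b
      simp
  | succ n ih =>
    intro W _ G nu hcard hG h
    classical
    have := Fintype.ofFinite W
    have hnt : Nontrivial W := (Finite.one_lt_card_iff_nontrivial).1 (by omega)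
    have ht : G.IsTree := ⟨hG, h.isAcyclic⟩
    obtain ⟨v, hv⟩ := ht.exists_vert_degree_one_of_nontrivial
    have hG' := hG.induce_compl_singleton_of_degree_eq_one hv
    obtain ⟨w, hw, huniq⟩ := SimpleGraph.degree_eq_one_iff_existsUnique_adj.1 hv
    have hcard' : Nat.card ({v}ᶜ : Set W) = n + 1 := by
      have h1 : Nat.card ({v}ᶜ : Set W) = ({v}ᶜ : Set W).ncard := rfl
      rw [h1, Set.ncard_compl, Set.ncard_singleton, hcard]; rfl
    have hH := ih (G.induce {v}ᶜ) (nu ∘ Subtype.val) hcard' hG'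
      (h.comap _ Subtype.val_injective fun a b hab => by simpa using hab)
    have hwv : w ∈ ({v}ᶜ : Set W) := by simpa using hw.ne'
    let e : addLeaf (G.induce {v}ᶜ) ⟨w, hwv⟩ ≃g G := isoOfMap
      (fun x => x.elim v Subtype.val)
      (by
        constructor
        · rintro (_ | ⟨a, ha⟩) (_ | ⟨b, hb⟩) hab
          · rfl
          · exact absurd hab.symm hb
          · exact absurd hab ha
          · simpa using hab
        · intro y
          by_cases hy : y = v
          · exact ⟨none, hy.symm⟩
          · exact ⟨some ⟨y, hy⟩, rfl⟩)
      (by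
        have aux : ∀ b, G.Adj v b ↔ b = w := fun b =>
          ⟨fun hb => huniq b hb, fun hb => hb ▸ hw⟩
        rintro (_ | ⟨a, ha⟩) (_ | ⟨b, hb⟩)
        · simp
        · simp [aux]
        · simp [G.adj_comm a v, aux]
        · simp)
    exact (hH.addLeaf _ _ (h.comap e (Equiv.injective _)
      fun a b hab => e.map_rel_iff.2 hab)).of_iso e.symm

/-! ### Labelings of Dynkin diagrams -/

lemma sum_fin_le {n : ℕ} (f : ℤ → ℝ) (s : Finset (Fin n)) (T : Finset ℤ)
    (hs : ∀ u ∈ s, ((u : ℕ) : ℤ) ∈ T) (hT : ∀ t ∈ T, 0 ≤ f t) :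
    ∑ u ∈ s, f ((u : ℕ) : ℤ) ≤ ∑ t ∈ T, f t := by
  let g : Fin n ↪ ℤ := ⟨fun u => ((u : ℕ) : ℤ), fun a b h => by
    simpa [Fin.ext_iff] using h⟩
  have : ∑ u ∈ s, f ((u : ℕ) : ℤ) = ∑ t ∈ s.map g, f t := (Finset.sum_map s g f).symm
  rw [this]
  apply Finset.sum_le_sum_of_subset_of_nonneg
  · intro t ht
    obtain ⟨u, hu, rfl⟩ := Finset.mem_map.1 ht
    exact hs u hu
  · intro t ht _
    exact hT t ht

/-- The labels are the coefficients of twice the half-sum of positive roots. They are extended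
to `ℤ` with value `0` just outside the path, so that end vertices need no separate treatment. -/
lemma ssLabels_A (n : ℕ) : ∃ nu, SSLabels (adeA n) nu := by
  let f : ℤ → ℝ := fun t => ((t : ℝ) + 1) * (n - t)
  refine ⟨fun i => f ((i : ℕ) : ℤ), fun v => ?_, fun v s hs => ?_⟩
  · have : ((v : ℕ) : ℝ) < n := by exact_mod_cast v.2
    simp only [f, Int.cast_natCast]
    have : (0 : ℝ) < n - (v : ℕ) := by linarith
    positivity
  · have hv : (((v : ℕ) : ℤ) : ℝ) + 1 ≤ n := by exact_mod_cast v.2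
    have hv0 : (0 : ℝ) ≤ (((v : ℕ) : ℤ) : ℝ) := by positivity
    generalize hz : ((v : ℕ) : ℤ) = z at *
    have := sum_fin_le f s {z - 1, z + 1} (by
      intro u hu
      have := hs u hu
      rw [adeA_adj] at this
      simp only [Finset.mem_insert, Finset.mem_singleton]
      omega) (by
      intro t ht
      simp only [Finset.mem_insert, Finset.mem_singleton] at ht
      rcases ht with rfl | rfl
      · simp only [f]; push_cast; apply mul_nonneg <;> linarith
      · simp only [f]; push_cast; apply mul_nonneg <;> linarith)
    refine this.trans_lt ?_
    rw [Finset.sum_pair (by omega)]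
    simp only [f, hz]; push_cast
    nlinarith

/-- The labels are again the coefficients of twice the half-sum of positive roots: a quadratic
polynomial along the path, and `n (n - 1) / 2` at the two vertices of the fork. -/
lemma ssLabels_D (n : ℕ) (hn : 4 ≤ n) : ∃ nu, SSLabels (adeD n) nu := by
  let f : ℤ → ℝ := fun t =>
    if (n : ℤ) - 2 ≤ t then (n : ℝ) * (n - 1) / 2 else ((t : ℝ) + 1) * (2 * n - 2 - t)
  have hn' : (4 : ℝ) ≤ n := by exact_mod_cast hn
  have f1 : ∀ t : ℤ, (n : ℤ) - 2 ≤ t → f t = (n : ℝ) * (n - 1) / 2 := fun t ht => if_pos ht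
  have f2 : ∀ t : ℤ, t < (n : ℤ) - 2 → f t = ((t : ℝ) + 1) * (2 * n - 2 - t) :=
    fun t ht => if_neg (by omega)
  have f0 : ∀ t : ℤ, -1 ≤ t → 0 ≤ f t := by
    intro t ht
    by_cases h : (n : ℤ) - 2 ≤ t
    · rw [f1 t h]
      have : (0 : ℝ) ≤ n - 1 := by linarith
      positivity
    · rw [f2 t (by omega)]
      have h1 : (-1 : ℝ) ≤ t := by exact_mod_cast ht
      have h2 : (t : ℝ) < n - 2 := by
        have : t < (n : ℤ) - 2 := by omega
        exact_mod_cast this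
      apply mul_nonneg <;> linarith
  refine ⟨fun i => f ((i : ℕ) : ℤ), fun v => ?_, fun v s hs => ?_⟩
  · show 0 < f _
    by_cases h : (n : ℤ) - 2 ≤ ((v : ℕ) : ℤ)
    · rw [f1 _ h]
      have : (0 : ℝ) < n - 1 := by linarith
      positivity
    · rw [f2 _ (by omega)]
      have h1 : (0 : ℝ) ≤ (((v : ℕ) : ℤ) : ℝ) := by positivity
      have h2 : (((v : ℕ) : ℤ) : ℝ) < n - 2 := by
        have : ((v : ℕ) : ℤ) < (n : ℤ) - 2 := by omega
        exact_mod_cast this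
      apply mul_pos <;> linarith
  · have hvn := v.2
    have hadj : ∀ u ∈ s, _ := fun u hu => (adeD_adj v u).1 (hs u hu)
    show ∑ u ∈ s, f ((u : ℕ) : ℤ) < 2 * f ((v : ℕ) : ℤ)
    by_cases hleaf : (n : ℤ) - 2 ≤ ((v : ℕ) : ℤ)
    · have := sum_fin_le f s {(n : ℤ) - 3} (by
        intro u hu
        have := hadj u hu
        simp only [Finset.mem_singleton]
        omega) (by
        intro t ht
        simp only [Finset.mem_singleton] at ht
        exact f0 t (by omega))
      refine this.trans_lt ?_
      rw [Finset.sum_singleton, f1 _ hleaf, f2 _ (by omega)]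
      push_cast
      nlinarith
    · by_cases hbr : ((v : ℕ) : ℤ) = n - 3
      · have := sum_fin_le f s {(n : ℤ) - 4, (n : ℤ) - 2, (n : ℤ) - 1} (by
          intro u hu
          have := hadj u hu
          simp only [Finset.mem_insert, Finset.mem_singleton]
          omega) (by
          intro t ht
          simp only [Finset.mem_insert, Finset.mem_singleton] at ht
          exact f0 t (by omega))
        refine this.trans_lt ?_
        rw [Finset.sum_insert (by simp), Finset.sum_pair (by omega), hbr,
          f2 _ (by omega), f1 _ (by omega), f1 _ (by omega), f2 _ (by omega)]
        push_cast
        nlinarith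
      · have := sum_fin_le f s {((v : ℕ) : ℤ) - 1, ((v : ℕ) : ℤ) + 1} (by
          intro u hu
          have := hadj u hu
          simp only [Finset.mem_insert, Finset.mem_singleton]
          omega) (by
          intro t ht
          simp only [Finset.mem_insert, Finset.mem_singleton] at ht
          exact f0 t (by omega))
        refine this.trans_lt ?_
        rw [Finset.sum_pair (by omega), f2 _ (by omega), f2 _ (by omega), f2 _ (by omega)]
        push_cast
        nlinarith

lemma ssLabels_of_nat {W : Type*} [Fintype W] {G : SimpleGraph W} [DecidableRel G.Adj]
    (μ : W → ℕ) (hμ : ∀ v, (∑ u, if G.Adj v u then μ u else 0) < 2 * μ v) :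
    SSLabels G (fun v => (μ v : ℝ)) := by
  refine ⟨fun v => ?_, fun v s hs => ?_⟩
  · have := hμ v
    exact Nat.cast_pos.2 (by omega)
  · refine lt_of_le_of_lt ?_ (by exact_mod_cast hμ v :
      ((∑ u, if G.Adj v u then μ u else 0 : ℕ) : ℝ) < 2 * (μ v : ℝ))
    rw [← Nat.cast_sum]
    norm_cast
    rw [← Finset.sum_filter]
    exact Finset.sum_le_sum_of_subset fun u hu => by simpa using hs u hu

lemma IsADE.exists_ssLabels {W : Type*} {G : SimpleGraph W} (h : IsADE G) :
    ∃ nu, SSLabels G nu := by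
  have pull : ∀ {n : ℕ} {H : SimpleGraph (Fin n)} (_ : G ≃g H), (∃ nu, SSLabels H nu) →
      ∃ nu, SSLabels G nu := fun e ⟨nu, h⟩ =>
    ⟨_, h.comap e (Equiv.injective _) fun a b hab => e.map_rel_iff.2 hab⟩
  rcases h with ⟨n, hn, ⟨e⟩⟩ | ⟨n, hn, ⟨e⟩⟩ | ⟨n, hn, ⟨e⟩⟩
  · exact pull e (ssLabels_A n)
  · exact pull e (ssLabels_D n hn)
  · apply pull e
    -- coefficients of twice the half-sum of positive roots
    rcases hn with rfl | rfl | rfl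
    · exact ⟨_, ssLabels_of_nat ![16, 30, 42, 30, 16, 22] (by decide +kernel)⟩
    · exact ⟨_, ssLabels_of_nat ![34, 66, 96, 75, 52, 27, 49] (by decide +kernel)⟩
    · exact ⟨_, ssLabels_of_nat ![92, 182, 270, 220, 168, 114, 58, 136] (by decide +kernel)⟩

lemma exists_ssLabels_of_components {W : Type*} (G : SimpleGraph W)
    (h : ∀ c : G.ConnectedComponent, IsADE (G.induce c.supp)) : ∃ nu, SSLabels G nu := by
  classical
  choose μ hμ using fun c => (h c).exists_ssLabels
  let g : G.ConnectedComponent → W → ℝ := fun c v => if hv : v ∈ c.supp then μ c ⟨v, hv⟩ else 1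
  have hg : ∀ c v (hv : v ∈ c.supp), g c v = μ c ⟨v, hv⟩ := fun c v hv => dif_pos hv
  refine ⟨fun v => g (G.connectedComponentMk v) v, fun v => ?_, fun v s hs => ?_⟩
  · show 0 < g _ _
    rw [hg _ v rfl]
    exact (hμ _).1 _
  · set c := G.connectedComponentMk v with hc
    have hmem : ∀ u ∈ s, u ∈ c.supp := fun u hu =>
      (SimpleGraph.ConnectedComponent.eq.2 (hs u hu).reachable).symm
    have h1 : ∑ u ∈ s, g (G.connectedComponentMk u) u = ∑ u ∈ s, g c u :=
      Finset.sum_congr rfl fun u hu => by rw [show G.connectedComponentMk u = c from hmem u hu]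
    show ∑ u ∈ s, g (G.connectedComponentMk u) u < 2 * g c v
    rw [h1, hg c v rfl, ← Finset.sum_subtype_of_mem (p := (· ∈ c.supp)) _ hmem]
    have h2 := (hμ c).2 ⟨v, rfl⟩ (s.subtype (· ∈ c.supp)) (by
      rintro ⟨u, hu⟩ hus
      simpa using hs u (by simpa using hus))
    refine lt_of_eq_of_lt (Finset.sum_congr rfl ?_) h2
    rintro ⟨u, hu⟩ _
    exact hg c u hu

/-! ### Multiplicity matrices and their graphs -/

lemma graphOf_adj {V : Type} {A : V → V → ℕ} (hsym : ∀ u v, A u v = A v u) (hdiag : ∀ v, A v v = 0) (u v : V) :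
    (graphOf A).Adj u v ↔ A u v = 1 := by
  simp only [graphOf, SimpleGraph.fromRel_adj, hsym v u, or_self, ne_eq, and_iff_right_iff_imp]
  rintro h rfl
  simp [hdiag] at h

section
variable {V : Type} [Fintype V] {A : V → V → ℕ}

lemma isADE_of_matrix (hsym : ∀ u v, A u v = A v u) (hdiag : ∀ v, A v v = 0) (nu : V → ℝ)
    (hpos : ∀ v, 0 < nu v) (h : ∀ v, (∑ u, (A v u : ℝ) * nu u) < 2 * nu v) :
    (∀ u v, A u v ≤ 1) ∧
      ∀ c : (graphOf A).ConnectedComponent, IsADE ((graphOf A).induce c.supp) := by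
  have term : ∀ v u, (A v u : ℝ) * nu u < 2 * nu v := fun v u =>
    lt_of_le_of_lt (Finset.single_le_sum (f := fun u => (A v u : ℝ) * nu u)
      (fun w _ => mul_nonneg (by positivity) (hpos w).le) (Finset.mem_univ u)) (h v)
  refine ⟨fun u v => ?_, fun c => ?_⟩
  · by_contra! hlt
    have h2 : (2 : ℝ) ≤ A u v := by exact_mod_cast hlt
    have t1 := term u v
    have t2 := term v u
    rw [hsym v u] at t2
    nlinarith [hpos u, hpos v]
  · have hG : SSLabels (graphOf A) nu := by
      refine ⟨hpos, fun v s hs => lt_of_le_of_lt ?_ (h v)⟩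
      calc ∑ u ∈ s, nu u = ∑ u ∈ s, (A v u : ℝ) * nu u :=
            Finset.sum_congr rfl fun u hu => by
              rw [(graphOf_adj hsym hdiag v u).1 (hs u hu)]; simp
        _ ≤ _ := Finset.sum_le_sum_of_subset_of_nonneg (Finset.subset_univ _)
            fun u _ _ => mul_nonneg (by positivity) (hpos u).le
    have hconn : ((graphOf A).induce c.supp).Connected := c.maximal_connected_induce_supp.1
    have : Nonempty c.supp := hconn.nonempty
    obtain ⟨n, hn⟩ := Nat.exists_eq_succ_of_ne_zero (Nat.card_pos (α := c.supp)).ne'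
    exact isADE_of_ssLabels n _ (nu ∘ Subtype.val) hn hconn
      (hG.comap _ Subtype.val_injective fun a b hab => by simpa using hab)

lemma exists_matrix_labels (hsym : ∀ u v, A u v = A v u) (hdiag : ∀ v, A v v = 0)
    (hle : ∀ u v, A u v ≤ 1)
    (h : ∀ c : (graphOf A).ConnectedComponent, IsADE ((graphOf A).induce c.supp)) :
    ∃ nu : V → ℝ, (∀ v, 0 < nu v) ∧ ∀ v, (∑ u, (A v u : ℝ) * nu u) < 2 * nu v := by
  classical
  obtain ⟨nu, hnu⟩ := exists_ssLabels_of_components _ h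
  refine ⟨nu, hnu.1, fun v => ?_⟩
  have := hnu.2 v (Finset.univ.filter fun u => A v u = 1) (by
    intro u hu
    exact (graphOf_adj hsym hdiag v u).2 (by simpa using hu))
  rw [Finset.sum_filter] at this
  convert this using 2 with u
  have := hle v u
  split_ifs with h1
  · simp [h1]
  · have : A v u = 0 := by omega
    simp [this]

end

/-! ### Combining two commuting matrices -/

section
variable {V : Type} [Fintype V]

/-- Maximum principle for `2 - A`: consider a vertex where `x v / μ v` is smallest. -/
lemma nonneg_of_superharmonic (A : V → V → ℕ) (μ : V → ℝ) (hμ : ∀ v, 0 < μ v)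
    (h : ∀ v, (∑ u, (A v u : ℝ) * μ u) < 2 * μ v) (x : V → ℝ)
    (hx : ∀ v, (∑ u, (A v u : ℝ) * x u) ≤ 2 * x v) (v : V) : 0 ≤ x v := by
  obtain ⟨w, -, hw⟩ := Finset.exists_min_image Finset.univ (fun v => x v / μ v)
    ⟨v, Finset.mem_univ v⟩
  set t := x w / μ w with ht
  have hxt : ∀ u, t * μ u ≤ x u := fun u => by
    have := hw u (Finset.mem_univ u)
    rwa [le_div_iff₀ (hμ u)] at this
  have hxw : x w = t * μ w := by rw [ht, div_mul_cancel₀ _ (hμ w).ne']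
  suffices 0 ≤ t from (mul_nonneg this (hμ v).le).trans (hxt v)
  by_contra! hneg
  have h1 : t * ∑ u, (A w u : ℝ) * μ u ≤ ∑ u, (A w u : ℝ) * x u := by
    rw [Finset.mul_sum]
    refine Finset.sum_le_sum fun u _ => ?_
    have := mul_le_mul_of_nonneg_left (hxt u) (Nat.cast_nonneg (α := ℝ) (A w u))
    linarith
  have h2 := hx w
  rw [hxw] at h2
  nlinarith [h w]

/-- `2 - A` is invertible and its inverse preserves positivity. -/
lemma exists_solution (A : V → V → ℕ) (μ : V → ℝ) (hμ : ∀ v, 0 < μ v)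
    (h : ∀ v, (∑ u, (A v u : ℝ) * μ u) < 2 * μ v) (y : V → ℝ) (hy : ∀ v, 0 < y v) :
    ∃ x : V → ℝ, (∀ v, 0 < x v) ∧ ∀ v, 2 * x v - ∑ u, (A v u : ℝ) * x u = y v := by
  let L : (V → ℝ) →ₗ[ℝ] (V → ℝ) :=
    { toFun := fun x v => 2 * x v - ∑ u, (A v u : ℝ) * x u
      map_add' := fun x z => by
        ext v; simp only [Pi.add_apply, mul_add, Finset.sum_add_distrib]; ring
      map_smul' := fun c x => by
        ext v
        simp only [Pi.smul_apply, smul_eq_mul, RingHom.id_apply, mul_sub, Finset.mul_sum]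
        congr 1
        · ring
        · exact Finset.sum_congr rfl fun u _ => by ring }
  have hL : ∀ x v, L x v = 2 * x v - ∑ u, (A v u : ℝ) * x u := fun _ _ => rfl
  have hnn : ∀ x, (∀ v, 0 ≤ L x v) → ∀ v, 0 ≤ x v := fun x hx =>
    nonneg_of_superharmonic A μ hμ h x fun v => by have := hx v; rw [hL] at this; linarith
  have hinj : Function.Injective L := by
    rw [← LinearMap.ker_eq_bot, LinearMap.ker_eq_bot']
    intro x hx
    ext v
    have h1 := hnn x (fun v => by rw [hx]; simp) v
    have h2 := hnn (-x) (fun v => by rw [map_neg, hx]; simp) v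
    simp only [Pi.neg_apply] at h2
    simp only [Pi.zero_apply]
    linarith
  obtain ⟨x, hx⟩ := (LinearMap.injective_iff_surjective.1 hinj) y
  refine ⟨x, fun v => ?_, fun v => by rw [← hL, hx]⟩
  have hx0 := hnn x fun v => by rw [hx]; exact (hy v).le
  have h1 : 2 * x v - ∑ u, (A v u : ℝ) * x u = y v := by rw [← hL, hx]
  have h2 : 0 ≤ ∑ u, (A v u : ℝ) * x u :=
    Finset.sum_nonneg fun u _ => mul_nonneg (by positivity) (hx0 u)
  linarith [hy v]

/-- With `y = (2 - B)⁻¹ 1` and `x = (2 - A)⁻¹ y`, commutativity gives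
`(2 - A) ((2 - B) x) = 1`, so that both `(2 - A) x` and `(2 - B) x` are positive. -/
lemma exists_common_labeling (A B : V → V → ℕ) (hrec : RecurrentQuiver A B)
    (hA : ∃ μ : V → ℝ, (∀ v, 0 < μ v) ∧ ∀ v, (∑ u, (A v u : ℝ) * μ u) < 2 * μ v)
    (hB : ∃ μ : V → ℝ, (∀ v, 0 < μ v) ∧ ∀ v, (∑ u, (B v u : ℝ) * μ u) < 2 * μ v) :
    ∃ nu : V → ℝ, IsStrictlySubadditiveLabeling A B nu := by
  obtain ⟨α, hα, hα'⟩ := hA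
  obtain ⟨β, hβ, hβ'⟩ := hB
  obtain ⟨y, hy, hy'⟩ := exists_solution B β hβ hβ' 1 (fun _ => one_pos)
  obtain ⟨x, hx, hx'⟩ := exists_solution A α hα hα' y hy
  have hcomm : ∀ v, ∑ u, (A v u : ℝ) * ∑ w, (B u w : ℝ) * x w
      = ∑ u, (B v u : ℝ) * ∑ w, (A u w : ℝ) * x w := by
    intro v
    simp only [Finset.mul_sum]
    rw [Finset.sum_comm, Finset.sum_comm (f := fun u w => (B v u : ℝ) * ((A u w : ℝ) * x w))]
    refine Finset.sum_congr rfl fun w _ => ?_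
    simp only [← mul_assoc, ← Finset.sum_mul]
    congr 1
    exact_mod_cast hrec v w
  -- `z = (2 - B) x` solves `(2 - A) z = 1`
  obtain ⟨z, hz⟩ : ∃ z : V → ℝ, ∀ v, z v = 2 * x v - ∑ u, (B v u : ℝ) * x u := ⟨_, fun _ => rfl⟩
  have hAz : ∀ v, 2 * z v - ∑ u, (A v u : ℝ) * z u = 1 := by
    intro v
    have e1 : ∑ u, (A v u : ℝ) * z u
        = 2 * ∑ u, (A v u : ℝ) * x u - ∑ u, (A v u : ℝ) * ∑ w, (B u w : ℝ) * x w := by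
      rw [Finset.mul_sum, ← Finset.sum_sub_distrib]
      exact Finset.sum_congr rfl fun u _ => by rw [hz]; ring
    have e2 : ∑ u, (B v u : ℝ) * y u
        = 2 * ∑ u, (B v u : ℝ) * x u - ∑ u, (B v u : ℝ) * ∑ w, (A u w : ℝ) * x w := by
      rw [Finset.mul_sum, ← Finset.sum_sub_distrib]
      exact Finset.sum_congr rfl fun u _ => by rw [← hx']; ring
    have e3 := hy' v
    rw [e2, ← hx' v, Pi.one_apply] at e3
    rw [e1, hz, hcomm]
    linarith
  have hz0 := nonneg_of_superharmonic A α hα hα' z fun v => by linarith [hAz v]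
  refine ⟨x, hx, fun v => by linarith [hx' v, hy v], fun v => ?_⟩
  have h1 : 0 ≤ ∑ u, (A v u : ℝ) * z u :=
    Finset.sum_nonneg fun u _ => mul_nonneg (by positivity) (hz0 u)
  linarith [hAz v, hz v]

end

/-- a bipartite recurrent quiver has a strictly subadditive labeling iff `G(Q)`
is an admissible ADE bigraph. -/
theorem ssl_iff_admissibleADE
    {V : Type} [Fintype V] [DecidableEq V]
    (eps : V → ℤ) (A B : V → V → ℕ)
    (hbip : BipartiteData eps A B) (hrec : RecurrentQuiver A B) :
    (∃ nu : V → ℝ, IsStrictlySubadditiveLabeling A B nu) ↔ AdmissibleADE A B := by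
  obtain ⟨-, hAs, hBs, hAd, hBd, -, -⟩ := hbip
  constructor
  · rintro ⟨nu, hpos, hA, hB⟩
    obtain ⟨a1, a2⟩ := isADE_of_matrix hAs hAd nu hpos hA
    obtain ⟨b1, b2⟩ := isADE_of_matrix hBs hBd nu hpos hB
    exact ⟨a1, b1, a2, b2⟩
  · rintro ⟨a1, b1, a2, b2⟩
    exact exists_common_labeling A B hrec (exists_matrix_labels hAs hAd a1 a2)
      (exists_matrix_labels hBs hBd b1 b2)
end

section
/- Let Q be a bipartite recurrent quiver on a finite vertex set V, let T be the T-system associated with Q, and let N be a positive integer. Then the following are equivalent: (1) f^{δ_u}(ε(v) + 2N, v) = f^{δ_u}(ε(v), v) for all u, v ∈ V; (2) f^λ(t + 2N, v) = f^λ(t, v) for every λ : V → ℝ, every v ∈ V, and every t ∈ ℤ with t + ε(v) even; (3) there exists a map c : V → ℝ with c(v) > 0 such that T(t + 2N, v) = c(v)·T(t, v) for all v ∈ V and t ∈ ℤ with t + ε(v) even. Moreover, in any of these cases, if Q has a fixed point then c(v) = 1 for all v ∈ V. -/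
/-!
The equivalence goes through the positive real solutions of the `T`-system. A solution of the formal
system specializes to every positive real solution, and a polynomial identity that holds on the
positive orthant is an identity, so that periodicity of the formal system up to positive scalars is
the same as periodicity of all positive real solutions up to constants (`realPeriodic_of_formal`,
`formal_of_realPeriodic`). A fixed point is a constant positive solution, which forces the
constants to be `1`.

Since `log (x + y)` differs from `max (log x) (log y)` by at most `log 2`, a family of positive
solutions whose initial values grow like `exp (s * lam)` grows like `exp (s * f)`, with `f` the
tropical solution that starts at `lam` (`tendsto_trop`). Constants are invisible in this limit, so
periodicity up to constants implies periodicity of all tropical solutions.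

Conversely, suppose that the tropical solutions that start at the indicator functions `δ_u` are
periodic; by reflecting time, so are those that start at `-δ_u`. Fix all the initial values of a
positive solution except the one at `u`, which is called `s`. The value at `v` after a
time `2 * N` then grows like `s ^ δ_u v`, both as `s → ∞` and as `s → 0`. By the Laurent phenomenon it
is a Laurent polynomial in `s`, so its highest and lowest exponents are both `δ_u v`, and it
is a constant times `s ^ δ_u v` (`eq_monomial`). Letting `u` run over all vertices, the ratio of
the values at times `eps v + 2 * N` and `eps v` depends on no initial value, hence is a constant.

The Laurent phenomenon itself (`exists_isUniv`) is proved for the `T`-system with a coefficient on the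
first monomial, whose initial values are extra variables. Call `P_w` the value at time `2`, which
is the exchange polynomial at `w` up to a unit. Commutation of `A` and `B` says that the relation
defining the value at time `4` reduces modulo `P_w` to an identity, so that the division by `P_w` is
possible. For later times, the next value is a Laurent polynomial both in the cluster at
times `(1, 2)` and in the cluster at times `(3, 4)`, by induction and translation of time.
In the first expression the denominator is a product of the `P_w`, and in the second it is a product
of values at times `3` and `4`. As `P_w` has degree one in its coefficient, the quotient by `P_w` is
a Laurent polynomial ring (`theta`), and it remains to see that the values at times `3` and `4`
are not zero there. For the value at time `4` and the vertex `w` itself this uses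
the coefficients: a first-order deformation, over the dual numbers, of a zero of `P_w` along
which the right-hand side defining this value does not vanish to second order.
-/

open scoped BigOperators

/-- The `T`-system associated with a bipartite quiver: a family `T t v` of elements of the
field of fractions of `ℚ[x_v : v ∈ V]` satisfying
`T (t+1) v * T (t-1) v = ∏ u, T t u ^ A v u + ∏ u, T t u ^ B v u` whenever `t + eps v` is odd,
with initial conditions `T (eps v) v = x_v`. -/
def IsTSystem {V : Type} [Fintype V] (eps : V → ℤ) (A B : V → V → ℕ)
    (T : ℤ → V → FractionRing (MvPolynomial V ℚ)) : Prop :=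
  (∀ v, T (eps v) v =
      algebraMap (MvPolynomial V ℚ) (FractionRing (MvPolynomial V ℚ)) (MvPolynomial.X v)) ∧
  (∀ (t : ℤ) (v : V), Odd (t + eps v) →
    T (t + 1) v * T (t - 1) v = (∏ u, T t u ^ A v u) + (∏ u, T t u ^ B v u))

/-- The tropical `T`-system associated with a bipartite quiver, with initial value `lam`. -/
def IsTropicalTSystem {V : Type} [Fintype V] (eps : V → ℤ) (A B : V → V → ℕ)
    (lam : V → ℝ) (f : ℤ → V → ℝ) : Prop :=
  (∀ v, f (eps v) v = lam v) ∧
  (∀ (t : ℤ) (v : V), Odd (t + eps v) →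
    f (t + 1) v + f (t - 1) v =
      max (∑ u, (A v u : ℝ) * f t u) (∑ u, (B v u : ℝ) * f t u))

/-- A fixed point of the `T`-system dynamics: `ρ : V → ℝ` with `ρ v > 1` and
`ρ v ^ 2 = ∏ u, ρ u ^ A v u + ∏ u, ρ u ^ B v u` for all `v`. -/
def IsFixedPoint {V : Type} [Fintype V] (A B : V → V → ℕ) (rho : V → ℝ) : Prop :=
  (∀ v, 1 < rho v) ∧
  (∀ v, rho v ^ 2 = (∏ u, rho u ^ A v u) + (∏ u, rho u ^ B v u))

namespace TSys

/-! ### Laurent polynomial rings -/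

/-- The product of all the variables `X i`. -/
noncomputable def varProd (σ : Type) [Fintype σ] : MvPolynomial σ ℤ := ∏ i, MvPolynomial.X i

/-- The Laurent polynomial ring `ℤ[x_i^{±1} : i ∈ σ]`, obtained from the polynomial ring by
inverting the product of the variables. -/
abbrev Lau (σ : Type) [Fintype σ] : Type := Localization.Away (varProd σ)

section Laurent

variable {σ : Type} [Fintype σ]

lemma varProd_ne_zero : varProd σ ≠ 0 := by
  classical
  exact Finset.prod_ne_zero_iff.mpr fun i _ => MvPolynomial.X_ne_zero i

instance : IsDomain (Lau σ) :=
  IsLocalization.isDomain_localization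
    (powers_le_nonZeroDivisors_of_noZeroDivisors varProd_ne_zero)

lemma isUnit_algebraMap_X (i : σ) :
    IsUnit (algebraMap (MvPolynomial σ ℤ) (Lau σ) (MvPolynomial.X i)) := by
  have h := IsLocalization.Away.algebraMap_isUnit (S := Lau σ) (varProd σ)
  have h2 : algebraMap (MvPolynomial σ ℤ) (Lau σ) (varProd σ) =
      ∏ i, algebraMap (MvPolynomial σ ℤ) (Lau σ) (MvPolynomial.X i) := map_prod _ _ _
  rw [h2] at h
  exact isUnit_of_dvd_unit (Finset.dvd_prod_of_mem
    (fun i => algebraMap (MvPolynomial σ ℤ) (Lau σ) (MvPolynomial.X i)) (Finset.mem_univ i)) h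

/-- The variable `x_i` as a unit of the Laurent polynomial ring. -/
noncomputable def Lau.var (i : σ) : (Lau σ)ˣ := (isUnit_algebraMap_X i).unit

lemma Lau.coe_var (i : σ) :
    (Lau.var i : Lau σ) = algebraMap (MvPolynomial σ ℤ) (Lau σ) (MvPolynomial.X i) := rfl

variable {K : Type*} [CommRing K]

/-- The universal property of the Laurent polynomial ring: evaluation at units. -/
noncomputable def Lau.lift (u : σ → Kˣ) : Lau σ →+* K :=
  IsLocalization.Away.lift (varProd σ)
    (g := MvPolynomial.eval₂Hom (Int.castRingHom K) fun i => (u i : K)) (by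
      rw [varProd, map_prod]
      simp only [MvPolynomial.coe_eval₂Hom, MvPolynomial.eval₂_X]
      rw [← Units.coe_prod]
      exact Units.isUnit _)

lemma Lau.lift_algebraMap (u : σ → Kˣ) (F : MvPolynomial σ ℤ) :
    Lau.lift u (algebraMap _ _ F) =
      MvPolynomial.eval₂ (Int.castRingHom K) (fun i => (u i : K)) F :=
  IsLocalization.Away.lift_eq _ _ _

@[simp] lemma Lau.lift_var (u : σ → Kˣ) (i : σ) : Lau.lift u (Lau.var i) = u i := by
  rw [Lau.coe_var, Lau.lift_algebraMap, MvPolynomial.eval₂_X]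

lemma Lau.hom_ext {f g : Lau σ →+* K} (h : ∀ i : σ, f (Lau.var i : Lau σ) = g (Lau.var i : Lau σ)) : f = g := by
  apply IsLocalization.ringHom_ext (Submonoid.powers (varProd σ))
  apply MvPolynomial.ringHom_ext
  · intro r
    simp
  · intro i
    exact h i

lemma Lau.exists_rep (l : Lau σ) : ∃ (k : ℕ) (F : MvPolynomial σ ℤ),
    l * (algebraMap _ _ (varProd σ)) ^ k = algebraMap _ _ F :=
  IsLocalization.Away.surj (varProd σ) l

/-- Ring homomorphisms out of a Laurent polynomial ring take values in any subring that contains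
the images of the variables and of their inverses. -/
lemma Lau.hom_mem {F : Type*} [Field F] (S : Subring F) (f : Lau σ →+* F)
    (h : ∀ i : σ, f (Lau.var i : Lau σ) ∈ S ∧ (f (Lau.var i : Lau σ))⁻¹ ∈ S) (l : Lau σ) : f l ∈ S := by
  obtain ⟨k, P, hP⟩ := Lau.exists_rep l
  have h1 : f (algebraMap _ _ P) ∈ S := by
    induction P using MvPolynomial.induction_on generalizing l k with
    | C a => simp
    | add p q hp hq =>
      rw [map_add, map_add]
      refine S.add_mem (hp (algebraMap _ _ p) 0 (by simp)) (hq (algebraMap _ _ q) 0 (by simp))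
    | mul_X p i hp =>
      rw [map_mul, map_mul]
      exact S.mul_mem (hp (algebraMap _ _ p) 0 (by simp)) (h i).1
  have h2 : f (algebraMap _ _ (varProd σ)) = ∏ i : σ, f (Lau.var i : Lau σ) := by
    have : algebraMap (MvPolynomial σ ℤ) (Lau σ) (varProd σ) =
      ∏ i : σ, (Lau.var i : Lau σ) := map_prod _ _ _
    rw [this, map_prod]
  have h3 : f l * (∏ i : σ, f (Lau.var i : Lau σ)) ^ k = f (algebraMap _ _ P) := by
    rw [← h2, ← map_pow, ← map_mul, hP]
  have h4 : ∏ i : σ, f (Lau.var i : Lau σ) ≠ 0 :=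
    Finset.prod_ne_zero_iff.mpr fun i _ => ((Lau.var i).isUnit.map f).ne_zero
  have h5 : f l = f (algebraMap _ _ P) * (∏ i : σ, (f (Lau.var i : Lau σ))⁻¹) ^ k := by
    rw [← h3, Finset.prod_inv_distrib, inv_pow, mul_inv_cancel_right₀ (pow_ne_zero _ h4)]
  rw [h5]
  exact S.mul_mem h1 (S.pow_mem (S.prod_mem fun i _ => (h i).2) _)

end Laurent

/-! ### Denominators -/

section Denominators

variable {L : Type*} [CommRing L] [IsDomain L]

/-- The subring of the fraction field of `L` formed by the fractions that admit a denominator in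
the multiplicative set `D`. -/
noncomputable def fracSubring (D : Submonoid L) :
    Subring (FractionRing L) where
  carrier := {z | ∃ d ∈ D, ∃ l, z * algebraMap L _ d = algebraMap L _ l}
  mul_mem' := by
    rintro a b ⟨d, hd, l, h⟩ ⟨d', hd', l', h'⟩
    refine ⟨d * d', D.mul_mem hd hd', l * l', ?_⟩
    rw [map_mul, map_mul, ← h, ← h']
    ring
  one_mem' := ⟨1, D.one_mem, 1, by simp⟩
  add_mem' := by
    rintro a b ⟨d, hd, l, h⟩ ⟨d', hd', l', h'⟩
    refine ⟨d * d', D.mul_mem hd hd', l * d' + l' * d, ?_⟩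
    simp only [map_mul, map_add, ← h, ← h']
    ring
  zero_mem' := ⟨1, D.one_mem, 0, by simp⟩
  neg_mem' := by
    rintro a ⟨d, hd, l, h⟩
    exact ⟨d, hd, -l, by rw [map_neg, ← h]; ring⟩

/-- If a fraction has a denominator that is a product of primes `π w`, where primality is
witnessed by homomorphisms `θ w` to a domain with kernel generated by `π w`, and also has for each
`w` a denominator prime to `π w`, then it lies in `L`. -/
lemma mem_range_of_denominators {ι : Type*} (π : ι → L) (θ : ι → L →+* L)
    (hπ : ∀ w, π w ≠ 0) (h0 : ∀ w, θ w (π w) = 0) (hθ : ∀ w f, θ w f = 0 → π w ∣ f)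
    (z : FractionRing L)
    (hz : ∃ d ∈ Submonoid.closure (Set.range π), ∃ l, z * algebraMap L _ d = algebraMap L _ l)
    (hz' : ∀ w, ∃ d, θ w d ≠ 0 ∧ ∃ l, z * algebraMap L _ d = algebraMap L _ l) :
    ∃ l, z = algebraMap L _ l := by
  obtain ⟨d, hd, l, hl⟩ := hz
  induction hd using Submonoid.closure_induction generalizing z l with
  | mem x hx =>
    obtain ⟨w, rfl⟩ := hx
    obtain ⟨d, hd, m, hm⟩ := hz' w
    have h1 : l * d = m * π w := by
      apply IsFractionRing.injective L (FractionRing L)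
      rw [map_mul, map_mul, ← hl, ← hm]
      ring
    have h2 : θ w l = 0 := by
      have := congrArg (θ w) h1
      rw [map_mul, map_mul, h0, mul_zero] at this
      exact (mul_eq_zero.mp this).resolve_right hd
    obtain ⟨q, rfl⟩ := hθ w l h2
    refine ⟨q, ?_⟩
    have h3 : algebraMap L (FractionRing L) (π w) ≠ 0 := by
      simpa using hπ w
    apply mul_right_cancel₀ h3
    rw [hl, map_mul, mul_comm]
  | one => exact ⟨l, by simpa using hl⟩
  | mul a b _ _ iha ihb =>
    obtain ⟨m, hm⟩ := iha (z * algebraMap L _ b) (fun w => by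
      obtain ⟨d, hd, m, hm⟩ := hz' w
      refine ⟨d, hd, m * b, ?_⟩
      rw [map_mul, ← hm]
      ring) l (by rw [← hl, map_mul]; ring)
    exact ihb z hz' m hm

end Denominators

/-! ### T-systems with coefficients -/

section Coefficients

variable {V : Type} [Fintype V]

/-- The right-hand side of the `T`-system relation at the vertex `v`, with a coefficient `p` on
the first monomial. -/
def rhs {R : Type*} [CommRing R] (A B : V → V → ℕ) (p : R) (s : V → R) (v : V) : R :=
  p * ∏ u, s u ^ A v u + ∏ u, s u ^ B v u

lemma map_rhs {R S : Type*} [CommRing R] [CommRing S] (A B : V → V → ℕ) (φ : R →+* S)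
    (p : R) (s : V → R) (v : V) :
    φ (rhs A B p s v) = rhs A B (φ p) (fun u => φ (s u)) v := by
  simp [rhs]

/-- The recursion satisfied by the coefficients of a `T`-system with coefficients. -/
def IsCoef {G : Type*} [CommGroup G] (B : V → V → ℕ) (p : ℕ → V → G) : Prop :=
  ∀ k v, p (k + 2) v * p k v = ∏ u, p (k + 1) u ^ B v u

/-- The coefficients determined by their values at times `0` and `1`. -/
def coefSeq {G : Type*} [CommGroup G] (B : V → V → ℕ) (a b : V → G) : ℕ → V → G
  | 0 => a
  | 1 => b
  | k + 2 => fun v => (∏ u, coefSeq B a b (k + 1) u ^ B v u) / coefSeq B a b k v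

lemma isCoef_coefSeq {G : Type*} [CommGroup G] (B : V → V → ℕ) (a b : V → G) :
    IsCoef B (coefSeq B a b) := by
  intro k v
  simp [coefSeq]

/-- `τ` satisfies the `T`-system relations with coefficients `p` at all times up to `n`. The
relation is imposed at every vertex and every time, without any parity condition; it splits into
two independent bipartite systems. -/
def IsSol {R : Type*} [CommRing R] (A B : V → V → ℕ) (p : ℕ → V → Rˣ) (n : ℕ)
    (τ : ℕ → V → R) : Prop :=
  ∀ k v, k + 2 ≤ n → τ (k + 2) v * τ k v = rhs A B (p k v : R) (τ (k + 1)) v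

lemma IsCoef.map_eq {R S : Type*} [CommRing R] [CommRing S] {B : V → V → ℕ} {p : ℕ → V → Rˣ}
    {q : ℕ → V → Sˣ} (hp : IsCoef B p) (hq : IsCoef B q) (φ : R →+* S)
    (h0 : ∀ v, φ (p 0 v) = q 0 v) (h1 : ∀ v, φ (p 1 v) = q 1 v) (k : ℕ) :
    ∀ v, φ (p k v) = q k v := by
  suffices h : ∀ k, (∀ v, Units.map (φ : R →* S) (p k v) = q k v) ∧
      ∀ v, Units.map (φ : R →* S) (p (k + 1) v) = q (k + 1) v by
    intro v
    have := congrArg (fun x : Sˣ => (x : S)) ((h k).1 v)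
    simpa using this
  intro k
  induction k with
  | zero => exact ⟨fun v => Units.ext (by simpa using h0 v), fun v => Units.ext (by simpa using h1 v)⟩
  | succ k ih =>
    refine ⟨ih.2, fun v => ?_⟩
    have h := congrArg (Units.map (φ : R →* S)) (hp k v)
    rw [map_mul, map_prod, ih.1 v] at h
    simp only [map_pow, ih.2] at h
    rw [← hq k v] at h
    exact mul_right_cancel h

/-- A homomorphism that matches the initial data and the coefficients of two solutions matches the
solutions, provided that the second one has no zeros. -/
lemma IsSol.map_eq {R S : Type*} [CommRing R] [CommRing S] [IsDomain S] {A B : V → V → ℕ}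
    {p : ℕ → V → Rˣ} {q : ℕ → V → Sˣ} {n : ℕ} {τ : ℕ → V → R} {ρ : ℕ → V → S}
    (hτ : IsSol A B p n τ) (hρ : IsSol A B q n ρ) (φ : R →+* S)
    (hp : ∀ k v, φ (p k v) = q k v) (hne : ∀ k v, k + 2 ≤ n → ρ k v ≠ 0)
    (h0 : ∀ v, φ (τ 0 v) = ρ 0 v) (h1 : ∀ v, φ (τ 1 v) = ρ 1 v) :
    ∀ k, k ≤ n → ∀ v, φ (τ k v) = ρ k v := by
  suffices h : ∀ k, (k ≤ n → ∀ v, φ (τ k v) = ρ k v) ∧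
      (k + 1 ≤ n → ∀ v, φ (τ (k + 1) v) = ρ (k + 1) v) from fun k => (h k).1
  intro k
  induction k with
  | zero => exact ⟨fun _ => h0, fun _ => h1⟩
  | succ k ih =>
    refine ⟨ih.2, fun hk v => ?_⟩
    have e1 := ih.1 (by omega)
    have e2 := ih.2 (by omega)
    have h := congrArg φ (hτ k v hk)
    rw [map_mul, map_rhs, hp, e1] at h
    simp only [e2] at h
    rw [← hρ k v hk] at h
    exact mul_right_cancel₀ (hne k v hk) h

end Coefficients

/-! ### The universal T-system with coefficients -/

lemma forall_four {V : Type} {P : V × Fin 4 → Prop} (h0 : ∀ v, P (v, 0)) (h1 : ∀ v, P (v, 1))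
    (h2 : ∀ v, P (v, 2)) (h3 : ∀ v, P (v, 3)) : ∀ i, P i := by
  rintro ⟨v, j⟩
  fin_cases j
  exacts [h0 v, h1 v, h2 v, h3 v]

section Universal

variable {V : Type} [Fintype V]

/-- The Laurent polynomial ring in the initial values of a `T`-system with coefficients: for each
vertex `v`, the variables indexed by `(v, 0)`, `(v, 1)` are the initial values of the solution,
and those indexed by `(v, 2)`, `(v, 3)` are the initial values of the coefficients. -/
abbrev UL (V : Type) [Fintype V] : Type := Lau (V × Fin 4)

/-- A family indexed by `V × Fin 4` given by its four components. -/
def four {α : Type*} (a b c d : V → α) (i : V × Fin 4) : α := ![a i.1, b i.1, c i.1, d i.1] i.2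

/-- The homomorphism out of `UL V` with prescribed initial data. -/
noncomputable def ev {K : Type*} [CommRing K] (a b c d : V → Kˣ) : UL V →+* K :=
  Lau.lift (four a b c d)

/-- The initial variable of type `j` at `v`. -/
noncomputable def ini (j : Fin 4) (v : V) : (UL V)ˣ := Lau.var (v, j)

section ev
variable {K : Type*} [CommRing K] (a b c d : V → Kˣ) (v : V)
@[simp] lemma ev_ini0 : ev a b c d (ini 0 v : UL V) = a v := Lau.lift_var _ _
@[simp] lemma ev_ini1 : ev a b c d (ini 1 v : UL V) = b v := Lau.lift_var _ _
@[simp] lemma ev_ini2 : ev a b c d (ini 2 v : UL V) = c v := Lau.lift_var _ _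
@[simp] lemma ev_ini3 : ev a b c d (ini 3 v : UL V) = d v := Lau.lift_var _ _
end ev

/-- The universal coefficients. -/
noncomputable def pU (B : V → V → ℕ) : ℕ → V → (UL V)ˣ := coefSeq B (ini 2) (ini 3)

lemma pU_two (B : V → V → ℕ) (v : V) :
    pU B 2 v = (∏ u, (ini 3 u : (UL V)ˣ) ^ B v u) / ini 2 v := rfl

/-- `τ` is a solution of the universal `T`-system with coefficients, up to time `n`. -/
structure IsUniv (A B : V → V → ℕ) (n : ℕ) (τ : ℕ → V → UL V) : Prop where
  zero : ∀ v, τ 0 v = ini 0 v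
  one : ∀ v, τ 1 v = ini 1 v
  sol : IsSol A B (pU B) n τ

variable {A B : V → V → ℕ} {n : ℕ} {τ : ℕ → V → UL V}

lemma IsUniv.mono (h : IsUniv A B n τ) {m : ℕ} (hm : m ≤ n) : IsUniv A B m τ :=
  ⟨h.zero, h.one, fun k v hk => h.sol k v (hk.trans hm)⟩

/-- Evaluation of all the initial variables at `1`. -/
noncomputable def ev1 (V : Type) [Fintype V] : UL V →+* ℚ := ev 1 1 1 1

lemma ev1_pU (k : ℕ) (v : V) : ev1 V (pU B k v) = 1 := by
  have := (isCoef_coefSeq B (ini 2) (ini 3)).map_eq (q := fun _ _ => (1 : ℚˣ))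
    (fun k v => by simp) (ev1 V) (fun v => by simp [coefSeq, ev1]) (fun v => by simp [coefSeq, ev1])
    k v
  simpa [pU] using this

lemma rhs_pos {s : V → ℚ} (hs : ∀ u, 0 < s u) (v : V) : 0 < rhs A B 1 s v := by
  have h1 : 0 < ∏ u, s u ^ A v u := Finset.prod_pos fun u _ => pow_pos (hs u) _
  have h2 : 0 < ∏ u, s u ^ B v u := Finset.prod_pos fun u _ => pow_pos (hs u) _
  simp only [rhs]
  positivity

lemma IsUniv.ev1_pos (h : IsUniv A B n τ) : ∀ k ≤ n, ∀ v, 0 < ev1 V (τ k v) := by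
  suffices h : ∀ k, (k ≤ n → ∀ v, 0 < ev1 V (τ k v)) ∧
      (k + 1 ≤ n → ∀ v, 0 < ev1 V (τ (k + 1) v)) from fun k => (h k).1
  intro k
  induction k with
  | zero => exact ⟨fun _ v => by simp [h.zero, ev1], fun _ v => by simp [h.one, ev1]⟩
  | succ k ih =>
    refine ⟨ih.2, fun hk v => ?_⟩
    have e := congrArg (ev1 V) (h.sol k v hk)
    rw [map_mul, map_rhs, ev1_pU] at e
    have h1 := rhs_pos (A := A) (B := B) (ih.2 (by omega)) v
    rw [← e] at h1
    exact (pos_iff_pos_of_mul_pos h1).mpr (ih.1 (by omega) v)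

lemma IsUniv.ne_zero (h : IsUniv A B n τ) {k : ℕ} (hk : k ≤ n) (v : V) : τ k v ≠ 0 := by
  intro h0
  have := h.ev1_pos k hk v
  simp [h0] at this

/-- A universal solution extends by one time step as soon as the required divisions are possible in
the Laurent polynomial ring. -/
lemma IsUniv.extend (h : IsUniv A B (n + 1) τ)
    (hd : ∀ v, τ n v ∣ rhs A B (pU B n v : UL V) (τ (n + 1)) v) :
    ∃ τ', IsUniv A B (n + 2) τ' := by
  choose z hz using hd
  refine ⟨fun k => if k = n + 2 then z else τ k, ?_, ?_, ?_⟩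
  · intro v
    simp [h.zero]
  · intro v
    simp [h.one]
  · intro k v hk
    rcases Nat.lt_or_ge n k with h1 | h1
    · omega
    · have e1 : k ≠ n + 2 := by omega
      have e2 : k + 1 ≠ n + 2 := by omega
      simp only [e1, e2, if_false]
      by_cases e3 : k = n
      · subst e3
        simp only [if_true]
        rw [hz v, mul_comm]
      · have e4 : k + 2 ≠ n + 2 := by omega
        simp only [e4, if_false]
        exact h.sol k v (by omega)

end Universal

/-! ### Residues modulo the exchange polynomials -/

section Residues

variable {V : Type} [Fintype V] [DecidableEq V] {A B : V → V → ℕ} {n : ℕ} {τ : ℕ → V → UL V}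

/-- The root of the exchange polynomial at `w`, as a function of the coefficient at `w`. -/
noncomputable def root (A B : V → V → ℕ) (w : V) : (UL V)ˣ :=
  -((∏ u, (ini 1 u : (UL V)ˣ) ^ B w u) / ∏ u, (ini 1 u : (UL V)ˣ) ^ A w u)

lemma root_mul (w : V) :
    (root A B w : UL V) * ∏ u, (ini 1 u : UL V) ^ A w u = -∏ u, (ini 1 u : UL V) ^ B w u := by
  have : root A B w * ∏ u, (ini 1 u : (UL V)ˣ) ^ A w u = -∏ u, (ini 1 u : (UL V)ˣ) ^ B w u := by
    rw [root, neg_mul, div_mul_cancel]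
  simpa using congrArg (fun x : (UL V)ˣ => (x : UL V)) this

/-- The reduction modulo the exchange polynomial at `w`, realised as the endomorphism that
substitutes its root for the coefficient at `w`. -/
noncomputable def theta (A B : V → V → ℕ) (w : V) : UL V →+* UL V :=
  ev (ini 0) (ini 1) (Function.update (ini 2) w (root A B w)) (ini 3)

lemma IsUniv.two_mul (h : IsUniv A B n τ) (hn : 2 ≤ n) (v : V) :
    τ 2 v * ini 0 v = ini 2 v * ∏ u, (ini 1 u : UL V) ^ A v u + ∏ u, (ini 1 u : UL V) ^ B v u := by
  have := h.sol 0 v hn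
  simpa [rhs, h.zero, h.one, pU, coefSeq] using this

lemma IsUniv.three_mul (h : IsUniv A B n τ) (hn : 3 ≤ n) (v : V) :
    τ 3 v * ini 1 v = ini 3 v * ∏ u, τ 2 u ^ A v u + ∏ u, τ 2 u ^ B v u := by
  have := h.sol 1 v hn
  simpa [rhs, h.zero, h.one, pU, coefSeq] using this

lemma pU_two_mul (v : V) :
    (pU B 2 v : UL V) * ini 2 v = ∏ u, (ini 3 u : UL V) ^ B v u := by
  have : pU B 2 v * ini 2 v = ∏ u, (ini 3 u : (UL V)ˣ) ^ B v u := by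
    rw [pU_two, div_mul_cancel]
  simpa using congrArg (fun x : (UL V)ˣ => (x : UL V)) this

lemma theta_two_self (h : IsUniv A B n τ) (hn : 2 ≤ n) (w : V) : theta A B w (τ 2 w) = 0 := by
  have e := congrArg (theta A B w) (h.two_mul hn w)
  simp only [map_mul, map_add, map_prod, map_pow, theta, ev_ini0, ev_ini1, ev_ini2,
    Function.update_self, root_mul, neg_add_cancel] at e
  exact (Units.mul_left_eq_zero _).mp e

lemma two_dvd_of_theta_eq_zero (h : IsUniv A B n τ) (hn : 2 ≤ n) (w : V) (f : UL V)
    (hf : theta A B w f = 0) : τ 2 w ∣ f := by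
  set I := Ideal.span {τ 2 w} with hI
  have h1 : (Ideal.Quotient.mk I).comp (theta A B w) = Ideal.Quotient.mk I := by
    apply Lau.hom_ext
    apply forall_four
    · intro v
      exact congrArg (Ideal.Quotient.mk I) (ev_ini0 _ _ _ _ v)
    · intro v
      exact congrArg (Ideal.Quotient.mk I) (ev_ini1 _ _ _ _ v)
    · intro v
      refine (congrArg (Ideal.Quotient.mk I) (ev_ini2 _ _ _ _ v)).trans ?_
      by_cases hv : v = w
      · subst hv
        rw [Function.update_self]
        apply (Ideal.Quotient.eq).mpr
        rw [hI, Ideal.mem_span_singleton]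
        -- `root - p` is the exchange polynomial up to a unit
        have hu : IsUnit (∏ u, (ini 1 u : UL V) ^ A v u) := by
          have : (∏ u, (ini 1 u : UL V) ^ A v u) = ((∏ u, (ini 1 u : (UL V)ˣ) ^ A v u : (UL V)ˣ) : UL V) := by
            simp
          rw [this]
          exact Units.isUnit _
        rw [← hu.dvd_mul_right]
        refine ⟨-ini 0 v, ?_⟩
        have e1 := h.two_mul hn v
        have e2 := root_mul (A := A) (B := B) v
        change ((root A B v : UL V) - (ini 2 v : UL V)) * _ = _
        linear_combination e2 + e1
      · rw [Function.update_of_ne hv]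
        rfl
    · intro v
      exact congrArg (Ideal.Quotient.mk I) (ev_ini3 _ _ _ _ v)
  have h2 := congrArg (fun g => g f) h1
  simp only [RingHom.comp_apply, hf, map_zero] at h2
  rw [← Ideal.mem_span_singleton]
  exact Ideal.Quotient.eq_zero_iff_mem.mp h2.symm

/-- The value at time `4` is a Laurent polynomial. This is the step at which the commutation of
`A` and `B` is used. -/
lemma two_dvd_rhs (hA : ∀ u v, A u v = A v u) (hB : ∀ u v, B u v = B v u)
    (hrec : RecurrentQuiver A B) (h : IsUniv A B n τ) (hn : 3 ≤ n) (w : V) :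
    τ 2 w ∣ rhs A B (pU B 2 w : UL V) (τ 3) w := by
  apply two_dvd_of_theta_eq_zero h (by omega)
  rw [map_rhs]
  set t := fun v => theta A B w (τ 2 v) with ht
  set s := fun v => theta A B w (τ 3 v) with hs
  have htw : t w = 0 := theta_two_self h (by omega) w
  have hsy : ∀ b, s b * ini 1 b = ini 3 b * ∏ u, t u ^ A b u + ∏ u, t u ^ B b u := by
    intro b
    have e := congrArg (theta A B w) (h.three_mul hn b)
    simp only [map_mul, map_add, map_prod, map_pow] at e
    have e1 : theta A B w (ini 1 b) = (ini 1 b : UL V) := ev_ini1 _ _ _ _ _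
    have e3 : theta A B w (ini 3 b) = (ini 3 b : UL V) := ev_ini3 _ _ _ _ _
    rwa [e1, e3] at e
  have hp : theta A B w (pU B 2 w) * root A B w = ∏ u, (ini 3 u : UL V) ^ B w u := by
    have e := congrArg (theta A B w) (pU_two_mul (B := B) w)
    simpa [theta] using e
  -- modulo `τ 2 w`, only one of the two monomials of each neighbouring relation survives
  have hz : ∀ (C : V → V → ℕ) (b : V), C b w ≠ 0 → ∏ u, t u ^ C b u = 0 := fun C b hC =>
    Finset.prod_eq_zero (Finset.mem_univ w) (by rw [htw, zero_pow hC])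
  have hSA : (∏ b, s b ^ A w b) * ∏ b, (ini 1 b : UL V) ^ A w b
      = ∏ u, t u ^ (∑ b, A w b * B b u) := by
    rw [← Finset.prod_mul_distrib]
    simp only [← Finset.prod_pow_eq_pow_sum]
    rw [Finset.prod_comm]
    refine Finset.prod_congr rfl fun b _ => ?_
    by_cases hb : A w b = 0
    · simp [hb]
    · rw [← mul_pow, hsy, hz A b (by rwa [hA]), mul_zero, zero_add, ← Finset.prod_pow]
      exact Finset.prod_congr rfl fun u _ => by rw [← pow_mul, mul_comm]
  have hSB : (∏ b, s b ^ B w b) * ∏ b, (ini 1 b : UL V) ^ B w b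
      = (∏ b, (ini 3 b : UL V) ^ B w b) * ∏ u, t u ^ (∑ b, B w b * A b u) := by
    rw [← Finset.prod_mul_distrib]
    simp only [← Finset.prod_pow_eq_pow_sum]
    rw [Finset.prod_comm, ← Finset.prod_mul_distrib]
    refine Finset.prod_congr rfl fun b _ => ?_
    by_cases hb : B w b = 0
    · simp [hb]
    · rw [← mul_pow, hsy, hz B b (by rwa [hB]), add_zero, mul_pow, ← Finset.prod_pow]
      congr 1
      exact Finset.prod_congr rfl fun u _ => by rw [← pow_mul, mul_comm]
  have hZ : ∏ u, t u ^ (∑ b, B w b * A b u) = ∏ u, t u ^ (∑ b, A w b * B b u) :=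
    Finset.prod_congr rfl fun u _ => by rw [hrec w u]
  rw [hZ] at hSB
  have hr := root_mul (A := A) (B := B) w
  have hunit : (root A B w : UL V) * (∏ b, (ini 1 b : UL V) ^ A w b) *
      (∏ b, (ini 1 b : UL V) ^ B w b) ≠ 0 := by
    refine mul_ne_zero (mul_ne_zero (Units.ne_zero _) ?_) ?_ <;>
    exact Finset.prod_ne_zero_iff.mpr fun i _ => pow_ne_zero _ (Units.ne_zero _)
  apply mul_left_cancel₀ hunit
  rw [mul_zero, rhs]
  set SA := ∏ b, s b ^ A w b
  set SB := ∏ b, s b ^ B w b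
  set YA := ∏ b, (ini 1 b : UL V) ^ A w b
  set YB := ∏ b, (ini 1 b : UL V) ^ B w b
  set PB := ∏ b, (ini 3 b : UL V) ^ B w b
  set Z := ∏ u, t u ^ (∑ b, A w b * B b u)
  set r : UL V := (root A B w : UL V)
  linear_combination (SA * YA * YB) * hp + (PB * YB) * hSA + (r * YA) * hSB + PB * Z * hr

lemma ev1_root (w : V) : ev1 V (root A B w) = -1 := by
  have := congrArg (ev1 V) (root_mul (A := A) (B := B) w)
  simpa [ev1] using this

lemma ev1_theta_two_pos (h : IsUniv A B n τ) (hn : 2 ≤ n) {v w : V} (hv : v ≠ w) :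
    0 < ev1 V (theta A B w (τ 2 v)) := by
  have e := congrArg (fun f => ev1 V (theta A B w f)) (h.two_mul hn v)
  simp [theta, Function.update_of_ne hv, ev1] at e
  simp only [theta, ev1, e]
  norm_num

lemma ev1_theta_three_pos (hAB : ∀ u v, A u v * B u v = 0) (h : IsUniv A B n τ) (hn : 3 ≤ n) (v w : V) :
    0 < ev1 V (theta A B w (τ 3 v)) := by
  have e := congrArg (fun f => ev1 V (theta A B w f)) (h.three_mul hn v)
  have e1 : ev1 V (theta A B w (ini 1 v)) = 1 := by simp [theta, ev1]
  have e3 : ev1 V (theta A B w (ini 3 v)) = 1 := by simp [theta, ev1]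
  simp only [map_mul, map_add, map_prod, map_pow, e1, e3, mul_one, one_mul] at e
  rw [e]
  set t := fun u => ev1 V (theta A B w (τ 2 u)) with ht
  have hw : t w = 0 := by simp [ht, theta_two_self h (show 2 ≤ n by omega)]
  have htp : ∀ u, u ≠ w → 0 < t u := fun u hu => ev1_theta_two_pos h (by omega) hu
  have ht0 : ∀ u, 0 ≤ t u := fun u => by
    by_cases hu : u = w
    · rw [hu, hw]
    · exact (htp u hu).le
  have hpos : ∀ C : V → V → ℕ, C v w = 0 → 0 < ∏ u, t u ^ C v u := fun C hC =>
    Finset.prod_pos fun u _ => by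
      by_cases hu : u = w
      · rw [hu, hC, pow_zero]
        exact one_pos
      · exact pow_pos (htp u hu) _
  have hnn : ∀ C : V → V → ℕ, 0 ≤ ∏ u, t u ^ C v u := fun C =>
    Finset.prod_nonneg fun u _ => pow_nonneg (ht0 u) _
  rcases Nat.mul_eq_zero.mp (hAB v w) with h0 | h0
  · exact add_pos_of_pos_of_nonneg (hpos A h0) (hnn B)
  · exact add_pos_of_nonneg_of_pos (hnn A) (hpos B h0)

/-- The values at time `4` at vertices other than `w` are prime to the exchange polynomial
at `w`. -/
lemma theta_four_ne_zero_of_ne (hAB : ∀ u v, A u v * B u v = 0) (h : IsUniv A B n τ) (hn : 4 ≤ n) {v w : V} (hv : v ≠ w) :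
    theta A B w (τ 4 v) ≠ 0 := by
  intro h0
  have e := congrArg (fun f => ev1 V (theta A B w f)) (h.sol 2 v hn)
  simp only [map_mul, map_rhs, h0, map_zero, zero_mul] at e
  have hp : ev1 V (theta A B w (pU B 2 v)) = 1 := by
    have e := congrArg (fun f => ev1 V (theta A B w f)) (pU_two_mul (B := B) v)
    simpa [theta, Function.update_of_ne hv, ev1] using e
  rw [hp] at e
  have := rhs_pos (A := A) (B := B)
    (fun u => ev1_theta_three_pos hAB h (show 3 ≤ n by omega) u w) v
  exact this.ne e

end Residues

section SecondResidue

variable {V : Type} [Fintype V] [DecidableEq V] {A B : V → V → ℕ} {n : ℕ} {τ : ℕ → V → UL V}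

/-- The dual numbers `1 + a ε` with `a ≥ 0`. -/
def dualPos : Submonoid (DualNumber ℚ) where
  carrier := {z | z.fst = 1 ∧ 0 ≤ z.snd}
  mul_mem' := by
    rintro a b ⟨ha, ha'⟩ ⟨hb, hb'⟩
    refine ⟨by simp [ha, hb], ?_⟩
    simp only [TrivSqZeroExt.snd_mul, ha, hb, one_smul, MulOpposite.op_one]
    positivity
  one_mem' := by simp

/-- The dual numbers `1 - a ε` with `a ≥ 0`. -/
def dualNeg : Submonoid (DualNumber ℚ) where
  carrier := {z | z.fst = 1 ∧ z.snd ≤ 0}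
  mul_mem' := by
    rintro a b ⟨ha, ha'⟩ ⟨hb, hb'⟩
    refine ⟨by simp [ha, hb], ?_⟩
    simp only [TrivSqZeroExt.snd_mul, ha, hb, one_smul, MulOpposite.op_one]
    exact add_nonpos hb' ha'
  one_mem' := by simp

lemma eps_pow_cases (k : ℕ) (hk : k ≠ 0) :
    (DualNumber.eps : DualNumber ℚ) ^ k = DualNumber.eps ∨
      (DualNumber.eps : DualNumber ℚ) ^ k = 0 := by
  rcases k with _ | _ | k
  · exact absurd rfl hk
  · left; simp
  · right
    rw [pow_succ, pow_succ, mul_assoc, DualNumber.eps_mul_eps, mul_zero]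

lemma one_add_eps_pow_mem (k : ℕ) (hk : k ≠ 0) : 1 + (DualNumber.eps : DualNumber ℚ) ^ k ∈ dualPos := by
  rcases eps_pow_cases k hk with h | h <;> rw [h]
  · exact ⟨by simp, by simp⟩
  · simp

lemma one_sub_eps_pow_mem (k : ℕ) (hk : k ≠ 0) : 1 - (DualNumber.eps : DualNumber ℚ) ^ k ∈ dualNeg := by
  rcases eps_pow_cases k hk with h | h <;> rw [h]
  · exact ⟨by simp, by simp⟩
  · simp

/-- The dual number `-1 + ε`, as a unit. -/
def negOneAddEps : (DualNumber ℚ)ˣ where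
  val := -1 + DualNumber.eps
  inv := -1 - DualNumber.eps
  val_inv := by linear_combination -(DualNumber.eps_mul_eps (R := ℚ))
  inv_val := by linear_combination -(DualNumber.eps_mul_eps (R := ℚ))

/-- The dual number `2`, as a unit. -/
def dualTwo : (DualNumber ℚ)ˣ where
  val := 2
  inv := algebraMap ℚ (DualNumber ℚ) (1 / 2)
  val_inv := by
    rw [show (2 : DualNumber ℚ) = algebraMap ℚ (DualNumber ℚ) 2 from
      (map_ofNat (algebraMap ℚ (DualNumber ℚ)) 2).symm, ← map_mul]
    norm_num
  inv_val := by
    rw [show (2 : DualNumber ℚ) = algebraMap ℚ (DualNumber ℚ) 2 from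
      (map_ofNat (algebraMap ℚ (DualNumber ℚ)) 2).symm, ← map_mul]
    norm_num

/-- A first-order deformation of a zero of the exchange polynomial at `w`, along which `τ 4 w`
stays a unit. The values are chosen so that `τ 2` becomes `ε` at `w` and `1` elsewhere, and the
signs of the coefficients at the neighbours of `w` so that the first-order terms of the relation
at `w` cannot cancel. -/
noncomputable def dualEv (B : V → V → ℕ) (w : V) : UL V →+* DualNumber ℚ :=
  ev (fun v => if v = w then 1 else dualTwo) 1 (fun v => if v = w then negOneAddEps else 1)
    (fun v => if B w v = 0 then 1 else -1)

lemma dualEv_two_self (h : IsUniv A B n τ) (hn : 2 ≤ n) (w : V) :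
    dualEv B w (τ 2 w) = DualNumber.eps := by
  have e := congrArg (dualEv B w) (h.two_mul hn w)
  simpa [dualEv, negOneAddEps] using e

lemma dualEv_two_of_ne (h : IsUniv A B n τ) (hn : 2 ≤ n) {v w : V} (hv : v ≠ w) :
    dualEv B w (τ 2 v) = 1 := by
  have e := congrArg (dualEv B w) (h.two_mul hn v)
  simp only [dualEv, map_mul, map_add, map_prod, map_pow, ev_ini0, ev_ini1, ev_ini2, hv,
    if_false, Pi.one_apply, Units.val_one, one_pow, Finset.prod_const_one, mul_one] at e
  have h2 : (1 + 1 : DualNumber ℚ) = dualTwo := by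
    simp only [dualTwo]; norm_num
  rw [h2] at e
  apply dualTwo.isUnit.mul_right_cancel
  rw [one_mul]
  simpa [dualEv] using e

lemma dualEv_three (h : IsUniv A B n τ) (hn : 3 ≤ n) (v w : V) :
    dualEv B w (τ 3 v) = (if B w v = 0 then 1 else -1) * DualNumber.eps ^ A v w +
      DualNumber.eps ^ B v w := by
  have e := congrArg (dualEv B w) (h.three_mul hn v)
  have e1 : dualEv B w (ini 1 v) = 1 := by simp [dualEv]
  have e3 : dualEv B w (ini 3 v) = if B w v = 0 then 1 else -1 := by
    simp only [dualEv, ev_ini3]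
    split_ifs <;> simp
  have ht : ∀ u, dualEv B w (τ 2 u) = if u = w then DualNumber.eps else 1 := fun u => by
    split_ifs with hu
    · rw [hu, dualEv_two_self h (by omega)]
    · exact dualEv_two_of_ne h (by omega) hu
  simpa [e1, e3, ht, ite_pow] using e

/-- The value at time `4` at the vertex `w` is prime to the exchange polynomial at `w`: otherwise
the square of the latter would divide the right-hand side of the relation between times `2`
and `4`. -/
lemma theta_four_ne_zero_self (hA : ∀ u v, A u v = A v u) (hB : ∀ u v, B u v = B v u)
    (hAB : ∀ u v, A u v * B u v = 0) (h : IsUniv A B n τ) (hn : 4 ≤ n) (w : V) :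
    theta A B w (τ 4 w) ≠ 0 := by
  intro h0
  obtain ⟨g, hg⟩ := two_dvd_of_theta_eq_zero h (by omega) w _ h0
  have e := congrArg (dualEv B w) (h.sol 2 w hn)
  rw [hg, map_mul, map_mul, dualEv_two_self h (by omega), mul_right_comm, DualNumber.eps_mul_eps,
    zero_mul, map_rhs, rhs] at e
  set d : V → DualNumber ℚ := fun v => if B w v = 0 then 1 else -1 with hd
  have hp : dualEv B w (pU B 2 w) * (-1 + DualNumber.eps) = ∏ u, d u ^ B w u := by
    have e := congrArg (dualEv B w) (pU_two_mul (B := B) w)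
    simp only [map_mul, map_prod, map_pow] at e
    have e2 : dualEv B w (ini 2 w) = -1 + DualNumber.eps := by simp [dualEv, negOneAddEps]
    have e3 : ∀ v, dualEv B w (ini 3 v) = d v := fun v => by
      simp only [dualEv, ev_ini3, hd]
      split_ifs <;> simp
    rw [e2] at e
    simpa only [e3] using e
  have hSA : ∏ u, dualEv B w (τ 3 u) ^ A w u ∈ dualPos := by
    refine Submonoid.prod_mem _ fun u _ => ?_
    by_cases hu : A w u = 0
    · simp [hu]
    · have hb : B w u = 0 := (Nat.mul_eq_zero.mp (hAB w u)).resolve_left hu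
      apply Submonoid.pow_mem
      rw [dualEv_three h (by omega), if_pos hb, hB u w, hb, pow_zero, one_mul, add_comm, hA]
      exact one_add_eps_pow_mem _ hu
  have hSB : ∃ m ∈ dualNeg, ∏ u, dualEv B w (τ 3 u) ^ B w u = (∏ u, d u ^ B w u) * m := by
    refine ⟨∏ u, (1 - DualNumber.eps ^ B w u) ^ B w u, ?_, ?_⟩
    · refine Submonoid.prod_mem _ fun u _ => ?_
      by_cases hu : B w u = 0
      · simp [hu]
      · exact Submonoid.pow_mem _ (one_sub_eps_pow_mem _ hu) _
    · rw [← Finset.prod_mul_distrib]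
      refine Finset.prod_congr rfl fun u _ => ?_
      by_cases hu : B w u = 0
      · simp [hu]
      · have ha : A w u = 0 := (Nat.mul_eq_zero.mp (hAB w u)).resolve_right hu
        rw [← mul_pow, dualEv_three h (by omega), hd]
        simp only [if_neg hu]
        rw [hA u w, ha, hB u w]
        congr 1
        ring
  obtain ⟨m, hm, hSB⟩ := hSB
  have hD : (∏ u, d u ^ B w u) * ∏ u, d u ^ B w u = 1 := by
    rw [← Finset.prod_mul_distrib]
    refine Finset.prod_eq_one fun u _ => ?_
    rw [← mul_pow]
    have : d u * d u = 1 := by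
      simp only [hd]
      split_ifs <;> simp
    rw [this, one_pow]
  rw [hSB] at e
  set D := ∏ u, d u ^ B w u
  set a := ∏ u, dualEv B w (τ 3 u) ^ A w u
  have e' : a + (-1 + DualNumber.eps) * m = 0 := by
    linear_combination (-D * (-1 + DualNumber.eps)) * e - D * a * hp -
      (a + (-1 + DualNumber.eps) * m) * hD
  have e2 := congrArg TrivSqZeroExt.snd e'
  simp [hm.1] at e2
  have := hSA.2
  have := hm.2
  linarith

end SecondResidue

/-! ### The Laurent phenomenon -/

section LaurentPhenomenon

variable {V : Type} [Fintype V] [DecidableEq V] {A B : V → V → ℕ} {n : ℕ} {τ : ℕ → V → UL V}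

/-- The homomorphism to the fraction field that shifts time by `j`. -/
noncomputable def shift (B : V → V → ℕ) (τ : ℕ → V → UL V) (j : ℕ) (h0 : ∀ v, τ j v ≠ 0)
    (h1 : ∀ v, τ (j + 1) v ≠ 0) : UL V →+* FractionRing (UL V) :=
  ev (fun v => Units.mk0 (algebraMap _ _ (τ j v)) (by simpa using h0 v))
    (fun v => Units.mk0 (algebraMap _ _ (τ (j + 1) v)) (by simpa using h1 v))
    (fun v => Units.map (algebraMap (UL V) (FractionRing (UL V)) : _ →* _) (pU B j v))
    (fun v => Units.map (algebraMap (UL V) (FractionRing (UL V)) : _ →* _) (pU B (j + 1) v))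

lemma shift_coef {j : ℕ} (h0 : ∀ v, τ j v ≠ 0) (h1 : ∀ v, τ (j + 1) v ≠ 0) (k : ℕ) (v : V) :
    shift B τ j h0 h1 (pU B k v) = algebraMap _ _ (pU B (k + j) v : UL V) := by
  set φ := algebraMap (UL V) (FractionRing (UL V))
  refine (isCoef_coefSeq B (ini 2) (ini 3)).map_eq
    (q := fun k v => Units.map (φ : _ →* _) (pU B (k + j) v)) ?_ (shift B τ j h0 h1) ?_ ?_ k v
  · intro k v
    have := congrArg (Units.map (φ : UL V →* FractionRing (UL V)))
      (isCoef_coefSeq B (ini 2) (ini 3) (k + j) v)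
    rw [map_mul, map_prod] at this
    simp only [map_pow] at this
    beta_reduce
    rw [show k + 2 + j = k + j + 2 by ring, show k + 1 + j = k + j + 1 by ring]
    exact this
  · intro v
    simp only [coefSeq, shift, ev_ini2, zero_add]
    rfl
  · intro v
    simp only [coefSeq, shift, ev_ini3, add_comm 1 j]
    rfl

lemma shift_eq (h : IsUniv A B n τ) {j : ℕ} (h0 : ∀ v, τ j v ≠ 0) (h1 : ∀ v, τ (j + 1) v ≠ 0)
    (k : ℕ) (hk : k + j ≤ n) (v : V) :
    shift B τ j h0 h1 (τ k v) = algebraMap _ _ (τ (k + j) v) := by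
  set φ := algebraMap (UL V) (FractionRing (UL V))
  refine (h.mono (show k ≤ n by omega)).sol.map_eq
    (q := fun k v => Units.map (φ : _ →* _) (pU B (k + j) v))
    (ρ := fun k v => φ (τ (k + j) v)) ?_ (shift B τ j h0 h1)
    (shift_coef h0 h1) ?_ ?_ ?_ k le_rfl v
  · intro i v hi
    have := congrArg φ (h.sol (i + j) v (by omega))
    rw [map_mul, map_rhs] at this
    beta_reduce
    rw [show i + 2 + j = i + j + 2 by ring, show i + 1 + j = i + j + 1 by ring]
    exact this
  · intro i v hi
    simpa [φ] using h.ne_zero (show i + j ≤ n by omega) v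
  · intro v
    rw [h.zero]
    simp only [shift, ev_ini0, zero_add, Units.val_mk0, φ]
  · intro v
    rw [h.one]
    simp only [shift, ev_ini1, Units.val_mk0, φ, add_comm 1 j]

/-- The values of a shift have denominators in any multiplicative set that contains the new initial
values. -/
lemma shift_mem (D : Submonoid (UL V)) {j : ℕ} (h0 : ∀ v, τ j v ≠ 0) (h1 : ∀ v, τ (j + 1) v ≠ 0)
    (hD0 : ∀ v, τ j v ∈ D ∨ IsUnit (τ j v)) (hD1 : ∀ v, τ (j + 1) v ∈ D) (l : UL V) :
    shift B τ j h0 h1 l ∈ fracSubring D := by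
  have hL : ∀ l, algebraMap (UL V) (FractionRing (UL V)) l ∈ fracSubring D :=
    fun l => ⟨1, D.one_mem, l, by simp⟩
  have hinv : ∀ d ∈ D, d ≠ 0 → (algebraMap (UL V) (FractionRing (UL V)) d)⁻¹ ∈ fracSubring D :=
    fun d hd hd0 => ⟨d, hd, 1, by rw [map_one, inv_mul_cancel₀ (by simpa using hd0)]⟩
  have hunit : ∀ u : (UL V)ˣ, (algebraMap (UL V) (FractionRing (UL V)) u)⁻¹ ∈ fracSubring D := by
    intro u
    have : (algebraMap (UL V) (FractionRing (UL V)) u)⁻¹ = algebraMap _ _ (↑(u⁻¹) : UL V) := by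
      apply inv_eq_of_mul_eq_one_left
      rw [← map_mul, Units.inv_mul, map_one]
    rw [this]
    exact hL _
  apply Lau.hom_mem
  apply forall_four
  · intro v
    have e : shift B τ j h0 h1 (Lau.var (v, (0 : Fin 4)) : UL V) = algebraMap _ _ (τ j v) :=
      ev_ini0 _ _ _ _ v
    rw [e]
    refine ⟨hL _, ?_⟩
    rcases hD0 v with h | ⟨u, h⟩
    · exact hinv _ h (h0 v)
    · rw [← h]
      exact hunit u
  · intro v
    have e : shift B τ j h0 h1 (Lau.var (v, (1 : Fin 4)) : UL V) = algebraMap _ _ (τ (j + 1) v) :=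
      ev_ini1 _ _ _ _ v
    rw [e]
    exact ⟨hL _, hinv _ (hD1 v) (h1 v)⟩
  · intro v
    have e : shift B τ j h0 h1 (Lau.var (v, (2 : Fin 4)) : UL V) =
      algebraMap _ _ (pU B j v : UL V) := ev_ini2 _ _ _ _ v
    rw [e]
    exact ⟨hL _, hunit _⟩
  · intro v
    have e : shift B τ j h0 h1 (Lau.var (v, (3 : Fin 4)) : UL V) =
      algebraMap _ _ (pU B (j + 1) v : UL V) := ev_ini3 _ _ _ _ v
    rw [e]
    exact ⟨hL _, hunit _⟩

/-- **Laurent phenomenon**: the universal `T`-system with coefficients has a solution in the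
Laurent polynomial ring. -/
theorem exists_isUniv (hA : ∀ u v, A u v = A v u) (hB : ∀ u v, B u v = B v u)
    (hAB : ∀ u v, A u v * B u v = 0) (hrec : RecurrentQuiver A B) (m : ℕ) :
    ∃ τ, IsUniv A B (m + 1) τ := by
  induction m with
  | zero =>
    refine ⟨fun k => if k = 0 then fun v => ini 0 v else fun v => ini 1 v, ?_, ?_, ?_⟩
    · intro v; simp
    · intro v; simp
    · intro k v hk; omega
  | succ m ih =>
    obtain ⟨τ, h⟩ := ih
    apply h.extend
    intro v
    rcases (show m = 0 ∨ m = 1 ∨ m = 2 ∨ 3 ≤ m by omega) with rfl | rfl | rfl | hm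
    · rw [h.zero]
      exact (Units.isUnit _).dvd
    · rw [h.one]
      exact (Units.isUnit _).dvd
    · exact two_dvd_rhs hA hB hrec h le_rfl v
    · have ne : ∀ k, k ≤ m + 1 → ∀ v, τ k v ≠ 0 := fun k hk v => h.ne_zero hk v
      -- the next value, expressed through the clusters at times `(1, 2)` and `(3, 4)`
      set φ := algebraMap (UL V) (FractionRing (UL V)) with hφ
      have hS : ∀ j (hj : j ≤ m) (h0 : ∀ v, τ j v ≠ 0) (h1 : ∀ v, τ (j + 1) v ≠ 0), 1 ≤ j →
          shift B τ j h0 h1 (τ (m + 2 - j) v) * φ (τ m v) =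
            φ (rhs A B (pU B m v : UL V) (τ (m + 1)) v) := by
        intro j hj h0 h1 hj1
        obtain ⟨i, rfl⟩ : ∃ i, m = i + j := ⟨m - j, by omega⟩
        have e := congrArg (shift B τ j h0 h1) (h.sol i v (by omega))
        rw [map_mul, map_rhs] at e
        rw [show i + j + 2 - j = i + 2 by omega]
        rw [shift_eq h h0 h1 i (by omega)] at e
        rw [e, map_rhs]
        have hp : shift B τ j h0 h1 (pU B i v) = φ (pU B (i + j) v) :=
          shift_coef h0 h1 i v
        rw [hp]
        congr 1
        funext u
        rw [shift_eq h h0 h1 (i + 1) (by omega), show i + 1 + j = i + j + 1 by ring]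
      have hm0 : φ (τ m v) ≠ 0 := by simpa [hφ] using ne m (by omega) v
      set z := shift B τ 1 (ne 1 (by omega)) (ne 2 (by omega)) (τ (m + 2 - 1) v) with hz
      have e1 := hS 1 (by omega) (ne 1 (by omega)) (ne 2 (by omega)) le_rfl
      have e3 := hS 3 (by omega) (ne 3 (by omega)) (ne 4 (by omega)) (by omega)
      rw [← hz] at e1
      have hz3 : z = shift B τ 3 (ne 3 (by omega)) (ne 4 (by omega)) (τ (m + 2 - 3) v) :=
        mul_right_cancel₀ hm0 (e1.trans e3.symm)
      obtain ⟨l, hl⟩ := mem_range_of_denominators (τ 2) (theta A B) (ne 2 (by omega))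
        (theta_two_self h (by omega)) (two_dvd_of_theta_eq_zero h (by omega)) z
        (shift_mem (Submonoid.closure (Set.range (τ 2))) _ _
          (fun v => Or.inr (by rw [h.one]; exact Units.isUnit _))
          (fun v => Submonoid.subset_closure ⟨v, rfl⟩) _) (by
        intro w
        have key : z ∈ fracSubring ((nonZeroDivisors (UL V)).comap (theta A B w)) := by
          rw [hz3]
          refine shift_mem _ _ _ (fun u => Or.inl ?_) (fun u => ?_) _
          · refine mem_nonZeroDivisors_of_ne_zero fun h0 => ?_
            have := ev1_theta_three_pos hAB h (by omega) u w
            rw [h0, map_zero] at this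
            exact this.false
          · refine mem_nonZeroDivisors_of_ne_zero ?_
            by_cases huw : u = w
            · rw [huw]
              exact theta_four_ne_zero_self hA hB hAB h (by omega) w
            · exact theta_four_ne_zero_of_ne hAB h (by omega) huw
        obtain ⟨d, hd, l, hl⟩ := key
        exact ⟨d, nonZeroDivisors.ne_zero hd, l, hl⟩)
      refine ⟨l, IsFractionRing.injective (UL V) (FractionRing (UL V)) ?_⟩
      rw [← e1, hl, map_mul, mul_comm]

end LaurentPhenomenon

/-! ### Real and tropical solutions -/

section RealSolutions

variable {V : Type} [Fintype V]

/-- A second-order recurrence that is reversible in time has a solution defined for all times. -/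
lemma exists_recurrence (G : V → (V → ℝ) → ℝ) (lam : V → ℝ) :
    ∃ f : ℤ → V → ℝ, (∀ v, f 0 v = lam v) ∧ (∀ v, f 1 v = lam v) ∧
      ∀ t v, f (t + 1) v + f (t - 1) v = G v (f t) := by
  let e : Equiv.Perm ((V → ℝ) × (V → ℝ)) :=
    { toFun := fun x => (x.2, fun v => G v x.2 - x.1 v)
      invFun := fun x => (fun v => G v x.1 - x.2 v, x.1)
      left_inv := fun x => by ext <;> simp
      right_inv := fun x => by ext <;> simp }
  have he : ∀ t : ℤ, ((e ^ (t + 1)) (lam, lam)) = e ((e ^ t) (lam, lam)) := fun t => by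
    rw [add_comm, zpow_add, zpow_one, Equiv.Perm.mul_apply]
  refine ⟨fun t => ((e ^ t) (lam, lam)).1, fun v => by simp, fun v => by simp [e], fun t v => ?_⟩
  obtain ⟨t, rfl⟩ : ∃ s : ℤ, t = s + 1 := ⟨t - 1, by ring⟩
  beta_reduce
  rw [he (t + 1), he t, add_sub_cancel_right]
  simp [e]

/-- A positive real solution of the `T`-system. The values at the vertices and times of the wrong
parity are only required to be positive. -/
structure IsPos (eps : V → ℤ) (A B : V → V → ℕ) (τ : ℤ → V → ℝ) : Prop where
  pos : ∀ t v, 0 < τ t v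
  rel : ∀ t v, Odd (t + eps v) →
    τ (t + 1) v * τ (t - 1) v = (∏ u, τ t u ^ A v u) + ∏ u, τ t u ^ B v u

/-- The recurrence satisfied by the logarithms of a positive real solution. -/
noncomputable def posRec (A B : V → V → ℕ) (v : V) (x : V → ℝ) : ℝ :=
  Real.log (Real.exp (∑ u, (A v u : ℝ) * x u) + Real.exp (∑ u, (B v u : ℝ) * x u))

/-- The positive real solution that starts at `a` and satisfies the relations regardless of
parity. -/
noncomputable def posSol (A B : V → V → ℕ) (a : V → ℝ) (t : ℤ) (v : V) : ℝ :=
  Real.exp ((exists_recurrence (posRec A B) fun v => Real.log (a v)).choose t v)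

lemma posSol_pos (A B : V → V → ℕ) (a : V → ℝ) (t : ℤ) (v : V) : 0 < posSol A B a t v :=
  Real.exp_pos _

lemma posSol_zero (A B : V → V → ℕ) {a : V → ℝ} (ha : ∀ v, 0 < a v) (v : V) :
    posSol A B a 0 v = a v := by
  rw [posSol, (exists_recurrence (posRec A B) fun v => Real.log (a v)).choose_spec.1,
    Real.exp_log (ha v)]

lemma posSol_one (A B : V → V → ℕ) {a : V → ℝ} (ha : ∀ v, 0 < a v) (v : V) :
    posSol A B a 1 v = a v := by
  rw [posSol, (exists_recurrence (posRec A B) fun v => Real.log (a v)).choose_spec.2.1,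
    Real.exp_log (ha v)]

lemma posSol_rel (A B : V → V → ℕ) (a : V → ℝ) (t : ℤ) (v : V) :
    posSol A B a (t + 1) v * posSol A B a (t - 1) v =
      (∏ u, posSol A B a t u ^ A v u) + ∏ u, posSol A B a t u ^ B v u := by
  have h := (exists_recurrence (posRec A B) fun v => Real.log (a v)).choose_spec.2.2 t v
  simp only [posSol]
  rw [← Real.exp_add, h, posRec, Real.exp_log (by positivity), Real.exp_sum, Real.exp_sum]
  simp only [← Real.exp_nat_mul]

variable {eps : V → ℤ} {A B : V → V → ℕ}

lemma isPos_posSol (eps : V → ℤ) (A B : V → V → ℕ) (a : V → ℝ) : IsPos eps A B (posSol A B a) :=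
  ⟨posSol_pos A B a, fun t v _ => posSol_rel A B a t v⟩

lemma posSol_eps (hbip : BipartiteData eps A B) {a : V → ℝ} (ha : ∀ v, 0 < a v) (v : V) :
    posSol A B a (eps v) v = a v := by
  rcases hbip.1 v with h | h <;> rw [h]
  exacts [posSol_zero A B ha v, posSol_one A B ha v]

/-- Induction on time along the pairs `(t, v)` with `t + eps v` even, starting from the initial
cluster and moving in both directions. -/
lemma parity_induct (hbip : BipartiteData eps A B) (P : ℤ → V → Prop) (h0 : ∀ v, P (eps v) v)
    (hup : ∀ t v, Odd (t + eps v) → (∀ u, Even (t + eps u) → P t u) → P (t - 1) v → P (t + 1) v)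
    (hdown : ∀ t v, Odd (t + eps v) → (∀ u, Even (t + eps u) → P t u) → P (t + 1) v → P (t - 1) v) :
    ∀ t v, Even (t + eps v) → P t v := by
  suffices h : ∀ t : ℤ, (∀ v, Even (t + eps v) → P t v) ∧
      ∀ v, Even (t + 1 + eps v) → P (t + 1) v from fun t => (h t).1
  intro t
  induction t using Int.induction_on with
  | zero =>
    refine ⟨fun v hv => ?_, fun v hv => ?_⟩ <;> rcases hbip.1 v with h | h
    · exact h ▸ h0 v
    · exact absurd hv (by rw [h]; decide)
    · exact absurd hv (by rw [h]; decide)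
    · rw [zero_add]
      exact h ▸ h0 v
  | succ i ih =>
    refine ⟨ih.2, fun v hv => hup _ v ?_ ih.2 ?_⟩
    · grind
    · rw [add_sub_cancel_right]
      exact ih.1 v (by grind)
  | pred i ih =>
    refine ⟨fun v hv => hdown _ v ?_ ih.1 (ih.2 v ?_), by simpa using ih.1⟩
    · grind
    · grind

lemma even_of_adj (hbip : BipartiteData eps A B) {t : ℤ} {u v : V} (hv : Odd (t + eps v))
    (hu : A v u ≠ 0 ∨ B v u ≠ 0) : Even (t + eps u) := by
  have hne : eps v ≠ eps u := fun h => by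
    have := hbip.2.2.2.2.2.1 v u h
    tauto
  rcases hbip.1 v with h | h <;> rcases hbip.1 u with h' | h' <;> rw [h, h'] at hne <;>
    first | exact absurd rfl hne | (rw [h] at hv; rw [h']; grind)

lemma even_of_left (hbip : BipartiteData eps A B) {t : ℤ} {v : V} (hv : Odd (t + eps v)) (u : V) :
    A v u = 0 ∨ Even (t + eps u) :=
  or_iff_not_imp_left.mpr fun h => even_of_adj hbip hv (Or.inl h)

lemma even_of_right (hbip : BipartiteData eps A B) {t : ℤ} {v : V} (hv : Odd (t + eps v)) (u : V) :
    B v u = 0 ∨ Even (t + eps u) :=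
  or_iff_not_imp_left.mpr fun h => even_of_adj hbip hv (Or.inr h)

lemma prod_congr_adj {R : Type*} [CommMonoid R] {m : V → ℕ} {P : V → Prop}
    (hm : ∀ u, m u = 0 ∨ P u) {x y : V → R} (h : ∀ u, P u → x u = y u) :
    ∏ u, x u ^ m u = ∏ u, y u ^ m u := by
  refine Finset.prod_congr rfl fun u _ => ?_
  rcases hm u with h' | h'
  · rw [h', pow_zero, pow_zero]
  · rw [h u h']

lemma sum_congr_adj {m : V → ℕ} {P : V → Prop}
    (hm : ∀ u, m u = 0 ∨ P u) {x y : V → ℝ} (h : ∀ u, P u → x u = y u) :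
    ∑ u, (m u : ℝ) * x u = ∑ u, (m u : ℝ) * y u := by
  refine Finset.sum_congr rfl fun u _ => ?_
  rcases hm u with h' | h'
  · rw [h', Nat.cast_zero, zero_mul, zero_mul]
  · rw [h u h']

lemma IsPos.unique (hbip : BipartiteData eps A B) {τ σ : ℤ → V → ℝ} (hτ : IsPos eps A B τ)
    (hσ : IsPos eps A B σ) (h : ∀ v, τ (eps v) v = σ (eps v) v) :
    ∀ t v, Even (t + eps v) → τ t v = σ t v := by
  have key : ∀ t v, Odd (t + eps v) → (∀ u, Even (t + eps u) → τ t u = σ t u) →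
      τ (t + 1) v * τ (t - 1) v = σ (t + 1) v * σ (t - 1) v := fun t v ho hu => by
    rw [hτ.rel t v ho, hσ.rel t v ho, prod_congr_adj (even_of_left hbip ho) hu,
      prod_congr_adj (even_of_right hbip ho) hu]
  refine parity_induct hbip _ h (fun t v ho hu h1 => ?_) fun t v ho hu h1 => ?_
  · have := key t v ho hu
    rw [h1] at this
    exact mul_right_cancel₀ (hσ.pos _ v).ne' this
  · have := key t v ho hu
    rw [h1] at this
    exact mul_left_cancel₀ (hσ.pos _ v).ne' this

lemma IsPos.shift {τ : ℤ → V → ℝ} (hτ : IsPos eps A B τ) (k : ℤ) :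
    IsPos eps A B fun t => τ (t + 2 * k) :=
  ⟨fun t v => hτ.pos _ v, fun t v ho => by
    have := hτ.rel (t + 2 * k) v (by grind)
    rw [show t + 1 + 2 * k = t + 2 * k + 1 by ring, show t - 1 + 2 * k = t + 2 * k - 1 by ring]
    exact this⟩

lemma trop_unique (hbip : BipartiteData eps A B) {lam : V → ℝ} {f g : ℤ → V → ℝ}
    (hf : IsTropicalTSystem eps A B lam f) (hg : IsTropicalTSystem eps A B lam g) :
    ∀ t v, Even (t + eps v) → f t v = g t v := by
  have key : ∀ t v, Odd (t + eps v) → (∀ u, Even (t + eps u) → f t u = g t u) →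
      f (t + 1) v + f (t - 1) v = g (t + 1) v + g (t - 1) v := fun t v ho hu => by
    rw [hf.2 t v ho, hg.2 t v ho, sum_congr_adj (even_of_left hbip ho) hu,
      sum_congr_adj (even_of_right hbip ho) hu]
  refine parity_induct hbip _ (fun v => by rw [hf.1, hg.1]) (fun t v ho hu h1 => ?_)
    fun t v ho hu h1 => ?_
  · have := key t v ho hu
    linarith
  · have := key t v ho hu
    linarith

lemma exists_trop (hbip : BipartiteData eps A B) (lam : V → ℝ) :
    ∃ f, IsTropicalTSystem eps A B lam f := by
  obtain ⟨f, h0, h1, hf⟩ := exists_recurrence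
    (fun v x => max (∑ u, (A v u : ℝ) * x u) (∑ u, (B v u : ℝ) * x u)) lam
  refine ⟨f, fun v => ?_, fun t v _ => hf t v⟩
  rcases hbip.1 v with h | h <;> rw [h]
  exacts [h0 v, h1 v]

lemma trop_shift {lam : V → ℝ} {f : ℤ → V → ℝ} (hf : IsTropicalTSystem eps A B lam f) (k : ℤ)
    {mu : V → ℝ} (h : ∀ v, f (eps v + 2 * k) v = mu v) :
    IsTropicalTSystem eps A B mu fun t => f (t + 2 * k) :=
  ⟨h, fun t v ho => by
    have := hf.2 (t + 2 * k) v (by grind)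
    beta_reduce
    rw [show t + 1 + 2 * k = t + 2 * k + 1 by ring, show t - 1 + 2 * k = t + 2 * k - 1 by ring]
    exact this⟩

lemma trop_reflect {lam : V → ℝ} {f : ℤ → V → ℝ} (hf : IsTropicalTSystem eps A B lam f) (k : ℤ)
    {mu : V → ℝ} (h : ∀ v, f (2 * k - eps v) v = mu v) :
    IsTropicalTSystem eps A B mu fun t => f (2 * k - t) :=
  ⟨h, fun t v ho => by
    have := hf.2 (2 * k - t) v (by grind)
    beta_reduce
    rw [show 2 * k - (t + 1) = 2 * k - t - 1 by ring,
      show 2 * k - (t - 1) = 2 * k - t + 1 by ring, add_comm]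
    exact this⟩

open Filter Topology

lemma log_add_bounds {x y : ℝ} (hx : 0 < x) (hy : 0 < y) :
    max (Real.log x) (Real.log y) ≤ Real.log (x + y) ∧
      Real.log (x + y) ≤ Real.log 2 + max (Real.log x) (Real.log y) := by
  refine ⟨max_le (Real.log_le_log hx (by linarith)) (Real.log_le_log hy (by linarith)), ?_⟩
  have hm : 0 < max x y := lt_max_of_lt_left hx
  have : max (Real.log x) (Real.log y) = Real.log (max x y) := by
    rcases le_total x y with h | h
    · rw [max_eq_right h, max_eq_right (Real.log_le_log hx h)]
    · rw [max_eq_left h, max_eq_left (Real.log_le_log hy h)]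
  rw [this, ← Real.log_mul two_ne_zero hm.ne']
  exact Real.log_le_log (by positivity) (by linarith [le_max_left x y, le_max_right x y])

lemma tendsto_log_prod {ι : Type*} {l : Filter ι} {ℓ : ι → ℝ} {m : V → ℕ} {P : V → Prop}
    (hm : ∀ u, m u = 0 ∨ P u) {x : ι → V → ℝ} {y : V → ℝ} (hx : ∀ s u, 0 < x s u)
    (h : ∀ u, P u → Tendsto (fun s => Real.log (x s u) / ℓ s) l (𝓝 (y u))) :
    Tendsto (fun s => Real.log (∏ u, x s u ^ m u) / ℓ s) l (𝓝 (∑ u, (m u : ℝ) * y u)) := by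
  have : ∀ s, Real.log (∏ u, x s u ^ m u) / ℓ s = ∑ u, (m u : ℝ) * (Real.log (x s u) / ℓ s) := by
    intro s
    rw [Real.log_prod fun u _ => (pow_pos (hx s u) _).ne', Finset.sum_div]
    refine Finset.sum_congr rfl fun u _ => ?_
    rw [Real.log_pow, mul_div_assoc]
  simp only [this]
  refine tendsto_finsetSum _ fun u _ => ?_
  rcases hm u with h' | h'
  · simpa [h'] using tendsto_const_nhds
  · exact (h u h').const_mul _

/-- **Tropicalization**: a family of positive solutions whose initial values grow like
`exp (ℓ * lam)` grows like `exp (ℓ * f)` at all times, where `f` is the tropical solution that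
starts at `lam`. -/
lemma tendsto_trop (hbip : BipartiteData eps A B) {ι : Type*} {l : Filter ι} {ℓ : ι → ℝ}
    (hℓ : Tendsto ℓ l atTop) {τ : ι → ℤ → V → ℝ} (hτ : ∀ s, IsPos eps A B (τ s))
    {lam : V → ℝ} {f : ℤ → V → ℝ} (hf : IsTropicalTSystem eps A B lam f)
    (h : ∀ v, Tendsto (fun s => Real.log (τ s (eps v) v) / ℓ s) l (𝓝 (lam v))) :
    ∀ t v, Even (t + eps v) → Tendsto (fun s => Real.log (τ s t v) / ℓ s) l (𝓝 (f t v)) := by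
  have key : ∀ t v, Odd (t + eps v) →
      (∀ u, Even (t + eps u) → Tendsto (fun s => Real.log (τ s t u) / ℓ s) l (𝓝 (f t u))) →
      Tendsto (fun s => Real.log (τ s (t + 1) v) / ℓ s + Real.log (τ s (t - 1) v) / ℓ s) l
        (𝓝 (f (t + 1) v + f (t - 1) v)) := by
    intro t v ho hu
    have hX := tendsto_log_prod (even_of_left hbip ho) (fun s => (hτ s).pos t) hu
    have hY := tendsto_log_prod (even_of_right hbip ho) (fun s => (hτ s).pos t) hu
    have hXp : ∀ s, 0 < ∏ u, τ s t u ^ A v u := fun s =>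
      Finset.prod_pos fun u _ => pow_pos ((hτ s).pos t u) _
    have hYp : ∀ s, 0 < ∏ u, τ s t u ^ B v u := fun s =>
      Finset.prod_pos fun u _ => pow_pos ((hτ s).pos t u) _
    have hM := hX.max hY
    rw [hf.2 t v ho]
    have hlog2 : Tendsto (fun s => Real.log 2 / ℓ s) l (𝓝 0) := hℓ.const_div_atTop _
    have hM' := hlog2.add hM
    rw [zero_add] at hM'
    refine tendsto_of_tendsto_of_tendsto_of_le_of_le' hM hM' ?_ ?_
    · filter_upwards [hℓ.eventually_gt_atTop 0] with s hs
      rw [← add_div, ← Real.log_mul ((hτ s).pos _ v).ne' ((hτ s).pos _ v).ne', (hτ s).rel t v ho,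
        max_div_div_right hs.le]
      exact div_le_div_of_nonneg_right (log_add_bounds (hXp s) (hYp s)).1 hs.le
    · filter_upwards [hℓ.eventually_gt_atTop 0] with s hs
      rw [← add_div, ← Real.log_mul ((hτ s).pos _ v).ne' ((hτ s).pos _ v).ne', (hτ s).rel t v ho,
        max_div_div_right hs.le, ← add_div]
      exact div_le_div_of_nonneg_right (log_add_bounds (hXp s) (hYp s)).2 hs.le
  refine parity_induct hbip _ (fun v => by rw [hf.1]; exact h v) (fun t v ho hu h1 => ?_)
    fun t v ho hu h1 => ?_
  · simpa using (key t v ho hu).sub h1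
  · simpa using (key t v ho hu).sub h1

end RealSolutions

/-! ### Comparison of the formal and the real solutions -/

section Comparison

variable {V : Type} [Fintype V] {eps : V → ℤ} {A B : V → V → ℕ}

/-- One step of the `T`-system in terms of numerators and denominators. -/
lemma step_fraction {K : Type*} [CommRing K] {α β : V → ℕ} {P : V → Prop}
    (hα : ∀ u, α u = 0 ∨ P u) (hβ : ∀ u, β u = 0 ∨ P u) {x y : K} {s : V → K}
    (h : x * y = (∏ u, s u ^ α u) + ∏ u, s u ^ β u) {f g : K} (hy : y * g = f) {p q : V → K}
    (hs : ∀ u, P u → s u * q u = p u) :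
    x * (f * (∏ u, q u ^ α u) * ∏ u, q u ^ β u) =
      g * ((∏ u, p u ^ α u) * (∏ u, q u ^ β u) + (∏ u, p u ^ β u) * ∏ u, q u ^ α u) := by
  rw [← prod_congr_adj hα hs, ← prod_congr_adj hβ hs, ← hy]
  simp only [mul_pow, Finset.prod_mul_distrib]
  linear_combination (g * (∏ u, q u ^ α u) * ∏ u, q u ^ β u) * h

/-- The values of the formal `T`-system are fractions whose denominators are positive on every
positive real solution, and these fractions evaluate to the values of that solution. -/
lemma exists_fraction (hbip : BipartiteData eps A B)
    {T : ℤ → V → FractionRing (MvPolynomial V ℚ)} (hT : IsTSystem eps A B T) :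
    ∀ t v, Even (t + eps v) → ∃ f g : MvPolynomial V ℚ,
      T t v * algebraMap _ _ g = algebraMap _ _ f ∧
      ∀ τ, IsPos eps A B τ → 0 < MvPolynomial.aeval (fun v => τ (eps v) v) g ∧
        τ t v * MvPolynomial.aeval (fun v => τ (eps v) v) g =
          MvPolynomial.aeval (fun v => τ (eps v) v) f := by
  have key : ∀ t v, Odd (t + eps v) → (∀ u, Even (t + eps u) → ∃ f g : MvPolynomial V ℚ,
      T t u * algebraMap _ _ g = algebraMap _ _ f ∧
      ∀ τ, IsPos eps A B τ → 0 < MvPolynomial.aeval (fun v => τ (eps v) v) g ∧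
        τ t u * MvPolynomial.aeval (fun v => τ (eps v) v) g =
          MvPolynomial.aeval (fun v => τ (eps v) v) f) →
      ∀ t₁ t₂, (T t₁ v * T t₂ v = (∏ u, T t u ^ A v u) + ∏ u, T t u ^ B v u) →
      (∀ τ, IsPos eps A B τ → τ t₁ v * τ t₂ v = (∏ u, τ t u ^ A v u) + ∏ u, τ t u ^ B v u) →
      (∃ f g : MvPolynomial V ℚ, T t₂ v * algebraMap _ _ g = algebraMap _ _ f ∧
      ∀ τ, IsPos eps A B τ → 0 < MvPolynomial.aeval (fun v => τ (eps v) v) g ∧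
        τ t₂ v * MvPolynomial.aeval (fun v => τ (eps v) v) g =
          MvPolynomial.aeval (fun v => τ (eps v) v) f) →
      ∃ f g : MvPolynomial V ℚ, T t₁ v * algebraMap _ _ g = algebraMap _ _ f ∧
      ∀ τ, IsPos eps A B τ → 0 < MvPolynomial.aeval (fun v => τ (eps v) v) g ∧
        τ t₁ v * MvPolynomial.aeval (fun v => τ (eps v) v) g =
          MvPolynomial.aeval (fun v => τ (eps v) v) f := by
    intro t v ho hu t₁ t₂ hTr hτr ⟨f, g, hfg, hfg'⟩
    have hu' : ∀ u, ∃ f g : MvPolynomial V ℚ,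
        (∀ τ, IsPos eps A B τ → 0 < MvPolynomial.aeval (fun v => τ (eps v) v) g) ∧
        (Even (t + eps u) → T t u * algebraMap _ _ g = algebraMap _ _ f ∧
          ∀ τ, IsPos eps A B τ → τ t u * MvPolynomial.aeval (fun v => τ (eps v) v) g =
            MvPolynomial.aeval (fun v => τ (eps v) v) f) := by
      intro u
      by_cases he : Even (t + eps u)
      · obtain ⟨p, q, h1, h2⟩ := hu u he
        exact ⟨p, q, fun τ hτ => (h2 τ hτ).1, fun _ => ⟨h1, fun τ hτ => (h2 τ hτ).2⟩⟩
      · exact ⟨0, 1, fun τ _ => by simp, fun h => absurd h he⟩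
    choose p q hq hpq using hu'
    refine ⟨g * ((∏ u, p u ^ A v u) * (∏ u, q u ^ B v u) + (∏ u, p u ^ B v u) * ∏ u, q u ^ A v u),
      f * (∏ u, q u ^ A v u) * ∏ u, q u ^ B v u, ?_, fun τ hτ => ⟨?_, ?_⟩⟩
    · have := step_fraction (even_of_left hbip ho) (even_of_right hbip ho) hTr hfg
        (fun u he => (hpq u he).1)
      simpa only [map_mul, map_add, map_prod, map_pow] using this
    · simp only [map_mul, map_prod, map_pow]
      have h1 : 0 < MvPolynomial.aeval (fun v => τ (eps v) v) f := by
        rw [← (hfg' τ hτ).2]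
        exact mul_pos (hτ.pos _ _) (hfg' τ hτ).1
      exact mul_pos (mul_pos h1 (Finset.prod_pos fun u _ => pow_pos (hq u τ hτ) _))
        (Finset.prod_pos fun u _ => pow_pos (hq u τ hτ) _)
    · have := step_fraction (even_of_left hbip ho) (even_of_right hbip ho) (hτr τ hτ)
        (hfg' τ hτ).2 (fun u he => (hpq u he).2 τ hτ)
      simpa only [map_mul, map_add, map_prod, map_pow] using this
  refine parity_induct hbip _ (fun v => ⟨MvPolynomial.X v, 1, ?_, fun τ hτ => ?_⟩)
    (fun t v ho hu h1 => ?_) fun t v ho hu h1 => ?_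
  · rw [hT.1, map_one, mul_one]
  · simp
  · exact key t v ho hu _ _ (hT.2 t v ho) (fun τ hτ => hτ.rel t v ho) h1
  · exact key t v ho hu _ _ (by rw [mul_comm]; exact hT.2 t v ho)
      (fun τ hτ => by rw [mul_comm]; exact hτ.rel t v ho) h1

/-- Every positive real solution is periodic up to the constants `c`. -/
def RealPeriodic (eps : V → ℤ) (A B : V → V → ℕ) (N : ℕ) (c : V → ℝ) : Prop :=
  ∀ τ, IsPos eps A B τ → ∀ v t, Even (t + eps v) → τ (t + 2 * N) v = c v * τ t v

lemma even_shift {t : ℤ} {v : V} (h : Even (t + eps v)) (N : ℕ) :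
    Even (t + 2 * N + eps v) := by grind

lemma realPeriodic_of_formal (hbip : BipartiteData eps A B)
    {T : ℤ → V → FractionRing (MvPolynomial V ℚ)} (hT : IsTSystem eps A B T) {N : ℕ} {c : V → ℚ}
    (h : ∀ (v : V) (t : ℤ), Even (t + eps v) → T (t + 2 * N) v =
      algebraMap ℚ (FractionRing (MvPolynomial V ℚ)) (c v) * T t v) :
    RealPeriodic eps A B N fun v => (c v : ℝ) := by
  intro τ hτ v t he
  obtain ⟨f, g, hfg, hτfg⟩ := exists_fraction hbip hT t v he
  obtain ⟨f', g', hfg', hτfg'⟩ := exists_fraction hbip hT _ v (even_shift he N)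
  obtain ⟨hg, hf⟩ := hτfg τ hτ
  obtain ⟨hg', hf'⟩ := hτfg' τ hτ
  have key : f' * g = MvPolynomial.C (c v) * f * g' := by
    apply IsFractionRing.injective (MvPolynomial V ℚ) (FractionRing (MvPolynomial V ℚ))
    rw [map_mul, map_mul, map_mul, ← hfg, ← hfg', h v t he, ← MvPolynomial.algebraMap_eq,
      ← IsScalarTower.algebraMap_apply]
    ring
  have e := congrArg (MvPolynomial.aeval fun v => τ (eps v) v) key
  rw [map_mul, map_mul, map_mul, MvPolynomial.aeval_C, ← hf, ← hf', eq_ratCast] at e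
  apply mul_right_cancel₀ (mul_pos hg hg').ne'
  linear_combination e

lemma formal_of_realPeriodic (hbip : BipartiteData eps A B)
    {T : ℤ → V → FractionRing (MvPolynomial V ℚ)} (hT : IsTSystem eps A B T) {N : ℕ} {c : V → ℝ}
    (hc : RealPeriodic eps A B N c) :
    ∃ c : V → ℚ, (∀ v, 0 < c v) ∧ ∀ (v : V) (t : ℤ), Even (t + eps v) →
      T (t + 2 * N) v = algebraMap ℚ (FractionRing (MvPolynomial V ℚ)) (c v) * T t v := by
  have hcast : ∀ (x : V → ℚ) (p : MvPolynomial V ℚ),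
      MvPolynomial.aeval (fun v => (x v : ℝ)) p = (MvPolynomial.eval x p : ℝ) := fun x p => by
    have := MvPolynomial.aeval_algebraMap_apply ℝ x p
    simpa [MvPolynomial.coe_aeval_eq_eval, Function.comp_def] using this
  have hsol : ∀ x : V → ℚ, (∀ v, 0 < x v) → ∃ τ, IsPos eps A B τ ∧ ∀ v, τ (eps v) v = x v :=
    fun x hx => ⟨_, isPos_posSol eps A B _, posSol_eps hbip fun v => by exact_mod_cast hx v⟩
  have hrat : ∀ v, ∃ q : ℚ, 0 < q ∧ c v = q := by
    intro v
    obtain ⟨τ, hτ, h1⟩ := hsol 1 fun _ => one_pos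
    have he : Even (eps v + eps v) := ⟨_, rfl⟩
    obtain ⟨f, g, -, hfg⟩ := exists_fraction hbip hT _ v (even_shift he N)
    obtain ⟨hg, hf⟩ := hfg τ hτ
    have e := hc τ hτ v (eps v) he
    have hp := hτ.pos (eps v + 2 * N) v
    rw [h1, Pi.one_apply, Rat.cast_one, mul_one] at e
    simp only [h1, hcast] at hf hg
    have e2 : c v = ((MvPolynomial.eval 1 f / MvPolynomial.eval 1 g : ℚ) : ℝ) := by
      rw [← e, Rat.cast_div, eq_div_iff hg.ne', hf]
    refine ⟨_, ?_, e2⟩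
    rw [e, e2] at hp
    exact_mod_cast hp
  choose q hq hcq using hrat
  refine ⟨q, hq, fun v t he => ?_⟩
  obtain ⟨f, g, hfg, hτfg⟩ := exists_fraction hbip hT t v he
  obtain ⟨f', g', hfg', hτfg'⟩ := exists_fraction hbip hT _ v (even_shift he N)
  have key : f' * g = MvPolynomial.C (q v) * f * g' := by
    refine MvPolynomial.funext_set (fun _ => Set.Ioi 0) (fun _ => Set.Ioi_infinite 0) fun x hx => ?_
    obtain ⟨τ, hτ, h1⟩ := hsol x fun v => hx v (Set.mem_univ v)
    obtain ⟨-, hf⟩ := hτfg τ hτ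
    obtain ⟨-, hf'⟩ := hτfg' τ hτ
    rw [hc τ hτ v t he, hcq] at hf'
    simp only [h1, hcast] at hf hf'
    have : (MvPolynomial.eval x (f' * g) : ℝ) =
        (MvPolynomial.eval x (MvPolynomial.C (q v) * f * g') : ℝ) := by
      simp only [map_mul, MvPolynomial.eval_C, Rat.cast_mul]
      rw [← hf, ← hf']
      ring
    exact_mod_cast this
  obtain ⟨τ, hτ, -⟩ := hsol 1 fun _ => one_pos
  have hne : ∀ p : MvPolynomial V ℚ, 0 < MvPolynomial.aeval (fun v => τ (eps v) v) p →
      algebraMap _ (FractionRing (MvPolynomial V ℚ)) p ≠ 0 := by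
    intro p hp h0
    rw [IsFractionRing.to_map_eq_zero_iff] at h0
    rw [h0, map_zero] at hp
    exact hp.false
  have e := congrArg (algebraMap (MvPolynomial V ℚ) (FractionRing (MvPolynomial V ℚ))) key
  rw [map_mul, map_mul, map_mul, ← hfg, ← hfg', ← MvPolynomial.algebraMap_eq,
      ← IsScalarTower.algebraMap_apply] at e
  apply mul_right_cancel₀ (mul_ne_zero (hne g (hτfg τ hτ).1) (hne g' (hτfg' τ hτ).1))
  linear_combination e

open Filter Topology

/-- Periodicity of the positive real solutions up to constants passes to the tropical limit. -/
lemma trop_of_realPeriodic (hbip : BipartiteData eps A B) {N : ℕ} {c : V → ℝ}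
    (hc : RealPeriodic eps A B N c) (lam : V → ℝ) (f : ℤ → V → ℝ)
    (hf : IsTropicalTSystem eps A B lam f) (v : V) (t : ℤ) (he : Even (t + eps v)) :
    f (t + 2 * N) v = f t v := by
  set τ : ℝ → ℤ → V → ℝ := fun s => posSol A B fun v => Real.exp (s * lam v)
  have hτ : ∀ s, IsPos eps A B (τ s) := fun s => isPos_posSol eps A B _
  have hlim := tendsto_trop hbip tendsto_id hτ hf fun v => by
    refine tendsto_const_nhds.congr' ?_
    filter_upwards [eventually_gt_atTop 0] with s hs
    simp only [τ]
    rw [posSol_eps hbip (fun v => Real.exp_pos _), Real.log_exp, id, mul_div_cancel_left₀ _ hs.ne']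
  have hcv : 0 < c v := by
    have h1 := hc _ (hτ 0) v t he
    have h2 := (hτ 0).pos (t + 2 * N) v
    rw [h1] at h2
    exact pos_of_mul_pos_left h2 ((hτ 0).pos t v).le
  refine tendsto_nhds_unique (hlim _ v (even_shift he N)) ?_
  have := (tendsto_id.const_div_atTop (Real.log (c v))).add (hlim t v he)
  rw [zero_add] at this
  refine this.congr fun s => ?_
  rw [hc _ (hτ s) v t he, Real.log_mul hcv.ne' ((hτ s).pos t v).ne', add_div]

end Comparison

/-! ### Laurent polynomials with the growth of a monomial -/

section Growth

open Filter Topology Polynomial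

lemma tendsto_log_eval {P : ℝ[X]} (hP : ∀ s, 0 < s → 0 < P.eval s) :
    Tendsto (fun s => Real.log (P.eval s) / Real.log s) atTop (𝓝 P.natDegree) := by
  have hP0 : P ≠ 0 := by
    rintro rfl
    simpa using hP 1 one_pos
  have h1 : Tendsto (fun s => P.eval s / (s ^ P.natDegree)) atTop (𝓝 P.leadingCoeff) := by
    have := P.div_tendsto_atTop_leadingCoeff_div_of_degree_eq (X ^ P.natDegree)
      (by rw [degree_X_pow, degree_eq_natDegree hP0])
    simpa using this
  have h2 := (h1.log (leadingCoeff_ne_zero.mpr hP0)).div_atTop Real.tendsto_log_atTop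
  have h3 := h2.add_const (P.natDegree : ℝ)
  rw [zero_add] at h3
  refine h3.congr' ?_
  filter_upwards [eventually_gt_atTop 1] with s hs
  have hs0 : 0 < s := by linarith
  have hl : Real.log s ≠ 0 := (Real.log_pos hs).ne'
  rw [Real.log_div (hP s hs0).ne' (pow_pos hs0 _).ne', Real.log_pow]
  field_simp
  ring

/-- A positive Laurent polynomial in one variable that grows like `s ^ d` at infinity and
at zero is a multiple of `s ^ d`: its highest and its lowest exponents are both `d`. -/
lemma eq_monomial {y : ℝ → ℝ} (hy : ∀ s, 0 < s → 0 < y s) {P : ℝ[X]} {K d : ℕ}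
    (hP : ∀ s, 0 < s → y s * s ^ K = P.eval s)
    (h1 : Tendsto (fun s => Real.log (y s) / Real.log s) atTop (𝓝 d))
    (h2 : Tendsto (fun s => Real.log (y s⁻¹) / Real.log s) atTop (𝓝 (-d))) :
    ∃ c, ∀ s, 0 < s → y s = c * s ^ d := by
  have hPpos : ∀ s, 0 < s → 0 < P.eval s := fun s hs => by
    rw [← hP s hs]
    exact mul_pos (hy s hs) (pow_pos hs _)
  have hdeg : P.natDegree = d + K := by
    have h3 : Tendsto (fun s => Real.log (P.eval s) / Real.log s) atTop (𝓝 (d + K)) := by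
      refine (h1.add_const (K : ℝ)).congr' ?_
      filter_upwards [eventually_gt_atTop 1] with s hs
      have hs0 : 0 < s := by linarith
      have hl : Real.log s ≠ 0 := (Real.log_pos hs).ne'
      rw [← hP s hs0, Real.log_mul (hy s hs0).ne' (pow_pos hs0 _).ne', Real.log_pow]
      field_simp
    exact_mod_cast tendsto_nhds_unique (tendsto_log_eval hPpos) h3
  have hrev : ∀ s, 0 < s → P.reverse.eval s = y s⁻¹ * s ^ d := fun s hs => by
    let _ : Invertible s⁻¹ := invertibleOfNonzero (inv_ne_zero hs.ne')
    have h3 := eval₂_reverse_mul_pow (RingHom.id ℝ) s⁻¹ P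
    rw [invOf_eq_inv, inv_inv] at h3
    simp only [eval₂_id] at h3
    rw [← hP _ (inv_pos.mpr hs), hdeg, pow_add, ← mul_assoc] at h3
    have h4 := mul_right_cancel₀ (pow_pos (inv_pos.mpr hs) K).ne' h3
    rw [← h4, mul_assoc, ← mul_pow, inv_mul_cancel₀ hs.ne', one_pow, mul_one]
  have hrpos : ∀ s, 0 < s → 0 < P.reverse.eval s := fun s hs => by
    rw [hrev s hs]
    exact mul_pos (hy _ (inv_pos.mpr hs)) (pow_pos hs _)
  have hdeg' : P.reverse.natDegree = 0 := by
    have h3 : Tendsto (fun s => Real.log (P.reverse.eval s) / Real.log s) atTop (𝓝 0) := by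
      have h4 := h2.add_const (d : ℝ)
      rw [neg_add_cancel] at h4
      refine h4.congr' ?_
      filter_upwards [eventually_gt_atTop 1] with s hs
      have hs0 : 0 < s := by linarith
      have hl : Real.log s ≠ 0 := (Real.log_pos hs).ne'
      rw [hrev s hs0, Real.log_mul (hy _ (inv_pos.mpr hs0)).ne' (pow_pos hs0 _).ne', Real.log_pow]
      field_simp
    exact_mod_cast tendsto_nhds_unique (tendsto_log_eval hrpos) h3
  obtain ⟨c, hc⟩ : ∃ c, P.reverse = C c := ⟨_, eq_C_of_natDegree_eq_zero hdeg'⟩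
  refine ⟨c, fun s hs => ?_⟩
  have := hrev s⁻¹ (inv_pos.mpr hs)
  rw [hc, eval_C, inv_inv] at this
  rw [this, mul_assoc, ← mul_pow, inv_mul_cancel₀ hs.ne', one_pow, mul_one]

end Growth

/-! ### From tropical to birational periodicity -/

section Tropical

open Filter Topology Polynomial

variable {V : Type} [Fintype V] [DecidableEq V] {eps : V → ℤ} {A B : V → V → ℕ}

/-- The real form of the Laurent phenomenon: as a function of one of the initial values, each
value of a positive real solution is a Laurent polynomial. -/
lemma exists_polynomial (hbip : BipartiteData eps A B) (hrec : RecurrentQuiver A B) (k : ℕ)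
    {a : V → ℝ} (ha : ∀ v, 0 < a v) (u v : V) :
    ∃ (P : ℝ[X]) (K : ℕ), ∀ s, 0 < s →
      posSol A B (Function.update a u s) k v * s ^ K = P.eval s := by
  obtain ⟨τ, hτ⟩ := exists_isUniv hbip.2.1 hbip.2.2.1 hbip.2.2.2.2.2.2 hrec k
  obtain ⟨K, F, hF⟩ := Lau.exists_rep (τ k v)
  have hpos : ∀ s, 0 < s → ∀ w, 0 < Function.update a u s w := fun s hs w => by
    by_cases h : w = u
    · rw [h, Function.update_self]; exact hs
    · rw [Function.update_of_ne h]; exact ha w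
  set C₀ : ℝ := ∏ w ∈ Finset.univ \ {u}, a w with hC₀
  have hC₀pos : 0 < C₀ := Finset.prod_pos fun w _ => ha w
  let q : V → ℝ[X] := fun w => if w = u then X else C (a w)
  refine ⟨C ((C₀ ^ (K * 2))⁻¹) * MvPolynomial.eval₂ (Int.castRingHom ℝ[X]) (four q q 1 1) F,
    K * 2, fun s hs => ?_⟩
  let x : V → ℝˣ := fun w => Units.mk0 _ (hpos s hs w).ne'
  have hval : ev x x 1 1 (τ k v) = posSol A B (Function.update a u s) k v := by
    refine (hτ.mono (Nat.le_succ k)).sol.map_eq (q := fun _ _ => 1)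
      (ρ := fun k v => posSol A B (Function.update a u s) k v) ?_ (ev x x 1 1) ?_ ?_ ?_ ?_ k le_rfl v
    · intro i w _
      have := posSol_rel A B (Function.update a u s) (i + 1) w
      rw [rhs, Units.val_one, one_mul]
      push_cast
      rw [← this]
      congr 2; ring
    · intro i w
      exact (isCoef_coefSeq B (ini 2) (ini 3)).map_eq (q := fun _ _ => 1) (fun i w => by simp) _
        (fun w => by simp [coefSeq]) (fun w => by simp [coefSeq]) i w
    · intro i w _
      exact (posSol_pos _ _ _ _ _).ne'
    · intro w
      rw [hτ.zero, ev_ini0, Nat.cast_zero, posSol_zero A B (hpos s hs)]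
      rfl
    · intro w
      rw [hτ.one, ev_ini1, Nat.cast_one, posSol_one A B (hpos s hs)]
      rfl
  have hden : ev x x 1 1 (algebraMap _ _ (varProd (V × Fin 4))) = (s * C₀) ^ 2 := by
    have h1 : ∏ w, (x w : ℝ) = s * C₀ :=
      Finset.prod_update_of_mem (Finset.mem_univ u) a s
    rw [ev, Lau.lift_algebraMap, varProd, ← MvPolynomial.coe_eval₂Hom, map_prod]
    simp only [MvPolynomial.coe_eval₂Hom, MvPolynomial.eval₂_X]
    rw [Fintype.prod_prod_type]
    simp only [Fin.prod_univ_four, four]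
    simp only [Matrix.cons_val, Pi.one_apply, Units.val_one, mul_one]
    rw [Finset.prod_mul_distrib, h1, pow_two]
  have e := congrArg (ev x x 1 1) hF
  rw [map_mul, map_pow, hval, hden, ← pow_mul, mul_comm 2 K, ev, Lau.lift_algebraMap] at e
  have hq : (MvPolynomial.eval₂ (Int.castRingHom ℝ[X]) (four q q 1 1) F).eval s =
      MvPolynomial.eval₂ (Int.castRingHom ℝ) (fun i => ((four x x 1 1 i : ℝˣ) : ℝ)) F := by
    rw [← Polynomial.coe_evalRingHom, MvPolynomial.hom_eval₂]
    congr 1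
    · exact RingHom.ext_int _ _
    · funext i
      have hqx : ∀ w, (q w).eval s = x w := fun w => by
        by_cases h : w = u
        · subst h; simp [q, x]
        · simp [q, x, h]
      revert i
      apply forall_four <;> intro w <;> simp [four, hqx]
  rw [eval_mul, eval_C, hq, ← e, mul_pow]
  field_simp

lemma trop_neg_periodic (hbip : BipartiteData eps A B) {N : ℕ} {u : V}
    (h : ∀ f, IsTropicalTSystem eps A B (fun w => if w = u then 1 else 0) f →
      ∀ v, f (eps v + 2 * N) v = f (eps v) v)
    {f : ℤ → V → ℝ} (hf : IsTropicalTSystem eps A B (fun w => -if w = u then 1 else 0) f) (v : V) :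
    f (eps v + 2 * N) v = f (eps v) v := by
  -- the time reflection that fixes the initial cluster of the colour opposite to `u`
  have href : IsTropicalTSystem eps A B (fun w => if w = u then 1 else 0)
      fun t => f (2 * (1 - eps u) - t) := by
    refine trop_reflect hf _ fun w => ?_
    by_cases hw : eps w = eps u
    · have hz : ∀ x, (A w x = 0 ∧ B w x = 0) ∨ f (1 - eps u) x = 0 := by
        intro x
        by_cases hx : eps x = eps u
        · exact Or.inl (hbip.2.2.2.2.2.1 w x (hw.trans hx.symm))
        · right
          have h1 : 1 - eps u = eps x := by
            rcases hbip.1 u with h | h <;> rcases hbip.1 x with h' | h' <;> simp_all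
          rw [h1, hf.1]
          have : x ≠ u := fun h => hx (by rw [h])
          simp [this]
      have hA : ∑ x, (A w x : ℝ) * f (1 - eps u) x = 0 := Finset.sum_eq_zero fun x _ => by
        rcases hz x with h | h
        · simp [h.1]
        · simp [h]
      have hB : ∑ x, (B w x : ℝ) * f (1 - eps u) x = 0 := Finset.sum_eq_zero fun x _ => by
        rcases hz x with h | h
        · simp [h.2]
        · simp [h]
      have e := hf.2 (1 - eps u) w (by rw [hw]; simp)
      rw [hA, hB, max_self] at e
      have e1 := hf.1 w
      rw [hw] at e1 ⊢
      rcases hbip.1 u with h | h <;> rw [h] at e e1 ⊢ <;> norm_num at e e1 ⊢ <;> linarith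
    · have h1 : 2 * (1 - eps u) - eps w = eps w := by
        rcases hbip.1 u with h | h <;> rcases hbip.1 w with h' | h' <;> simp_all
      rw [h1, hf.1]
      have : w ≠ u := fun h => hw (by rw [h])
      simp [this]
  have hper := trop_unique hbip (trop_shift href N fun w => by
    rw [h _ href w]
    exact href.1 w) href
  have e := hper (2 * (1 - eps u) - eps v - 2 * N) v (by grind)
  beta_reduce at e
  rw [show 2 * (1 - eps u) - (2 * (1 - eps u) - eps v - 2 * N + 2 * N) = eps v by ring,
    show 2 * (1 - eps u) - (2 * (1 - eps u) - eps v - 2 * (N : ℤ)) = eps v + 2 * N by ring] at e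
  exact e.symm

/-- If the tropical solutions that start at the indicator functions are periodic, then all positive
real solutions are periodic up to constants. -/
lemma realPeriodic_of_trop (hbip : BipartiteData eps A B) (hrec : RecurrentQuiver A B) {N : ℕ}
    (h : ∀ u f, IsTropicalTSystem eps A B (fun w => if w = u then 1 else 0) f →
      ∀ v, f (eps v + 2 * N) v = f (eps v) v) :
    ∃ c, RealPeriodic eps A B N c := by
  have hpos : ∀ {a : V → ℝ}, (∀ v, 0 < a v) → ∀ u s, 0 < s → ∀ w, 0 < Function.update a u s w :=
    fun {a} ha u s hs w => by
      by_cases h : w = u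
      · rw [h, Function.update_self]; exact hs
      · rw [Function.update_of_ne h]; exact ha w
  have hmono : ∀ (a : V → ℝ), (∀ v, 0 < a v) → ∀ u v, ∃ c, ∀ s, 0 < s →
      posSol A B (Function.update a u s) (eps v + 2 * N) v = c * s ^ (if v = u then 1 else 0) := by
    intro a ha u v
    obtain ⟨k, hk⟩ : ∃ k : ℕ, eps v + 2 * N = k := by
      rcases hbip.1 v with h | h
      · exact ⟨2 * N, by rw [h]; push_cast; ring⟩
      · exact ⟨1 + 2 * N, by rw [h]; push_cast; ring⟩
    obtain ⟨P, K, hP⟩ := exists_polynomial hbip hrec k ha u v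
    have he : Even (eps v + 2 * N + eps v) := by grind
    obtain ⟨f, hf⟩ := exists_trop hbip fun w => if w = u then 1 else 0
    obtain ⟨g, hg⟩ := exists_trop hbip fun w => -if w = u then 1 else 0
    refine eq_monomial (fun s _ => posSol_pos _ _ _ _ _) (fun s hs => by rw [hk]; exact hP s hs)
      ?_ ?_
    · have := tendsto_trop hbip Real.tendsto_log_atTop
        (τ := fun s => posSol A B (Function.update a u s)) (fun s => isPos_posSol _ _ _ _) hf
        (fun w => ?_) _ v he
      · rw [h u f hf, hf.1] at this
        simpa using this
      · by_cases hw : w = u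
        · subst hw
          rw [if_pos rfl]
          refine tendsto_const_nhds.congr' ?_
          filter_upwards [eventually_gt_atTop 1] with s hs
          rw [posSol_eps hbip (hpos ha w s (by linarith)), Function.update_self,
            div_self (Real.log_pos hs).ne']
        · rw [if_neg hw]
          refine (Real.tendsto_log_atTop.const_div_atTop (Real.log (a w))).congr' ?_
          filter_upwards [eventually_gt_atTop 1] with s hs
          rw [posSol_eps hbip (hpos ha u s (by linarith)), Function.update_of_ne hw]
    · have := tendsto_trop hbip Real.tendsto_log_atTop
        (τ := fun s => posSol A B (Function.update a u s⁻¹)) (fun s => isPos_posSol _ _ _ _) hg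
        (fun w => ?_) _ v he
      · rw [trop_neg_periodic hbip (h u) hg, hg.1] at this
        simpa using this
      · by_cases hw : w = u
        · subst hw
          rw [if_pos rfl]
          refine tendsto_const_nhds.congr' ?_
          filter_upwards [eventually_gt_atTop 1] with s hs
          rw [posSol_eps hbip (hpos ha w s⁻¹ (inv_pos.mpr (by linarith))), Function.update_self,
            Real.log_inv, neg_div, div_self (Real.log_pos hs).ne']
        · rw [if_neg hw, neg_zero]
          refine (Real.tendsto_log_atTop.const_div_atTop (Real.log (a w))).congr' ?_
          filter_upwards [eventually_gt_atTop 1] with s hs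
          rw [posSol_eps hbip (hpos ha u s⁻¹ (inv_pos.mpr (by linarith))), Function.update_of_ne hw]
  -- the ratio of the values at times `eps v + 2 * N` and `eps v`, as a function of the initial data
  set r : V → (V → ℝ) → ℝ := fun v a => posSol A B a (eps v + 2 * N) v / a v with hr
  have hupd : ∀ v (a : V → ℝ), (∀ w, 0 < a w) → ∀ u s, 0 < s →
      r v (Function.update a u s) = r v a := by
    intro v a ha u s hs
    obtain ⟨c, hc⟩ := hmono a ha u v
    have h1 := hc s hs
    have h2 := hc (a u) (ha u)
    rw [Function.update_eq_self] at h2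
    simp only [hr]
    rw [h1, h2]
    by_cases hv : v = u
    · subst hv
      rw [Function.update_self, if_pos rfl, pow_one, pow_one,
        mul_div_cancel_right₀ _ hs.ne', mul_div_cancel_right₀ _ (ha v).ne']
    · rw [Function.update_of_ne hv, if_neg hv, pow_zero, pow_zero]
  have hconst : ∀ v (a : V → ℝ), (∀ w, 0 < a w) → r v a = r v 1 := by
    intro v a ha
    have : ∀ S : Finset V, r v (S.piecewise a 1) = r v 1 := by
      intro S
      induction S using Finset.induction_on with
      | empty => rw [Finset.piecewise_empty]
      | insert j S _ ih =>
        rw [Finset.piecewise_insert, hupd v _ (fun w => ?_) j _ (ha j), ih]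
        by_cases hw : w ∈ S
        · rw [Finset.piecewise_eq_of_mem _ _ _ hw]; exact ha w
        · rw [Finset.piecewise_eq_of_notMem _ _ _ hw]; exact one_pos
    rw [← this Finset.univ, Finset.piecewise_univ]
  refine ⟨fun v => r v 1, fun τ hτ v t he => ?_⟩
  obtain ⟨k, hk⟩ : ∃ k, t = eps v + 2 * k := by
    obtain ⟨j, hj⟩ := he
    exact ⟨j - eps v, by linarith⟩
  have ha : ∀ w, 0 < τ (eps w + 2 * k) w := fun w => hτ.pos _ _
  have e := hconst v (fun w => τ (eps w + 2 * k) w) ha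
  have e2 := (hτ.shift k).unique hbip (isPos_posSol eps A B fun w => τ (eps w + 2 * k) w)
    (fun w => (posSol_eps hbip ha w).symm) (eps v + 2 * N) v (by grind)
  beta_reduce at e2 ⊢
  rw [← e]
  simp only [hr]
  rw [← e2, hk, div_mul_cancel₀ _ (ha v).ne',
    show eps v + 2 * k + 2 * (N : ℤ) = eps v + 2 * N + 2 * k by ring]

end Tropical

/-- A fixed point is a constant positive solution. -/
lemma isPos_fixedPoint {V : Type} [Fintype V] (eps : V → ℤ) {A B : V → V → ℕ} {rho : V → ℝ}
    (h : IsFixedPoint A B rho) : IsPos eps A B fun _ => rho :=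
  ⟨fun _ v => one_pos.trans (h.1 v), fun _ v _ => by rw [← pow_two]; exact h.2 v⟩

end TSys

/-- for a bipartite recurrent quiver and a positive integer `N`, periodicity of
the tropical `T`-systems with indicator initial values, periodicity of all tropical
`T`-systems, and periodicity of the birational `T`-system up to positive scalars are all
equivalent; moreover, if a fixed point exists the scalars are all `1`. -/
theorem tropical_birational_periodicity_summary
    {V : Type} [Fintype V] [DecidableEq V]
    (eps : V → ℤ) (A B : V → V → ℕ)
    (hbip : BipartiteData eps A B) (hrec : RecurrentQuiver A B)
    (T : ℤ → V → FractionRing (MvPolynomial V ℚ)) (hT : IsTSystem eps A B T)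
    (N : ℕ) (hN : 0 < N) :
    (((∀ (u : V) (f : ℤ → V → ℝ),
        IsTropicalTSystem eps A B (fun w => if w = u then 1 else 0) f →
        ∀ v : V, f (eps v + 2 * N) v = f (eps v) v) ↔
      (∀ (lam : V → ℝ) (f : ℤ → V → ℝ), IsTropicalTSystem eps A B lam f →
        ∀ (v : V) (t : ℤ), Even (t + eps v) → f (t + 2 * N) v = f t v)) ∧
    ((∀ (lam : V → ℝ) (f : ℤ → V → ℝ), IsTropicalTSystem eps A B lam f →
        ∀ (v : V) (t : ℤ), Even (t + eps v) → f (t + 2 * N) v = f t v) ↔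
      (∃ c : V → ℚ, (∀ v, 0 < c v) ∧ ∀ (v : V) (t : ℤ), Even (t + eps v) →
        T (t + 2 * N) v =
          algebraMap ℚ (FractionRing (MvPolynomial V ℚ)) (c v) * T t v))) ∧
    (∀ c : V → ℚ, (∀ v, 0 < c v) →
      (∀ (v : V) (t : ℤ), Even (t + eps v) →
        T (t + 2 * N) v =
          algebraMap ℚ (FractionRing (MvPolynomial V ℚ)) (c v) * T t v) →
      (∃ rho : V → ℝ, IsFixedPoint A B rho) → ∀ v, c v = 1) := by
  have h31 : ∀ c : V → ℚ, (∀ (v : V) (t : ℤ), Even (t + eps v) → T (t + 2 * N) v =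
      algebraMap ℚ (FractionRing (MvPolynomial V ℚ)) (c v) * T t v) →
      TSys.RealPeriodic eps A B N fun v => (c v : ℝ) :=
    fun c hc => TSys.realPeriodic_of_formal hbip hT hc
  have h13 : (∀ (u : V) (f : ℤ → V → ℝ),
        IsTropicalTSystem eps A B (fun w => if w = u then 1 else 0) f →
        ∀ v : V, f (eps v + 2 * N) v = f (eps v) v) →
      ∃ c : V → ℚ, (∀ v, 0 < c v) ∧ ∀ (v : V) (t : ℤ), Even (t + eps v) →
        T (t + 2 * N) v = algebraMap ℚ (FractionRing (MvPolynomial V ℚ)) (c v) * T t v := by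
    intro h
    obtain ⟨c, hc⟩ := TSys.realPeriodic_of_trop hbip hrec h
    exact TSys.formal_of_realPeriodic hbip hT hc
  have h32 : (∃ c : V → ℚ, (∀ v, 0 < c v) ∧ ∀ (v : V) (t : ℤ), Even (t + eps v) →
        T (t + 2 * N) v = algebraMap ℚ (FractionRing (MvPolynomial V ℚ)) (c v) * T t v) →
      ∀ (lam : V → ℝ) (f : ℤ → V → ℝ), IsTropicalTSystem eps A B lam f →
        ∀ (v : V) (t : ℤ), Even (t + eps v) → f (t + 2 * N) v = f t v := by
    rintro ⟨c, -, hc⟩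
    exact TSys.trop_of_realPeriodic hbip (h31 c hc)
  have h21 : (∀ (lam : V → ℝ) (f : ℤ → V → ℝ), IsTropicalTSystem eps A B lam f →
        ∀ (v : V) (t : ℤ), Even (t + eps v) → f (t + 2 * N) v = f t v) →
      ∀ (u : V) (f : ℤ → V → ℝ),
        IsTropicalTSystem eps A B (fun w => if w = u then 1 else 0) f →
        ∀ v : V, f (eps v + 2 * N) v = f (eps v) v :=
    fun h u f hf v => h _ f hf v (eps v) ⟨_, rfl⟩
  refine ⟨⟨⟨fun h => h32 (h13 h), h21⟩, fun h => h13 (h21 h), h32⟩, ?_⟩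
  rintro c - hc ⟨rho, hrho⟩ v
  have e := h31 c hc _ (TSys.isPos_fixedPoint eps hrho) v (eps v) ⟨_, rfl⟩
  have hpos : rho v ≠ 0 := (one_pos.trans (hrho.1 v)).ne'
  have e2 : (c v : ℝ) = 1 := mul_right_cancel₀ hpos (by rw [one_mul]; exact e.symm)
  exact_mod_cast e2
end

section
/- Let Q be a bipartite recurrent quiver on a finite vertex set V. If there exists a positive integer N such that f^{δ_u}(ε(v) + 2N, v) = f^{δ_u}(ε(v), v) for all u, v ∈ V, then Q has a strictly subadditive labeling. -/
/-!
Write `A`, `B` also for the real matrices of the two edge multiplicities.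

The core is that `x ⬝ A x < 2 (x ⬝ x)` for every `x ≠ 0`, and likewise for `B`. Otherwise the
largest eigenvalue `μ` of the symmetric nonnegative matrix `A` is at least `2` and has a nonnegative
eigenvector `p` (`exists_nonneg_eigenvector`). Bipartiteness gives a vertex `u` with
`eps u = 1` and `p u > 0`. For the solution `f` of the tropical T-system started at `δ_u`, the
number `g t = ∑ v, p v * f t v` satisfies `g (t+1) + g (t-1) ≥ μ * g t`, because the maximum
dominates its `A`-argument, and `g 0 = 0`, `g 1 = p u > 0`. As `μ ≥ 2`, induction shows that `g` is
nonnegative and strictly increasing in nonnegative time, which contradicts `g (2N+1) = g 1` (`dotProduct_lt_of_growth`,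
`form_lt_of_periodic`).

So `2 - A` and `2 - B` are positive definite with nonpositive off-diagonal entries, and therefore
have inverses preserving positivity (`pos_of_two_sub`). Since they commute by recurrence,
`ν = (2 - B)⁻¹ (2 - A)⁻¹ 1` is positive, and `(2 - B) ν = (2 - A)⁻¹ 1`, `(2 - A) ν = (2 - B)⁻¹ 1`
are positive as well, so `ν` is a strictly subadditive labeling.
-/

open scoped BigOperators

/-! ### Nonnegative matrices and positive definiteness of `2 - C` -/

open Matrix in
/-- If `2 - C` fails to be positive definite, where `C` is symmetric with nonnegative entries, then
the top eigenvalue of `C` is at least `2` and has a nonnegative eigenvector: the entrywise absolute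
value of any maximiser of the quadratic form on the unit sphere is again a maximiser. -/
lemma exists_nonneg_eigenvector {V : Type} [Fintype V] [DecidableEq V] (C : Matrix V V ℝ)
    (hs : C.IsSymm) (hn : ∀ u v, 0 ≤ C u v) (x : V → ℝ) (hx : x ≠ 0)
    (hxC : 2 * (x ⬝ᵥ x) ≤ x ⬝ᵥ (C *ᵥ x)) :
    ∃ (p : V → ℝ) (μ : ℝ), (∀ v, 0 ≤ p v) ∧ p ≠ 0 ∧ 2 ≤ μ ∧ C *ᵥ p = μ • p := by
  have hpos : ∀ z : V → ℝ, z ≠ 0 → 0 < z ⬝ᵥ z := fun z hz =>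
    lt_of_le_of_ne (Finset.sum_nonneg fun i _ => mul_self_nonneg (z i))
      fun h => hz (dotProduct_self_eq_zero.1 h.symm)
  -- Rescaling a nonzero vector to the unit sphere.
  have hscale : ∀ z : V → ℝ, z ≠ 0 → ∃ c : ℝ, c * c * (z ⬝ᵥ z) = 1 := fun z hz => by
    refine ⟨(Real.sqrt (z ⬝ᵥ z))⁻¹, ?_⟩
    rw [← mul_inv, Real.mul_self_sqrt (hpos z hz).le, inv_mul_cancel₀ (hpos z hz).ne']
  have hform : ∀ (c : ℝ) (z : V → ℝ), (c • z) ⬝ᵥ (C *ᵥ (c • z)) = c * c * (z ⬝ᵥ (C *ᵥ z)) := by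
    intro c z
    rw [mulVec_smul, dotProduct_smul, smul_dotProduct, smul_eq_mul, smul_eq_mul, mul_assoc]
  have hself : ∀ (c : ℝ) (z : V → ℝ), (c • z) ⬝ᵥ (c • z) = c * c * (z ⬝ᵥ z) := by
    intro c z
    rw [dotProduct_smul, smul_dotProduct, smul_eq_mul, smul_eq_mul, mul_assoc]
  have hcont : Continuous fun z : V → ℝ => z ⬝ᵥ z := by
    unfold dotProduct; fun_prop
  have hcontC : Continuous fun z : V → ℝ => z ⬝ᵥ (C *ᵥ z) := by
    unfold mulVec dotProduct; fun_prop
  have hcomp : IsCompact {z : V → ℝ | z ⬝ᵥ z = 1} := by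
    refine (isCompact_univ_pi fun _ : V => isCompact_Icc (a := (-1 : ℝ)) (b := 1)).of_isClosed_subset
      (isClosed_eq hcont continuous_const) fun z hz i _ => ?_
    have h1 : z i * z i ≤ z ⬝ᵥ z :=
      Finset.single_le_sum (f := fun i => z i * z i) (fun j _ => mul_self_nonneg (z j))
        (Finset.mem_univ i)
    rw [Set.mem_ofPred_eq] at hz
    rw [hz] at h1
    exact ⟨by nlinarith, by nlinarith⟩
  obtain ⟨c, hc⟩ := hscale x hx
  obtain ⟨y, hy, hmax⟩ := hcomp.exists_isMaxOn ⟨c • x, by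
    rw [Set.mem_ofPred_eq, hself, hc]⟩ hcontC.continuousOn
  rw [Set.mem_ofPred_eq] at hy
  set μ := y ⬝ᵥ (C *ᵥ y) with hμ
  have hle : ∀ z : V → ℝ, z ⬝ᵥ (C *ᵥ z) ≤ μ * (z ⬝ᵥ z) := by
    intro z
    by_cases hz : z = 0
    · simp [hz]
    obtain ⟨d, hd⟩ := hscale z hz
    have h1 : (d • z) ⬝ᵥ (C *ᵥ (d • z)) ≤ μ := hmax (by rw [Set.mem_ofPred_eq, hself, hd])
    rw [hform] at h1
    have h2 := mul_le_mul_of_nonneg_right h1 (hpos z hz).le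
    calc z ⬝ᵥ (C *ᵥ z) = d * d * (z ⬝ᵥ z) * (z ⬝ᵥ (C *ᵥ z)) := by rw [hd, one_mul]
      _ = d * d * (z ⬝ᵥ (C *ᵥ z)) * (z ⬝ᵥ z) := by ring
      _ ≤ _ := h2
  have hμ2 : 2 ≤ μ := le_of_mul_le_mul_right (hxC.trans (hle x)) (hpos x hx)
  have hpp : (fun v => |y v|) ⬝ᵥ (fun v => |y v|) = 1 := by
    rw [← hy]
    exact Finset.sum_congr rfl fun i _ => abs_mul_abs_self (y i)
  have hpC : μ ≤ (fun v => |y v|) ⬝ᵥ (C *ᵥ (fun v => |y v|)) := by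
    rw [hμ]
    unfold mulVec dotProduct
    simp only [Finset.mul_sum]
    refine Finset.sum_le_sum fun i _ => Finset.sum_le_sum fun j _ => ?_
    refine (le_abs_self _).trans (le_of_eq ?_)
    rw [abs_mul, abs_mul, abs_of_nonneg (hn i j)]
  refine ⟨fun v => |y v|, μ, fun v => abs_nonneg _, ?_, hμ2, ?_⟩
  · intro h0
    rw [h0] at hpp
    simp at hpp
  -- `μ - C` is positive semidefinite and its form vanishes at `|y|`, so it kills `|y|`.
  have hpsd : (μ • (1 : Matrix V V ℝ) - C).PosSemidef := by
    refine PosSemidef.of_dotProduct_mulVec_nonneg ?_ fun z => ?_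
    · rw [IsHermitian, conjTranspose_eq_transpose_of_trivial, transpose_sub, transpose_smul,
        transpose_one, hs.eq]
    · rw [star_trivial, sub_mulVec, smul_mulVec, one_mulVec, dotProduct_sub, dotProduct_smul,
        smul_eq_mul, sub_nonneg]
      exact hle z
  have h0 := (hpsd.dotProduct_mulVec_zero_iff (fun v => |y v|)).1 (by
    have := hle (fun v => |y v|)
    rw [star_trivial, sub_mulVec, smul_mulVec, one_mulVec, dotProduct_sub, dotProduct_smul,
      smul_eq_mul]
    rw [hpp] at this ⊢
    linarith)
  rw [sub_mulVec, smul_mulVec, one_mulVec, sub_eq_zero] at h0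
  exact h0.symm

open Matrix in
/-- A matrix `2 - C` that is positive definite with nonpositive off-diagonal part has an inverse
preserving positivity: pairing `(2 - C) x ≥ 0` with the negative part of `x` shows that this
negative part vanishes. -/
lemma pos_of_two_sub {V : Type} [Fintype V] (C : Matrix V V ℝ)
    (hn : ∀ u v, 0 ≤ C u v) (hC : ∀ x : V → ℝ, x ≠ 0 → x ⬝ᵥ (C *ᵥ x) < 2 * (x ⬝ᵥ x))
    (x : V → ℝ) (hx : ∀ v, 0 < 2 * x v - (C *ᵥ x) v) (v : V) : 0 < x v := by
  have hneg : (fun v => (x v)⁻) = 0 := by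
    by_contra h
    have h1 := hC _ h
    have h2 : 0 ≤ (fun v => (x v)⁻) ⬝ᵥ (fun v => 2 * x v - (C *ᵥ x) v) :=
      Finset.sum_nonneg fun i _ => mul_nonneg (negPart_nonneg _) (hx i).le
    have h3 : (fun v => (x v)⁻) ⬝ᵥ (fun v => 2 * x v - (C *ᵥ x) v) ≤
        (fun v => (x v)⁻) ⬝ᵥ (C *ᵥ (fun v => (x v)⁻))
          - 2 * ((fun v => (x v)⁻) ⬝ᵥ (fun v => (x v)⁻)) := by
      have hCx : ∀ i, -(C *ᵥ (fun v => (x v)⁻)) i ≤ (C *ᵥ x) i := by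
        intro i
        unfold mulVec dotProduct
        rw [← Finset.sum_neg_distrib]
        refine Finset.sum_le_sum fun j _ => ?_
        rw [← mul_neg]
        exact mul_le_mul_of_nonneg_left (neg_le.1 (neg_le_negPart _)) (hn i j)
      unfold dotProduct
      rw [Finset.mul_sum, ← Finset.sum_sub_distrib]
      refine Finset.sum_le_sum fun i _ => ?_
      have h4 : (x i)⁻ * x i = -((x i)⁻ * (x i)⁻) := by
        rcases le_total 0 (x i) with h | h
        · simp [negPart_eq_zero.2 h]
        · rw [negPart_of_nonpos h]; ring
      have h5 := mul_le_mul_of_nonneg_left (hCx i) (negPart_nonneg (x i))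
      simp only at h5 ⊢
      nlinarith
    linarith
  have hx0 : ∀ v, 0 ≤ x v := fun v => negPart_eq_zero.1 (congrFun hneg v)
  have h6 : 0 ≤ (C *ᵥ x) v := Finset.sum_nonneg fun j _ => mul_nonneg (hn v j) (hx0 j)
  linarith [hx v]

open Matrix in
lemma two_sub_bijective {V : Type} [Fintype V] [DecidableEq V] (C : Matrix V V ℝ)
    (hC : ∀ x : V → ℝ, x ≠ 0 → x ⬝ᵥ (C *ᵥ x) < 2 * (x ⬝ᵥ x)) :
    Function.Bijective (mulVecLin ((2 : ℝ) • (1 : Matrix V V ℝ) - C)) := by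
  have hinj : Function.Injective (mulVecLin ((2 : ℝ) • (1 : Matrix V V ℝ) - C)) := by
    rw [injective_iff_map_eq_zero]
    intro x hx
    by_contra h
    rw [mulVecLin_apply, sub_mulVec, smul_mulVec, one_mulVec, sub_eq_zero] at hx
    have := hC x h
    rw [← hx, dotProduct_smul, smul_eq_mul] at this
    exact lt_irrefl _ this
  exact ⟨hinj, LinearMap.injective_iff_surjective.1 hinj⟩

/-! ### Solutions of the recurrence and their growth -/

/-- One time step of `a (t+1) + a (t-1) = Φ (a t)`, as a permutation of the pairs
`(a (t-1), a t)`; its integer powers give the solutions for all `t : ℤ`. -/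
def stepPerm {W : Type} [AddCommGroup W] (Φ : W → W) : Equiv.Perm (W × W) where
  toFun q := (q.2, Φ q.2 - q.1)
  invFun q := (Φ q.1 - q.2, q.1)
  left_inv q := by simp
  right_inv q := by simp

lemma exists_second_order {W : Type} [AddCommGroup W] (Φ : W → W) (a b : W) :
    ∃ f : ℤ → W, f 0 = a ∧ f 1 = b ∧ ∀ t, f (t + 1) + f (t - 1) = Φ (f t) := by
  have key : ∀ t : ℤ, (stepPerm Φ ^ (t + 1)) (a, b) = stepPerm Φ ((stepPerm Φ ^ t) (a, b)) := by
    intro t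
    rw [add_comm, zpow_add, zpow_one, Equiv.Perm.mul_apply]
  refine ⟨fun t => ((stepPerm Φ ^ t) (a, b)).1, by simp, ?_, fun t => ?_⟩
  · simp [stepPerm]
  · have h1 := key (t - 1)
    rw [sub_add_cancel] at h1
    simp only [key t, h1]
    simp [stepPerm]

/-- The `p`-weighted sum of a solution started at `0, δ` is convex in time as long as it is
nonnegative, hence strictly increasing from time `0` on: it never returns to its value at time `1`. -/
lemma dotProduct_lt_of_growth {V : Type} [Fintype V] (C : V → V → ℝ) (hs : ∀ u v, C u v = C v u)
    (p : V → ℝ) (hp : ∀ v, 0 ≤ p v) (μ : ℝ) (hμ : 2 ≤ μ)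
    (hCp : ∀ v, ∑ u, C v u * p u = μ * p v)
    (f : ℤ → V → ℝ) (hf : ∀ t v, ∑ u, C v u * f t u ≤ f (t + 1) v + f (t - 1) v)
    (h0 : ∑ v, p v * f 0 v = 0) (h1 : 0 < ∑ v, p v * f 1 v) (n : ℕ) (hn : 0 < n) :
    ∑ v, p v * f 1 v < ∑ v, p v * f (n + 1) v := by
  have hstep : ∀ t : ℤ, μ * ∑ v, p v * f t v ≤
      ∑ v, p v * f (t + 1) v + ∑ v, p v * f (t - 1) v := by
    intro t
    calc μ * ∑ v, p v * f t v = ∑ v, (∑ u, C v u * p u) * f t v := by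
          rw [Finset.mul_sum]
          exact Finset.sum_congr rfl fun v _ => by rw [hCp]; ring
      _ = ∑ v, p v * ∑ u, C v u * f t u := by
          simp only [Finset.sum_mul, Finset.mul_sum]
          rw [Finset.sum_comm]
          refine Finset.sum_congr rfl fun v _ => Finset.sum_congr rfl fun u _ => ?_
          rw [hs]; ring
      _ ≤ ∑ v, p v * (f (t + 1) v + f (t - 1) v) :=
          Finset.sum_le_sum fun v _ => mul_le_mul_of_nonneg_left (hf t v) (hp v)
      _ = _ := by simp only [mul_add, Finset.sum_add_distrib]
  have hmono : ∀ m : ℕ, 0 ≤ ∑ v, p v * f m v ∧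
      ∑ v, p v * f m v < ∑ v, p v * f (m + 1) v := by
    intro m
    induction m with
    | zero => simpa [h0] using h1
    | succ m ih =>
      have h := hstep (m + 1)
      rw [add_sub_cancel_right] at h
      push_cast
      refine ⟨ih.1.trans ih.2.le, ?_⟩
      have := mul_le_mul_of_nonneg_right hμ (ih.1.trans ih.2.le)
      linarith [ih.2]
  induction n, hn using Nat.le_induction with
  | base => simpa using (hmono 1).2
  | succ m _ ih =>
    have h := (hmono (m + 1)).2
    push_cast at h ih ⊢
    exact ih.trans h

open Matrix in
/-- Periodicity forces `2 - A` to be positive definite. Only one of the two arguments of the maximum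
is used, so the T-system is taken with `A` and `B` in either order. -/
lemma form_lt_of_periodic {V : Type} [Fintype V] [DecidableEq V]
    (eps : V → ℤ) (A B : V → V → ℕ) (hbip : BipartiteData eps A B)
    (hper : ∃ N : ℕ, 0 < N ∧ ∀ (u : V) (f : ℤ → V → ℝ),
      IsTropicalTSystem eps A B (fun w => if w = u then 1 else 0) f →
      ∀ v : V, f (eps v + 2 * N) v = f (eps v) v) (x : V → ℝ) (hx : x ≠ 0) :
    x ⬝ᵥ ((Matrix.of fun u v => (A u v : ℝ)) *ᵥ x) < 2 * (x ⬝ᵥ x) := by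
  obtain ⟨h01, hAs, hBs, -, -, hAB, -⟩ := hbip
  by_contra! hcon
  obtain ⟨p, μ, hp, hp0, hμ, hCp⟩ := exists_nonneg_eigenvector
    (Matrix.of fun u v => (A u v : ℝ)) (by ext u v; simp [hAs u v])
    (fun u v => by simp) x hx hcon
  have hCp' : ∀ v, ∑ u, (A v u : ℝ) * p u = μ * p v := fun v => congrFun hCp v
  obtain ⟨u, hu1, hpu⟩ : ∃ u, eps u = 1 ∧ 0 < p u := by
    obtain ⟨v, hv⟩ := Function.ne_iff.1 hp0
    have hv : 0 < p v := lt_of_le_of_ne (hp v) (Ne.symm hv)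
    rcases h01 v with h | h
    · have hsum : 0 < ∑ u, (A v u : ℝ) * p u := by rw [hCp' v]; positivity
      obtain ⟨u, -, hu⟩ := Finset.exists_lt_of_sum_lt (f := fun _ => (0 : ℝ)) (by simpa using hsum)
      refine ⟨u, ?_, lt_of_le_of_ne (hp u) fun h => by simp [← h] at hu⟩
      rcases h01 u with h' | h'
      · simp [(hAB v u (h.trans h'.symm)).1] at hu
      · exact h'
    · exact ⟨v, h, hv⟩
  -- The recurrence is imposed at every `(t, v)`; started from `0` and `δ_u`, the solution
  -- vanishes at the pairs `(t, v)` of the wrong parity.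
  obtain ⟨f, hf0, hf1, hf⟩ := exists_second_order
    (fun (g : V → ℝ) v => max (∑ w, (A v w : ℝ) * g w) (∑ w, (B v w : ℝ) * g w))
    0 (fun w => if w = u then 1 else 0)
  have hfv : ∀ t v, f (t + 1) v + f (t - 1) v =
      max (∑ w, (A v w : ℝ) * f t w) (∑ w, (B v w : ℝ) * f t w) := fun t v => congrFun (hf t) v
  have hne : ∀ v, eps v = 0 → v ≠ u := by rintro v hv rfl; omega
  have hT : IsTropicalTSystem eps A B (fun w => if w = u then 1 else 0) f := by
    refine ⟨fun v => ?_, fun t v _ => hfv t v⟩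
    rcases h01 v with h | h
    · simp [h, hf0, hne v h]
    · simp [h, hf1]
  obtain ⟨N, hN, hperN⟩ := hper
  have hP := hperN u f hT
  have hzero : ∀ n : ℕ, (∀ v, eps v = 0 → f (2 * n + 1) v = 0) ∧
      (∀ v, eps v = 1 → f (2 * n) v = 0) := by
    intro n
    induction n with
    | zero =>
      refine ⟨fun v hv => ?_, fun v _ => ?_⟩
      · simp [hf1, hne v hv]
      · simp [hf0]
    | succ n ih =>
      -- If `f t` vanishes on the class opposite to `v`, the two sums at `v` vanish.
      have hmax : ∀ (t : ℤ) v, (∀ w, eps w ≠ eps v → f t w = 0) →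
          max (∑ w, (A v w : ℝ) * f t w) (∑ w, (B v w : ℝ) * f t w) = 0 := by
        intro t v h
        have hA0 : ∀ w, (A v w : ℝ) * f t w = 0 := fun w => by
          by_cases hw : eps v = eps w
          · simp [(hAB v w hw).1]
          · simp [h w (Ne.symm hw)]
        have hB0 : ∀ w, (B v w : ℝ) * f t w = 0 := fun w => by
          by_cases hw : eps v = eps w
          · simp [(hAB v w hw).2]
          · simp [h w (Ne.symm hw)]
        simp [hA0, hB0]
      have e1 : ∀ v, eps v = 1 → f (2 * (n + 1 : ℕ)) v = 0 := by
        intro v hv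
        have h := hfv (2 * n + 1) v
        rw [hmax _ v fun w hw => ih.1 w ((h01 w).resolve_right (by rwa [hv] at hw)),
          add_sub_cancel_right, ih.2 v hv, add_zero] at h
        rw [← h]; push_cast; ring_nf
      refine ⟨fun v hv => ?_, e1⟩
      have h := hfv (2 * (n + 1 : ℕ)) v
      rw [hmax _ v fun w hw => e1 w ((h01 w).resolve_left (by rwa [hv] at hw)),
        show (2 * (n + 1 : ℕ) - 1 : ℤ) = 2 * n + 1 by push_cast; ring, ih.1 v hv, add_zero] at h
      exact h
  have hend : f (2 * N + 1) = f 1 := by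
    funext v
    rcases h01 v with h | h
    · rw [(hzero N).1 v h, hf1]; simp [hne v h]
    · have := hP v
      rw [h] at this
      rw [← this, add_comm]
  have hlt := dotProduct_lt_of_growth (fun v w => (A v w : ℝ)) (fun v w => by rw [hAs]) p hp μ hμ
    hCp' f (fun t v => (hfv t v).symm ▸ le_max_left _ _) (by simp [hf0])
    (by simpa [hf1] using hpu) (2 * N) (by omega)
  push_cast at hlt
  rw [hend] at hlt
  exact lt_irrefl _ hlt

/-! ### The labeling -/

/-- if the tropical `T`-systems with indicator initial values are periodic, then
the quiver has a strictly subadditive labeling. -/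
theorem ssl_of_tropical_periodicity
    {V : Type} [Fintype V] [DecidableEq V]
    (eps : V → ℤ) (A B : V → V → ℕ)
    (hbip : BipartiteData eps A B) (hrec : RecurrentQuiver A B)
    (hper : ∃ N : ℕ, 0 < N ∧ ∀ (u : V) (f : ℤ → V → ℝ),
      IsTropicalTSystem eps A B (fun w => if w = u then 1 else 0) f →
      ∀ v : V, f (eps v + 2 * N) v = f (eps v) v) :
    ∃ nu : V → ℝ, IsStrictlySubadditiveLabeling A B nu := by
  classical
  have hA := form_lt_of_periodic eps A B hbip hper
  have hB : ∀ x : V → ℝ, x ≠ 0 →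
      dotProduct x (Matrix.mulVec (Matrix.of fun u v => (B u v : ℝ)) x) < 2 * dotProduct x x := by
    obtain ⟨h01, hAs, hBs, hA0, hB0, hAB, hd⟩ := hbip
    refine form_lt_of_periodic eps B A ⟨h01, hBs, hAs, hB0, hA0,
      fun u v h => (hAB u v h).symm, fun u v => by rw [mul_comm]; exact hd u v⟩ ?_
    obtain ⟨N, hN, hP⟩ := hper
    refine ⟨N, hN, fun u f hf => hP u f ⟨hf.1, fun t v ht => ?_⟩⟩
    rw [max_comm]
    exact hf.2 t v ht
  set MA : Matrix V V ℝ := Matrix.of fun u v => (A u v : ℝ) with hMA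
  set MB : Matrix V V ℝ := Matrix.of fun u v => (B u v : ℝ) with hMB
  have hcomm : MA * MB = MB * MA := by
    ext u v
    simp only [Matrix.mul_apply, hMA, hMB, Matrix.of_apply]
    exact_mod_cast hrec u v
  set KA := (2 : ℝ) • (1 : Matrix V V ℝ) - MA with hKA
  set KB := (2 : ℝ) • (1 : Matrix V V ℝ) - MB with hKB
  have hKcomm : KB * KA = KA * KB := by
    simp only [hKA, hKB, sub_mul, mul_sub, Matrix.smul_mul, Matrix.mul_smul, one_mul, mul_one,
      hcomm]
    abel
  have eA : ∀ (x : V → ℝ) v, KA.mulVec x v = 2 * x v - MA.mulVec x v := fun x v => by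
    simp [hKA, Matrix.sub_mulVec, Matrix.smul_mulVec]
  have eB : ∀ (x : V → ℝ) v, KB.mulVec x v = 2 * x v - MB.mulVec x v := fun x v => by
    simp [hKB, Matrix.sub_mulVec, Matrix.smul_mulVec]
  have pA := pos_of_two_sub MA (fun u v => by simp [hMA]) hA
  have pB := pos_of_two_sub MB (fun u v => by simp [hMB]) hB
  obtain ⟨x, hx⟩ := (two_sub_bijective MA hA).2 1
  obtain ⟨w, hw⟩ := (two_sub_bijective MB hB).2 1
  obtain ⟨nu, hnu⟩ := (two_sub_bijective MB hB).2 x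
  have hAnu : KA.mulVec nu = w := by
    apply (two_sub_bijective MB hB).1
    rw [hw, ← hx, ← hnu]
    simp only [Matrix.mulVecLin_apply, Matrix.mulVec_mulVec]
    rw [hKcomm]
  have hxpos : ∀ v, 0 < x v := pA x fun v => by
    rw [← eA]
    exact one_pos.trans_eq (congrFun hx v).symm
  have hwpos : ∀ v, 0 < w v := pB w fun v => by
    rw [← eB]
    exact one_pos.trans_eq (congrFun hw v).symm
  have hBnu : ∀ v, 0 < 2 * nu v - MB.mulVec nu v := fun v => by
    rw [← eB]
    exact (hxpos v).trans_eq (congrFun hnu v).symm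
  have hAnu' : ∀ v, 0 < 2 * nu v - MA.mulVec nu v := fun v => by
    rw [← eA, hAnu]
    exact hwpos v
  exact ⟨nu, pB nu hBnu, fun v => sub_pos.1 (hAnu' v), fun v => sub_pos.1 (hBnu v)⟩
end
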